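/- arXiv:2509.04271 — 2 statements merged into one kernel-verified Lean document; each statement's English description precedes it below -/
import Mathlib

section
/- For all integers d ≥ 0 and q ≥ 1 there is a constant C = C(d,q) such that the following holds. Let G be a group and A ⊆ G a nonempty finite set such that A⁻¹A has exponent q and VC^r_A(A) = d; set k = |A³|/|A|. Then for any ε ∈ (0,1) there is a subgroup H ≤ G satisfying: (i) H ⊆ St^r_ε(A) and cov(A:H) ≤ C(k/ε)^{2d+C}; (ii) |A △ FH| ≤ ε|A| for some F ⊆ A with |F| ≤ C(k/ε)^{2d+C}; and (iii) |Z^ℓ_{√ε}(A,H)| ≤ 2√ε·|A|. -/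
open scoped Pointwise symmDiff

/-- `Stab^ℓ_N(A) = {x : |xA △ A| ≤ N}`. -/
def stabL {G : Type*} [Group G] (A : Set G) (N : ℝ) : Set G :=
  {x : G | (((x • A) ∆ A).ncard : ℝ) ≤ N}

/-- `Stab^r_N(A) = {x : |Ax △ A| ≤ N}`. -/
def stabR {G : Type*} [Group G] (A : Set G) (N : ℝ) : Set G :=
  {x : G | (((A * {x}) ∆ A).ncard : ℝ) ≤ N}

/-- `St^ℓ_ε(A) = Stab^ℓ_{ε|A|}(A)`. -/
def stL {G : Type*} [Group G] (A : Set G) (ε : ℝ) : Set G := stabL A (ε * A.ncard)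

/-- `St^r_ε(A) = Stab^r_{ε|A|}(A)`. -/
def stR {G : Type*} [Group G] (A : Set G) (ε : ℝ) : Set G := stabR A (ε * A.ncard)

/-- A family of sets shatters `S` if every subset of `S` is cut out by a member of the family. -/
def Shatters {α : Type*} (F : Set (Set α)) (S : Set α) : Prop :=
  ∀ T ⊆ S, ∃ f ∈ F, S ∩ f = T

/-- VC-dimension of a set system: the supremum of cardinalities of finite shattered sets. -/
noncomputable def vcDim {α : Type*} (F : Set (Set α)) : ℕ∞ :=
  ⨆ (S : Finset α) (_ : Shatters F ↑S), (S.card : ℕ∞)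

/-- The family of left translates `{xA : x ∈ B}`. -/
def leftFam {G : Type*} [Group G] (A B : Set G) : Set (Set G) := (fun x => x • A) '' B

/-- The family of right translates `{Ax : x ∈ B}`. -/
def rightFam {G : Type*} [Group G] (A B : Set G) : Set (Set G) := (fun x => A * {x}) '' B

/-- `Z^ℓ_ε(A,X) = {g : min(|gX ∩ A|, |gX \ A|) ≥ ε|X|}`. -/
def Zl {G : Type*} [Group G] (A X : Set G) (ε : ℝ) : Set G :=
  {g : G | ε * X.ncard ≤ min (((g • X) ∩ A).ncard : ℝ) (((g • X) \ A).ncard : ℝ)}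

lemma spectral_fin {E : Type*} [NormedAddCommGroup E] [InnerProductSpace ℝ E] {ι : Type*}
    [Fintype ι] (c : ι → ℝ) (w : ι → E) :
    ∃ (n : ℕ) (e : Fin n → E) (l : Fin n → ℝ), Orthonormal ℝ e ∧
      ∀ u : E, ∑ k, (c k * inner ℝ (w k) u) • w k = ∑ i, (l i * inner ℝ (e i) u) • e i := by
  classical
  let V : Submodule ℝ E := Submodule.span ℝ (Set.range w)
  have : FiniteDimensional ℝ V := FiniteDimensional.span_of_finite ℝ (Set.finite_range w)
  let w' : ι → V := fun k => ⟨w k, Submodule.subset_span ⟨k, rfl⟩⟩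
  let T : V →ₗ[ℝ] V := ∑ k, (c k) • ((innerSL ℝ (w' k)).toLinearMap.smulRight (w' k))
  have hTa : ∀ u : V, T u = ∑ k, (c k * inner ℝ (w' k) u) • w' k := by
    intro u
    simp [T, LinearMap.sum_apply, smul_smul]
  have hT : T.IsSymmetric := by
    intro u v
    rw [hTa, hTa, sum_inner, inner_sum]
    refine Finset.sum_congr rfl fun k _ => ?_
    rw [inner_smul_left, inner_smul_right, real_inner_comm u (w' k)]
    simp
    ring
  let b := hT.eigenvectorBasis rfl
  refine ⟨_, fun i => (b i : E), fun i => hT.eigenvalues rfl i, ?_, ?_⟩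
  · have := b.orthonormal
    exact this.comp_linearIsometry V.subtypeₗᵢ
  · intro u
    let u' : V := V.orthogonalProjectionOnto u
    have key : ∀ v : V, inner ℝ (v : E) u = inner ℝ v u' := by
      intro v
      exact (Submodule.inner_orthogonalProjectionOnto_eq_of_mem_left v u).symm
    have h1 : ∑ k, (c k * inner ℝ (w k) u) • w k = ((T u' : V) : E) := by
      rw [hTa]
      push_cast
      refine Finset.sum_congr rfl fun k _ => ?_
      rw [show inner ℝ (w k) u = inner ℝ (w' k) u' from key (w' k)]
    rw [h1]
    have h2 : T u' = ∑ i, (hT.eigenvalues rfl i * inner ℝ (b i) u') • b i := by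
      conv_lhs => rw [← b.sum_repr' u']
      rw [map_sum]
      refine Finset.sum_congr rfl fun i _ => ?_
      rw [map_smul, hT.apply_eigenvectorBasis rfl i, smul_smul]
      simp [mul_comm, b]
    rw [h2]
    push_cast
    refine Finset.sum_congr rfl fun i _ => ?_
    rw [key]

/-- There is a gap in the list of eigenvalues. -/
lemma exists_gap {n : ℕ} (l : Fin n → ℝ) (hl : ∀ i, 0 ≤ l i) (Tr l0 : ℝ) (N : ℕ)
    (h0 : 0 < l0) (hTr : ∑ i, l i ≤ Tr) (hN : 2 * Tr / l0 ≤ N) :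
    ∃ θ : ℝ, l0 / 2 ≤ θ ∧ θ + l0 / (2 * (N + 1)) ≤ l0 ∧
      (∀ i, l i < θ ∨ θ + l0 / (2 * (N + 1)) ≤ l i) ∧
      (Finset.univ.filter (fun i => l0 / 2 ≤ l i)).card ≤ N := by
  classical
  set g := l0 / (2 * ((N : ℝ) + 1)) with hg
  have hgpos : 0 < g := by positivity
  have hgN : g * (N + 1) = l0 / 2 := by rw [hg]; field_simp
  set S := Finset.univ.filter (fun i => l0 / 2 ≤ l i) with hS
  have hcard : S.card ≤ N := by
    have h1 : (S.card : ℝ) * (l0 / 2) ≤ Tr := by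
      calc (S.card : ℝ) * (l0 / 2) = ∑ i ∈ S, l0 / 2 := by simp
        _ ≤ ∑ i ∈ S, l i := Finset.sum_le_sum fun i hi => by simpa [hS] using hi
        _ ≤ ∑ i, l i := Finset.sum_le_sum_of_subset_of_nonneg (Finset.subset_univ _)
            fun i _ _ => hl i
        _ ≤ Tr := hTr
    have h2 : (S.card : ℝ) ≤ N := by
      refine le_trans ?_ hN
      rw [le_div_iff₀ h0]; linarith
    exact_mod_cast h2
  have hex : ∃ j ∈ Finset.range (N + 1),
      j ∉ S.image (fun i => ⌊(l i - l0 / 2) / g⌋₊) := by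
    by_contra hcon
    push Not at hcon
    have := Finset.card_le_card (show Finset.range (N + 1) ⊆ _ from hcon)
    have h3 := Finset.card_image_le (s := S) (f := fun i => ⌊(l i - l0 / 2) / g⌋₊)
    simp at this
    omega
  obtain ⟨j, hj, hjS⟩ := hex
  refine ⟨l0 / 2 + j * g, ?_, ?_, ?_, hcard⟩
  · have : 0 ≤ (j : ℝ) * g := by positivity
    linarith
  · have hj' : (j : ℝ) + 1 ≤ N + 1 := by
      have := Finset.mem_range.1 hj
      exact_mod_cast this
    nlinarith
  · intro i
    by_contra hcon
    push Not at hcon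
    obtain ⟨h1, h2⟩ := hcon
    have hjg : 0 ≤ (j : ℝ) * g := by positivity
    apply hjS
    rw [Finset.mem_image]
    refine ⟨i, by simp [hS]; linarith, ?_⟩
    rw [Nat.floor_eq_iff (div_nonneg (by linarith) hgpos.le)]
    constructor
    · rw [le_div_iff₀ hgpos]; linarith
    · rw [div_lt_iff₀ hgpos]; linarith

/-- Spectral truncation of a finite rank positive operator. -/
lemma spectral_trunc {E : Type*} [NormedAddCommGroup E] [InnerProductSpace ℝ E] {ι : Type*}
    (s : Finset ι) (c : ι → ℝ) (hc : ∀ k ∈ s, 0 ≤ c k) (w : ι → E) (Tr l0 : ℝ) (N : ℕ)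
    (h0 : 0 < l0) (hTr : ∑ k ∈ s, c k * ‖w k‖ ^ 2 ≤ Tr) (hN : 2 * Tr / l0 ≤ N) :
    ∃ (m : ℕ) (e : Fin m → E) (l : Fin m → ℝ), m ≤ N ∧ Orthonormal ℝ e ∧
      (∀ a, ∑ k ∈ s, (c k * inner ℝ (w k) (e a)) • w k = l a • e a) ∧
      (∀ a, l0 / 2 ≤ l a) ∧
      (∀ u : E, (∀ a, inner ℝ (e a) u = 0) → ∑ k ∈ s, c k * inner ℝ (w k) u ^ 2 ≤ l0 * ‖u‖ ^ 2) ∧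
      (∀ u : E, (∀ a, inner ℝ (e a) u = 0) → ∀ a,
        ∑ k ∈ s, c k * inner ℝ (w k) u ^ 2 ≤ (l a - l0 / (2 * (N + 1))) * ‖u‖ ^ 2) := by
  classical
  obtain ⟨n, e, l, he, hT⟩ := spectral_fin (fun k : s => c k) (fun k : s => w k)
  have hT' : ∀ u : E, ∑ k ∈ s, (c k * inner ℝ (w k) u) • w k = ∑ i, (l i * inner ℝ (e i) u) • e i := by
    intro u
    rw [← hT u, Finset.sum_coe_sort s (fun k => (c k * inner ℝ (w k) u) • w k)]
  have hquad : ∀ u : E, ∑ k ∈ s, c k * inner ℝ (w k) u ^ 2 = ∑ i, l i * inner ℝ (e i) u ^ 2 := by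
    intro u
    have := congrArg (fun v => inner ℝ v u) (hT' u)
    simp only [sum_inner, inner_smul_left] at this
    simp only [conj_trivial] at this
    convert this using 2 <;> ring
  have heig : ∀ j, ∑ k ∈ s, (c k * inner ℝ (w k) (e j)) • w k = l j • e j := by
    intro j
    rw [hT', Finset.sum_eq_single j]
    · rw [real_inner_self_eq_norm_sq, he.1 j]; simp
    · intro i _ hij
      rw [he.2 hij]; simp
    · simp
  have hl : ∀ j, l j = ∑ k ∈ s, c k * inner ℝ (w k) (e j) ^ 2 := by
    intro j
    rw [hquad, Finset.sum_eq_single j]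
    · rw [real_inner_self_eq_norm_sq, he.1 j]; simp
    · intro i _ hij
      rw [he.2 hij]; simp
    · simp
  have hl0 : ∀ j, 0 ≤ l j := by
    intro j; rw [hl]
    exact Finset.sum_nonneg fun k hk => mul_nonneg (hc k hk) (sq_nonneg _)
  have hsum : ∑ j, l j ≤ Tr := by
    refine le_trans ?_ hTr
    calc ∑ j, l j = ∑ j, ∑ k ∈ s, c k * inner ℝ (w k) (e j) ^ 2 := by simp_rw [← hl]
      _ = ∑ k ∈ s, c k * ∑ j, inner ℝ (w k) (e j) ^ 2 := by
        rw [Finset.sum_comm]; simp_rw [Finset.mul_sum]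
      _ ≤ _ := by
        refine Finset.sum_le_sum fun k hk => mul_le_mul_of_nonneg_left ?_ (hc k hk)
        have := he.sum_inner_products_le (w k) (s := Finset.univ)
        simpa [real_inner_comm] using this
  obtain ⟨θ, h1, h2, h3, h4⟩ := exists_gap l hl0 Tr l0 N h0 hsum hN
  set g := l0 / (2 * ((N : ℝ) + 1)) with hg
  have hgpos : 0 < g := by positivity
  set S := Finset.univ.filter (fun i => θ + g ≤ l i) with hS
  have hSc : S.card ≤ N := by
    refine le_trans (Finset.card_le_card ?_) h4
    intro i hi
    simp [hS] at hi ⊢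
    linarith
  let f := S.equivFin.symm
  have hbound : ∀ u : E, (∀ a, inner ℝ (e (f a)) u = 0) →
      ∑ k ∈ s, c k * inner ℝ (w k) u ^ 2 ≤ θ * ‖u‖ ^ 2 := by
    intro u hu
    rw [hquad]
    have hb := he.sum_inner_products_le u (s := Finset.univ)
    simp only [Real.norm_eq_abs, sq_abs] at hb
    calc ∑ i, l i * inner ℝ (e i) u ^ 2 ≤ ∑ i, θ * inner ℝ (e i) u ^ 2 := by
          refine Finset.sum_le_sum fun i _ => ?_
          rcases h3 i with h | h
          · exact mul_le_mul_of_nonneg_right h.le (sq_nonneg _)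
          · have : inner ℝ (e i) u = 0 := by
              have := hu (S.equivFin ⟨i, by simp [hS, h]⟩)
              simpa [f] using this
            simp [this]
      _ = θ * ∑ i, inner ℝ (e i) u ^ 2 := by rw [Finset.mul_sum]
      _ ≤ θ * ‖u‖ ^ 2 := mul_le_mul_of_nonneg_left hb (by linarith)
  have hfa : ∀ a, θ + g ≤ l (f a) := by
    intro a
    have := (f a).2
    exact (Finset.mem_filter.1 this).2
  refine ⟨S.card, fun a => e (f a), fun a => l (f a), hSc, ?_, ?_, ?_, ?_, ?_⟩
  · exact he.comp _ (Subtype.val_injective.comp f.injective)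
  · intro a; exact heig _
  · intro a; have := hfa a; linarith
  · intro u hu
    refine (hbound u hu).trans (mul_le_mul_of_nonneg_right (by linarith) (sq_nonneg _))
  · intro u hu a
    have := hfa a
    refine (hbound u hu).trans (mul_le_mul_of_nonneg_right (by linarith) (sq_nonneg _))

/-- Length functions on groups. -/
structure IsLen {G : Type*} [Group G] (ℓ : G → ℝ) : Prop where
  one : ℓ 1 = 0
  mul : ∀ x y, ℓ (x * y) ≤ ℓ x + ℓ y
  inv : ∀ x, ℓ x⁻¹ = ℓ x

lemma IsLen.nonneg {G : Type*} [Group G] {ℓ : G → ℝ} (h : IsLen ℓ) (x : G) : 0 ≤ ℓ x := by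
  have := h.mul x x⁻¹
  rw [mul_inv_cancel, h.one, h.inv] at this
  linarith

lemma IsLen.pow {G : Type*} [Group G] {ℓ : G → ℝ} (h : IsLen ℓ) (x : G) (i : ℕ) :
    ℓ (x ^ i) ≤ i * ℓ x := by
  induction i with
  | zero => simp [h.one]
  | succ i ih =>
    rw [pow_succ]
    have := h.mul (x ^ i) x
    push_cast
    linarith

lemma IsLen.sub_le {G : Type*} [Group G] {ℓ : G → ℝ} (h : IsLen ℓ) (w u : G) :
    |ℓ (w * u) - ℓ u| ≤ ℓ w := by
  rw [abs_le]
  constructor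
  · have := h.mul w⁻¹ (w * u)
    rw [inv_mul_cancel_left, h.inv] at this
    linarith
  · have := h.mul w u
    linarith

lemma conv_reindex {G : Type*} [Group G] (X Y : Finset G) (χ h : G → ℝ)
    (hχ : ∀ u, χ u ≠ 0 → u ∈ X) (hh : ∀ y, h y ≠ 0 → y ∈ Y) (g : G) :
    ∑ u ∈ X, χ u * h (g * u⁻¹) = ∑ y ∈ Y, h y * χ (y⁻¹ * g) := by
  refine Finset.sum_bij_ne_zero (fun u _ _ => g * u⁻¹) ?_ ?_ ?_ ?_
  · intro u _ hu
    exact hh _ (right_ne_zero_of_mul hu)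
  · intro a _ _ b _ _ hab
    simpa using hab
  · intro y _ hy
    refine ⟨y⁻¹ * g, hχ _ (right_ne_zero_of_mul hy), ?_, by group⟩
    have : g * (y⁻¹ * g)⁻¹ = y := by group
    rw [this, mul_comm]; exact hy
  · intro u _ _
    rw [mul_comm]
    congr 2
    group

lemma gleason {G : Type*} [Group G] {ℓ : G → ℝ} (hℓ : IsLen ℓ) (Y X S : Finset G)
    (hY : ∀ y, y ∈ Y ↔ ℓ y ≤ 4) (hX : ∀ y, y ∈ X ↔ ℓ y ≤ 1 / 8) (hS : ∀ y, y ∈ S ↔ ℓ y ≤ 1 / 32)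
    (Q : Set G) (hQ1 : 1 ∈ Q) (hQi : ∀ x ∈ Q, x⁻¹ ∈ Q) (η : ℝ) (hη : η ≤ 1 / 8)
    (hQ : ∀ x ∈ Q, ∀ y, ℓ y ≤ 4 → ℓ (y⁻¹ * x * y) ≤ η) (q : ℕ) (hq : 1 ≤ q)
    (hQq : ∀ x ∈ Q, x ^ q = 1) (n : ℕ) (hn : 1 ≤ n) (hQn : ∀ x ∈ Q ^ n, ℓ x ≤ 1) :
    ∃ φ : G → ℝ, (∀ g, 0 ≤ φ g) ∧ (∀ g, φ g ≤ X.card) ∧ (∀ g, φ g ≠ 0 → ℓ g ≤ 13 / 4) ∧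
      (∀ z ∈ Q ^ (n + 1), ∀ u, ℓ u ≤ 1 / 32 → (S.card : ℝ) / 4 ≤ φ (z * u)) ∧
      (∀ x ∈ Q, ∀ g, |φ (x * g) - φ g| ≤ 8 * q * η * Y.card / n) := by
  classical
  have hn0 : (0 : ℝ) < n := by exact_mod_cast hn
  have hn1 : (1 : ℝ) ≤ n := by exact_mod_cast hn
  have hQη : ∀ x ∈ Q, ℓ x ≤ η := by
    intro x hx
    have := hQ x hx 1 (by rw [hℓ.one]; norm_num)
    simpa using this
  have hη0 : 0 ≤ η := by
    have := hQη 1 hQ1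
    rwa [hℓ.one] at this
  set P : ℕ → Set G := fun j => Q ^ j * (X : Set G) with hP
  set cnt : G → Finset ℕ := fun g => (Finset.range (3 * n)).filter (fun j => g ∈ P j) with hcnt
  set ψ : G → ℝ := fun g => (cnt g).card / (3 * n) with hψ
  set χ : G → ℝ := fun u => max 0 (1 - 8 * ℓ u) with hχ
  set φ : G → ℝ := fun g => ∑ u ∈ X, χ u * ψ (g * u⁻¹) with hφ
  have hχ0 : ∀ u, 0 ≤ χ u := fun u => le_max_left _ _
  have hχ1 : ∀ u, χ u ≤ 1 := by
    intro u
    have := hℓ.nonneg u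
    exact max_le (by norm_num) (by linarith)
  have hχs : ∀ u, χ u ≠ 0 → u ∈ X := by
    intro u hu
    rw [hX]
    by_contra hcon
    apply hu
    exact max_eq_left (by linarith)
  have hχl : ∀ w u, |χ (w * u) - χ u| ≤ 8 * ℓ w := by
    intro w u
    have h1 := abs_max_sub_max_le_abs (1 - 8 * ℓ (w * u)) (1 - 8 * ℓ u) 0
    have h2 := hℓ.sub_le w u
    simp only [hχ]
    rw [max_comm 0, max_comm 0]
    refine h1.trans ?_
    rw [show 1 - 8 * ℓ (w * u) - (1 - 8 * ℓ u) = -(8 * (ℓ (w * u) - ℓ u)) by ring, abs_neg,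
      abs_mul]
    norm_num
    linarith
  have hψ0 : ∀ g, 0 ≤ ψ g := fun g => by positivity
  have hψ1 : ∀ g, ψ g ≤ 1 := by
    intro g
    simp only [hψ]
    rw [div_le_one (by positivity)]
    have := Finset.card_filter_le (Finset.range (3 * n)) (fun j => g ∈ P j)
    rw [Finset.card_range] at this
    exact_mod_cast this
  have hmono : ∀ i j, i ≤ j → Q ^ i ⊆ Q ^ j := fun i j hij => Set.pow_subset_pow_right hQ1 hij
  have hQ3 : ∀ x ∈ Q ^ (3 * n), ℓ x ≤ 3 := by
    intro x hx
    rw [mul_comm, pow_mul, pow_succ, pow_two] at hx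
    obtain ⟨_, ⟨a, ha, b, hb, rfl⟩, c, hc, rfl⟩ := hx
    have h1 := hℓ.mul (a * b) c
    have h2 := hℓ.mul a b
    have := hQn a ha
    have := hQn b hb
    have := hQn c hc
    simp only at *
    linarith
  have hψs : ∀ g, ψ g ≠ 0 → ℓ g ≤ 3 + 1 / 8 := by
    intro g hg
    have hne : (cnt g).Nonempty := by
      rw [Finset.nonempty_iff_ne_empty]
      intro he
      apply hg
      simp [hψ, he]
    obtain ⟨j, hj⟩ := hne
    simp only [hcnt, Finset.mem_filter, Finset.mem_range] at hj
    obtain ⟨hj1, a, ha, u, hu, rfl⟩ := hj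
    have h1 := hℓ.mul a u
    have h2 := hQ3 a (hmono j _ hj1.le ha)
    have h3 := (hX u).1 hu
    simp only at *
    linarith
  have hψd1 : ∀ x ∈ Q, ∀ g, ψ g ≤ ψ (x * g) + 1 / n := by
    intro x hx g
    have hc : (cnt g).card ≤ (cnt (x * g)).card + 1 := by
      have hsub : (cnt g).image Nat.succ ⊆ insert (3 * n) (cnt (x * g)) := by
        intro j hj
        obtain ⟨i, hi, rfl⟩ := Finset.mem_image.1 hj
        simp only [hcnt, Finset.mem_filter, Finset.mem_range] at hi
        obtain ⟨hi1, a, ha, u, hu, rfl⟩ := hi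
        by_cases h3 : i + 1 = 3 * n
        · rw [Nat.succ_eq_add_one, h3]; exact Finset.mem_insert_self _ _
        · apply Finset.mem_insert_of_mem
          simp only [hcnt, Finset.mem_filter, Finset.mem_range]
          refine ⟨by omega, x * a, ?_, u, hu, by simp [mul_assoc]⟩
          rw [Nat.succ_eq_add_one, pow_succ']
          exact Set.mul_mem_mul hx ha
      have h1 := Finset.card_le_card hsub
      rw [Finset.card_image_of_injective _ Nat.succ_injective] at h1
      exact h1.trans (Finset.card_insert_le _ _)
    have hc' : ((cnt g).card : ℝ) ≤ (cnt (x * g)).card + 1 := by exact_mod_cast hc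
    simp only [hψ]
    calc ((cnt g).card : ℝ) / (3 * n) ≤ ((cnt (x * g)).card + 1) / (3 * n) := by gcongr
      _ = (cnt (x * g)).card / (3 * n) + 1 / (3 * n) := by ring
      _ ≤ _ := by gcongr; linarith
  have hψd : ∀ x ∈ Q, ∀ g, |ψ (x * g) - ψ g| ≤ 1 / n := by
    intro x hx g
    have h1 := hψd1 x hx g
    have h2 := hψd1 x⁻¹ (hQi x hx) (x * g)
    rw [inv_mul_cancel_left] at h2
    rw [abs_le]
    constructor <;> linarith
  have hψlow : ∀ g ∈ P (n + 1), 1 / 3 ≤ ψ g := by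
    intro g hg
    have hc : n ≤ (cnt g).card := by
      have hsub : Finset.Ico (n + 1) (3 * n) ⊆ cnt g := by
        intro j hj
        rw [Finset.mem_Ico] at hj
        simp only [hcnt, Finset.mem_filter, Finset.mem_range]
        exact ⟨hj.2, Set.mul_subset_mul_right (hmono _ _ hj.1) hg⟩
      have := Finset.card_le_card hsub
      rw [Nat.card_Ico] at this
      omega
    simp only [hψ]
    rw [div_le_div_iff₀ (by norm_num) (by positivity)]
    have : (n : ℝ) ≤ (cnt g).card := by exact_mod_cast hc
    linarith
  refine ⟨φ, ?_, ?_, ?_, ?_, ?_⟩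
  · intro g
    exact Finset.sum_nonneg fun u _ => mul_nonneg (hχ0 _) (hψ0 _)
  · intro g
    calc φ g ≤ ∑ u ∈ X, (1 : ℝ) := Finset.sum_le_sum fun u _ =>
          mul_le_one₀ (hχ1 _) (hψ0 _) (hψ1 _)
      _ = X.card := by simp
  · intro g hg
    obtain ⟨u, hu, hne⟩ := Finset.exists_ne_zero_of_sum_ne_zero hg
    have h1 := hψs _ (right_ne_zero_of_mul hne)
    have h2 := (hX u).1 hu
    have h3 := hℓ.mul (g * u⁻¹) u
    rw [inv_mul_cancel_right] at h3
    linarith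
  · intro z hz u hu
    have hSX : S ⊆ X := by
      intro v hv
      rw [hX]; rw [hS] at hv; linarith
    calc (S.card : ℝ) / 4 = ∑ v ∈ S, (1 / 4 : ℝ) := by simp; ring
      _ ≤ ∑ v ∈ S, χ v * ψ (z * u * v⁻¹) := by
        refine Finset.sum_le_sum fun v hv => ?_
        have hv' := (hS v).1 hv
        have h1 : 3 / 4 ≤ χ v := le_max_of_le_right (by linarith)
        have h2 : 1 / 3 ≤ ψ (z * u * v⁻¹) := by
          apply hψlow
          refine ⟨z, hz, u * v⁻¹, ?_, by simp [mul_assoc]⟩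
          rw [Finset.mem_coe, hX]
          have := hℓ.mul u v⁻¹
          rw [hℓ.inv] at this
          linarith
        nlinarith
      _ ≤ φ (z * u) := Finset.sum_le_sum_of_subset_of_nonneg hSX
          fun v _ _ => mul_nonneg (hχ0 _) (hψ0 _)
  · intro x hx
    set h : G → ℝ := fun g => ψ (x * g) - ψ g with hh
    have hhs : ∀ y, h y ≠ 0 → y ∈ Y := by
      intro y hy
      rw [hY]
      by_cases h1 : ψ y = 0
      · have h2 : ψ (x * y) ≠ 0 := by
          intro h3; apply hy; simp [hh, h1, h3]
        have h4 := hψs _ h2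
        have h5 := hℓ.mul x⁻¹ (x * y)
        rw [inv_mul_cancel_left, hℓ.inv] at h5
        have := hQη x hx
        linarith
      · have := hψs _ h1; linarith
    have hDφ : ∀ g, φ (x * g) - φ g = ∑ y ∈ Y, h y * χ (y⁻¹ * g) := by
      intro g
      rw [← conv_reindex X Y χ h hχs hhs g]
      simp only [hφ, hh, ← Finset.sum_sub_distrib, mul_sub, mul_assoc]
    have h2nd : ∀ (i : ℕ) (g : G), i ≤ q →
        |(φ (x * (x ^ i * g)) - φ (x ^ i * g)) - (φ (x * g) - φ g)| ≤ 8 * q * η * Y.card / n := by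
      intro i g hi
      rw [hDφ, hDφ, ← Finset.sum_sub_distrib]
      have hterm : ∀ y ∈ Y, |h y * χ (y⁻¹ * (x ^ i * g)) - h y * χ (y⁻¹ * g)| ≤
          1 / n * (8 * (q * η)) := by
        intro y hy
        rw [← mul_sub, abs_mul]
        have h1 := hψd x hx y
        have h2 := hχl (y⁻¹ * x ^ i * y) (y⁻¹ * g)
        rw [show y⁻¹ * x ^ i * y * (y⁻¹ * g) = y⁻¹ * (x ^ i * g) by group] at h2
        have h3 : ℓ (y⁻¹ * x ^ i * y) ≤ q * η := by
          have h4 : y⁻¹ * x ^ i * y = (y⁻¹ * x * y) ^ i := by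
            have := conj_pow (i := i) (a := y⁻¹) (b := x)
            rw [inv_inv] at this
            exact this.symm
          rw [h4]
          refine (hℓ.pow _ _).trans ?_
          have h5 := hQ x hx y ((hY y).1 hy)
          have h6 : (i : ℝ) ≤ q := by exact_mod_cast hi
          exact mul_le_mul h6 h5 (hℓ.nonneg _) (by positivity)
        exact mul_le_mul h1 (h2.trans (by linarith)) (abs_nonneg _) (by positivity)
      calc _ ≤ ∑ y ∈ Y, |h y * χ (y⁻¹ * (x ^ i * g)) - h y * χ (y⁻¹ * g)| :=
            Finset.abs_sum_le_sum_abs _ _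
        _ ≤ ∑ y ∈ Y, 1 / n * (8 * (q * η)) := Finset.sum_le_sum hterm
        _ = 8 * q * η * Y.card / n := by
            rw [Finset.sum_const, nsmul_eq_mul]; field_simp
    intro g
    have htel : ∑ i ∈ Finset.range q, (φ (x * (x ^ i * g)) - φ (x ^ i * g)) = 0 := by
      have := Finset.sum_range_sub (fun i => φ (x ^ i * g)) q
      simp only [hQq x hx, pow_zero, sub_self, pow_succ', mul_assoc] at this
      exact this
    have hq0 : (0 : ℝ) < q := by exact_mod_cast hq
    have hkey : (q : ℝ) * (φ (x * g) - φ g) = - ∑ i ∈ Finset.range q,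
        ((φ (x * (x ^ i * g)) - φ (x ^ i * g)) - (φ (x * g) - φ g)) := by
      rw [Finset.sum_sub_distrib, htel, Finset.sum_const, Finset.card_range, nsmul_eq_mul]
      ring
    have hbd : |(q : ℝ) * (φ (x * g) - φ g)| ≤ q * (8 * q * η * Y.card / n) := by
      rw [hkey, abs_neg]
      calc _ ≤ ∑ i ∈ Finset.range q,
            |(φ (x * (x ^ i * g)) - φ (x ^ i * g)) - (φ (x * g) - φ g)| :=
              Finset.abs_sum_le_sum_abs _ _
        _ ≤ ∑ i ∈ Finset.range q, 8 * q * η * Y.card / n :=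
            Finset.sum_le_sum fun i hi => h2nd i g (Finset.mem_range.1 hi).le
        _ = _ := by simp
    rw [abs_mul, abs_of_pos hq0] at hbd
    exact le_of_mul_le_mul_left hbd hq0

/-- Projection onto the span of a finite family (orthogonal if the family is orthonormal). -/
noncomputable def prj {E : Type*} [NormedAddCommGroup E] [InnerProductSpace ℝ E] {m : ℕ}
    (e : Fin m → E) (u : E) : E := ∑ a, (inner ℝ (e a) u) • e a

section prj
variable {E : Type*} [NormedAddCommGroup E] [InnerProductSpace ℝ E] {m : ℕ} {e : Fin m → E}

lemma prj_add (u v : E) : prj e (u + v) = prj e u + prj e v := by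
  simp [prj, inner_add_right, add_smul, Finset.sum_add_distrib]

lemma prj_smul (c : ℝ) (v : E) : prj e (c • v) = c • prj e v := by
  simp [prj, inner_smul_right, mul_smul, Finset.smul_sum]

lemma prj_sub (u v : E) : prj e (u - v) = prj e u - prj e v := by
  simp [prj, inner_sub_right, sub_smul, Finset.sum_sub_distrib]

lemma prj_sum {ι : Type*} (s : Finset ι) (v : ι → E) :
    prj e (∑ i ∈ s, v i) = ∑ i ∈ s, prj e (v i) := by
  classical
  induction s using Finset.induction_on with
  | empty => simp [prj]
  | insert i s hi ih => rw [Finset.sum_insert hi, Finset.sum_insert hi, prj_add, ih]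

lemma inner_prj (he : Orthonormal ℝ e) (a : Fin m) (u : E) :
    inner ℝ (e a) (prj e u) = inner ℝ (e a) u := by
  rw [prj, inner_sum, Finset.sum_eq_single a]
  · rw [inner_smul_right, real_inner_self_eq_norm_sq, he.1 a]; simp
  · intro b _ hb
    rw [inner_smul_right, he.2 hb.symm]; simp
  · simp

lemma inner_sub_prj (he : Orthonormal ℝ e) (a : Fin m) (u : E) :
    inner ℝ (e a) (u - prj e u) = 0 := by
  rw [inner_sub_right, inner_prj he]; simp

lemma inner_prj_left_zero (u v : E) (hv : ∀ a, inner ℝ (e a) v = 0) :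
    inner ℝ (prj e u) v = 0 := by
  rw [prj, sum_inner]
  exact Finset.sum_eq_zero fun a _ => by rw [inner_smul_left, hv a]; simp

lemma norm_sq_prj (he : Orthonormal ℝ e) (u : E) :
    ‖u‖ ^ 2 = ‖prj e u‖ ^ 2 + ‖u - prj e u‖ ^ 2 := by
  have h := inner_prj_left_zero (e := e) u (u - prj e u) (fun a => inner_sub_prj he a u)
  have h2 : u = prj e u + (u - prj e u) := by abel
  conv_lhs => rw [h2]
  rw [norm_add_sq_real, h]; ring

lemma norm_prj_le (he : Orthonormal ℝ e) (u : E) : ‖prj e u‖ ≤ ‖u‖ := by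
  have := norm_sq_prj he u
  have h2 := sq_nonneg ‖u - prj e u‖
  exact le_of_sq_le_sq (by linarith) (norm_nonneg _)

lemma norm_sub_prj_le (he : Orthonormal ℝ e) (u : E) : ‖u - prj e u‖ ≤ ‖u‖ := by
  have := norm_sq_prj he u
  have h2 := sq_nonneg ‖prj e u‖
  exact le_of_sq_le_sq (by linarith) (norm_nonneg _)

lemma norm_prj_le_of (he : Orthonormal ℝ e) (u : E) (δ : ℝ) (N : ℕ) (hm : m ≤ N) (hδ : 0 ≤ δ)
    (h : ∀ a, |inner ℝ (e a) u| ≤ δ) : ‖prj e u‖ ≤ N * δ := by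
  calc ‖prj e u‖ ≤ ∑ a : Fin m, δ := by
        refine norm_sum_le_of_le _ fun a _ => ?_
        rw [norm_smul, he.1 a, mul_one]
        exact h a
    _ = m * δ := by simp
    _ ≤ N * δ := by gcongr

/-- Spectral projections almost commute with operators almost commuting with `T`. -/
lemma spectral_comm (he : Orthonormal ℝ e) (T : E →ₗ[ℝ] E) (hT : T.IsSymmetric) (l : Fin m → ℝ)
    (hTe : ∀ a, T (e a) = l a • e a) (g : ℝ) (hg : 0 < g)
    (hgap : ∀ u : E, (∀ a, inner ℝ (e a) u = 0) → ∀ a, inner ℝ (T u) u ≤ (l a - g) * ‖u‖ ^ 2)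
    (U : E →ₗ[ℝ] E) (Yb : ℝ) (a : Fin m) (hY : ‖T (U (e a)) - U (T (e a))‖ ≤ Yb)
    (u : E) (hu : ∀ a, inner ℝ (e a) u = 0) :
    |inner ℝ (U (e a)) u| ≤ Yb / g * ‖u‖ := by
  set v := U (e a) - prj e (U (e a)) with hv
  have hvo : ∀ b, inner ℝ (e b) v = 0 := fun b => inner_sub_prj he b _
  have hTp : ∀ x, inner ℝ (T (prj e x)) v = 0 := by
    intro x
    rw [hT]
    refine inner_prj_left_zero _ _ ?_
    intro b
    rw [← hT, hTe, inner_smul_left, hvo]; simp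
  have h1 : inner ℝ (T v) v = inner ℝ (T (U (e a))) v := by
    have : T v = T (U (e a)) - T (prj e (U (e a))) := by rw [hv, map_sub]
    rw [this, inner_sub_left, hTp, sub_zero]
  have hUv : inner ℝ (U (e a)) v = ‖v‖ ^ 2 := by
    have : U (e a) = v + prj e (U (e a)) := by rw [hv]; abel
    conv_lhs => rw [this]
    rw [inner_add_left, real_inner_self_eq_norm_sq, inner_prj_left_zero _ _ hvo, add_zero]
  have h2 : inner ℝ (T (U (e a))) v = l a * ‖v‖ ^ 2 + inner ℝ (T (U (e a)) - U (T (e a))) v := by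
    rw [inner_sub_left, hTe, map_smul, inner_smul_left, hUv]; simp
  have h3 := hgap v hvo a
  have h4 : |inner ℝ (T (U (e a)) - U (T (e a))) v| ≤ Yb * ‖v‖ :=
    (abs_real_inner_le_norm _ _).trans (mul_le_mul_of_nonneg_right hY (norm_nonneg _))
  have h5 := (abs_le.1 h4).1
  have h6 : ‖v‖ ≤ Yb / g := by
    rw [le_div_iff₀ hg]
    rcases eq_or_lt_of_le (norm_nonneg v) with h0 | h0
    · rw [← h0]; have := norm_nonneg (T (U (e a)) - U (T (e a))); linarith
    · by_contra hcon
      push Not at hcon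
      nlinarith
  have h7 : inner ℝ (U (e a)) u = inner ℝ v u := by
    rw [hv, inner_sub_left, inner_prj_left_zero _ _ hu, sub_zero]
  rw [h7]
  exact (abs_real_inner_le_norm _ _).trans (mul_le_mul_of_nonneg_right h6 (norm_nonneg _))

/-- Dynamics: products of elements of `Q` move `f` little in the directions of `e`. -/
lemma dyn {G : Type*} [Group G] (π : G →* (E ≃ₗᵢ[ℝ] E)) (f : E) (he : Orthonormal ℝ e)
    (N : ℕ) (hm : m ≤ N) (Q : Set G) (q : ℕ) (hq : 1 ≤ q) (hQq : ∀ x ∈ Q, x ^ q = 1)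
    (δ κ : ℝ) (hδ : 0 ≤ δ) (hκ : N * κ ≤ 1 / 2)
    (h1 : ∀ x ∈ Q, ∀ a, ∀ u, (∀ b, inner ℝ (e b) u = 0) → |inner ℝ (e a) (π x u)| ≤ δ * ‖u‖)
    (h2 : ∀ x ∈ Q, ∀ i, i ≤ q → ∀ a, ‖π (x ^ i) (e a) - e a‖ ≤ κ)
    (n : ℕ) (hQ1 : ∀ j ≤ n, ∀ x ∈ Q ^ j, ‖π x f - f‖ ≤ 1) (hn : 1 ≤ n) :
    ∀ j ≤ n + 1, ∀ z ∈ Q ^ j, ‖prj e (π z f - f)‖ ≤ j * (3 * q * (N * δ)) := by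
  set B := (N : ℝ) * δ with hB
  have hB0 : 0 ≤ B := by positivity
  have hq1 : (1 : ℝ) ≤ q := by exact_mod_cast hq
  have hcomm : ∀ x ∈ Q, ∀ u, ‖prj e (π x (u - prj e u))‖ ≤ B * ‖u‖ := by
    intro x hx u
    rw [hB, mul_assoc]
    refine norm_prj_le_of he _ _ N hm (by positivity) fun a => ?_
    refine (h1 x hx a _ fun b => inner_sub_prj he b u).trans ?_
    exact mul_le_mul_of_nonneg_left (norm_sub_prj_le he u) hδ
  have hpx : ∀ x ∈ Q, ∀ u, ‖prj e (π x u)‖ ≤ ‖prj e u‖ + B * ‖u‖ := by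
    intro x hx u
    have : π x u = π x (prj e u) + π x (u - prj e u) := by rw [← map_add]; congr 1; abel
    rw [this, prj_add]
    refine (norm_add_le _ _).trans (add_le_add ?_ (hcomm x hx u))
    refine (norm_prj_le he _).trans ?_
    simp
  have hcommi : ∀ x ∈ Q, ∀ i : ℕ, ∀ u, ‖prj e (π (x ^ i) (u - prj e u))‖ ≤ i * B * ‖u‖ := by
    intro x hx i
    induction i with
    | zero =>
      intro u
      have : prj e (u - prj e u) = 0 := by
        simp only [prj] at *
        refine Finset.sum_eq_zero fun a _ => ?_
        have := inner_sub_prj he a u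
        rw [prj] at this
        rw [this, zero_smul]
      simp [this]
    | succ i ih =>
      intro u
      rw [pow_succ', map_mul, LinearIsometryEquiv.coe_mul, Function.comp_apply]
      refine (hpx x hx _).trans ?_
      have h3 := ih u
      have h4 : ‖π (x ^ i) (u - prj e u)‖ ≤ ‖u‖ := by
        rw [LinearIsometryEquiv.norm_map]; exact norm_sub_prj_le he u
      have h5 := mul_le_mul_of_nonneg_left h4 hB0
      push_cast
      linarith
  have hκe : ∀ x ∈ Q, ∀ i ≤ q, ∀ u, ‖π (x ^ i) (prj e u) - prj e u‖ ≤ 1 / 2 * ‖prj e u‖ := by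
    intro x hx i hi u
    have hκ' : N * κ * ‖prj e u‖ ≤ 1 / 2 * ‖prj e u‖ :=
      mul_le_mul_of_nonneg_right hκ (norm_nonneg _)
    refine le_trans ?_ hκ'
    have : π (x ^ i) (prj e u) - prj e u =
        ∑ a, (inner ℝ (e a) (prj e u)) • (π (x ^ i) (e a) - e a) := by
      simp_rw [inner_prj he]
      simp [prj, smul_sub, Finset.sum_sub_distrib]
    rw [this]
    rcases Nat.eq_zero_or_pos m with h0 | h0
    · subst h0
      have : prj e u = 0 := by simp [prj]
      simp [this]
    have hκ0 : 0 ≤ κ := (norm_nonneg _).trans (h2 x hx i hi ⟨0, h0⟩)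
    calc _ ≤ ∑ a : Fin m, ‖prj e u‖ * κ := by
          refine norm_sum_le_of_le _ fun a _ => ?_
          rw [norm_smul]
          refine mul_le_mul ?_ (h2 x hx i hi a) (norm_nonneg _) (norm_nonneg _)
          have := abs_real_inner_le_norm (e a) (prj e u)
          rwa [he.1 a, one_mul] at this
      _ = m * κ * ‖prj e u‖ := by simp; ring
      _ ≤ _ := by gcongr
  have hb : ∀ x ∈ Q, ‖prj e (π x f - f)‖ ≤ 2 * q * B := by
    intro x hx
    set b := π x f - f with hbdef
    have hb1 : ‖b‖ ≤ 1 := by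
      have := hQ1 1 hn x (by rwa [pow_one])
      exact this
    have hsum : ∑ i ∈ Finset.range q, π (x ^ i) b = 0 := by
      have := Finset.sum_range_sub (fun i => π (x ^ i) f) q
      rw [hQq x hx, pow_zero, sub_self] at this
      rw [← this]
      refine Finset.sum_congr rfl fun i _ => ?_
      rw [hbdef, map_sub, pow_succ, map_mul, LinearIsometryEquiv.coe_mul, Function.comp_apply]
    have hkey : (q : ℝ) • prj e b = - ∑ i ∈ Finset.range q,
        (prj e (π (x ^ i) (prj e b) - prj e b) + prj e (π (x ^ i) (b - prj e b))) := by
      have h3 : ∀ i, prj e (π (x ^ i) (prj e b) - prj e b) + prj e (π (x ^ i) (b - prj e b))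
          = prj e (π (x ^ i) b) - prj e (prj e b) := by
        intro i
        rw [prj_sub (π (x ^ i) (prj e b)) (prj e b), map_sub (π (x ^ i)) b (prj e b),
          prj_sub (π (x ^ i) b) (π (x ^ i) (prj e b))]
        abel
      have h4 : prj e (prj e b) = prj e b := by
        conv_lhs => rw [prj]
        simp_rw [inner_prj he]
        rfl
      simp_rw [h3]
      rw [Finset.sum_sub_distrib, ← prj_sum, hsum, h4]
      simp [prj, Nat.cast_smul_eq_nsmul]
    have hbd : ‖(q : ℝ) • prj e b‖ ≤ q * (1 / 2 * ‖prj e b‖ + q * B) := by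
      rw [hkey, norm_neg]
      calc _ ≤ ∑ i ∈ Finset.range q, (1 / 2 * ‖prj e b‖ + q * B) := by
            refine norm_sum_le_of_le _ fun i hi => ?_
            have hi' := (Finset.mem_range.1 hi).le
            refine (norm_add_le _ _).trans (add_le_add ?_ ?_)
            · exact (norm_prj_le he _).trans (hκe x hx i hi' b)
            · refine (hcommi x hx i b).trans ?_
              have hir : (i : ℝ) ≤ q := by exact_mod_cast hi'
              calc (i : ℝ) * B * ‖b‖ ≤ q * B * 1 := by gcongr
                _ = q * B := by ring
        _ = _ := by rw [Finset.sum_const, Finset.card_range, nsmul_eq_mul]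
    rw [norm_smul, Real.norm_natCast] at hbd
    have := le_of_mul_le_mul_left hbd (by linarith)
    linarith
  intro j
  induction j with
  | zero =>
    intro _ z hz
    rw [pow_zero, Set.mem_one] at hz
    simp [hz, prj]
  | succ j ih =>
    intro hj z hz
    rw [pow_succ'] at hz
    obtain ⟨x, hx, w, hw, rfl⟩ := hz
    have h3 := ih (by omega) w hw
    have h4 := hQ1 j (by omega) w hw
    have h5 := hb x hx
    have h6 : π (x * w) f - f = (π x f - f) + π x (π w f - f) := by
      rw [map_mul, LinearIsometryEquiv.coe_mul, Function.comp_apply, map_sub]; abel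
    simp only
    rw [h6, prj_add]
    have h7 := hpx x hx (π w f - f)
    have h8 : B * ‖π w f - f‖ ≤ B := mul_le_of_le_one_right hB0 h4
    have h9 : B ≤ q * B := le_mul_of_one_le_left hB0 hq1
    have h10 := norm_add_le (prj e (π x f - f)) (prj e (π x (π w f - f)))
    push_cast
    linarith
end prj

lemma len_rep {G : Type*} [Group G] {E : Type*} [NormedAddCommGroup E] [InnerProductSpace ℝ E]
    (π : G →* (E ≃ₗᵢ[ℝ] E)) (f : E) : IsLen (fun x => ‖π x f - f‖) where
  one := by simp
  mul x y := by
    have h6 : π (x * y) f - f = (π x f - f) + π x (π y f - f) := by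
      rw [map_mul, LinearIsometryEquiv.coe_mul, Function.comp_apply, map_sub]; abel
    rw [h6]
    refine (norm_add_le _ _).trans ?_
    rw [LinearIsometryEquiv.norm_map]
  inv x := by
    have : π x (π x⁻¹ f - f) = -(π x f - f) := by
      rw [map_sub, ← Function.comp_apply (f := π x), ← LinearIsometryEquiv.coe_mul, ← map_mul]
      simp
    rw [← LinearIsometryEquiv.norm_map (π x), this, norm_neg]

/-- The (unnormalised) covariance operator. -/
noncomputable def covOp {E : Type*} [NormedAddCommGroup E] [InnerProductSpace ℝ E] {ι : Type*}
    (s : Finset ι) (c : ι → ℝ) (w : ι → E) : E →ₗ[ℝ] E where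
  toFun u := ∑ p ∈ s, (c p * inner ℝ (w p) u) • w p
  map_add' u v := by
    simp [inner_add_right, mul_add, add_smul, Finset.sum_add_distrib]
  map_smul' r u := by
    simp only [inner_smul_right, RingHom.id_apply, Finset.smul_sum, smul_smul]
    exact Finset.sum_congr rfl fun p _ => by congr 1; ring

section cov
variable {E : Type*} [NormedAddCommGroup E] [InnerProductSpace ℝ E] {ι : Type*}
    (s : Finset ι) (c : ι → ℝ) (w : ι → E)

lemma covOp_apply (u : E) : covOp s c w u = ∑ p ∈ s, (c p * inner ℝ (w p) u) • w p := rfl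

lemma inner_covOp (u v : E) :
    inner ℝ (covOp s c w u) v = ∑ p ∈ s, c p * inner ℝ (w p) u * inner ℝ (w p) v := by
  rw [covOp_apply, sum_inner]
  exact Finset.sum_congr rfl fun p _ => by rw [real_inner_smul_left]

lemma covOp_symm : (covOp s c w).IsSymmetric := by
  intro u v
  rw [inner_covOp, real_inner_comm, inner_covOp]
  exact Finset.sum_congr rfl fun p _ => by ring

lemma inner_covOp_self (u : E) :
    inner ℝ (covOp s c w u) u = ∑ p ∈ s, c p * inner ℝ (w p) u ^ 2 := by
  rw [inner_covOp]
  exact Finset.sum_congr rfl fun p _ => by ring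
end cov

lemma sum_shift {G : Type*} [Group G] {E : Type*} [AddCommMonoid E] (Y : Finset G) (x : G)
    (F : G × G → E) (h1 : ∀ p, F p ≠ 0 → p.1 ∈ Y ∧ p.2 ∈ Y)
    (h2 : ∀ p, F p ≠ 0 → x⁻¹ * p.1 ∈ Y ∧ x⁻¹ * p.2 ∈ Y) :
    ∑ p ∈ Y ×ˢ Y, F p = ∑ p ∈ Y ×ˢ Y, F (x * p.1, x * p.2) := by
  refine Finset.sum_bij_ne_zero (fun p _ _ => (x⁻¹ * p.1, x⁻¹ * p.2)) ?_ ?_ ?_ ?_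
  · intro p _ hp
    exact Finset.mem_product.2 (h2 p hp)
  · rintro ⟨a, b⟩ _ _ ⟨a', b'⟩ _ _ h
    simpa using h
  · rintro ⟨a, b⟩ _ hp
    exact ⟨(x * a, x * b), Finset.mem_product.2 (h1 _ hp), hp, by simp⟩
  · rintro ⟨a, b⟩ _ _
    simp

section coreA
variable {G : Type*} [Group G] {E : Type*} [NormedAddCommGroup E] [InnerProductSpace ℝ E]
    (π : G →* (E ≃ₗᵢ[ℝ] E)) (f : E)

lemma rep_mul (x y : G) (u : E) : π (x * y) u = π x (π y u) := by
  rw [map_mul, LinearIsometryEquiv.coe_mul, Function.comp_apply]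

/-- Difference vectors along the orbit. -/
noncomputable def dvec (p : G × G) : E := π p.1 f - π p.2 f

lemma dvec_shift (x : G) (p : G × G) : dvec π f (x * p.1, x * p.2) = π x (dvec π f p) := by
  simp only [dvec, map_sub, rep_mul]

lemma norm_dvec_le (p : G × G) (h1 : ‖π p.1 f - f‖ ≤ 4) (h2 : ‖π p.2 f - f‖ ≤ 4) :
    ‖dvec π f p‖ ≤ 8 := by
  have : dvec π f p = (π p.1 f - f) - (π p.2 f - f) := by simp [dvec]
  rw [this]
  have := norm_sub_le (π p.1 f - f) (π p.2 f - f)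
  linarith

lemma comm_bound (Y : Finset G) (hY : ∀ y, y ∈ Y ↔ ‖π y f - f‖ ≤ 4) (φ : G → ℝ) (W D : ℝ)
    (hφ0 : ∀ g, 0 ≤ φ g) (hφW : ∀ g, φ g ≤ W) (hYW : (Y.card : ℝ) = W)
    (hφs : ∀ g, φ g ≠ 0 → ‖π g f - f‖ ≤ 13 / 4) (x : G) (hx : ‖π x f - f‖ ≤ 1 / 8)
    (hD : ∀ g, |φ (x * g) - φ g| ≤ D) (u : E) :
    ‖covOp (Y ×ˢ Y) (fun p => φ p.1 * φ p.2) (dvec π f) (π x u) -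
      π x (covOp (Y ×ˢ Y) (fun p => φ p.1 * φ p.2) (dvec π f) u)‖ ≤ 128 * W ^ 3 * D * ‖u‖ := by
  have hℓ := len_rep π f
  have hW0 : 0 ≤ W := (hφ0 1).trans (hφW 1)
  have hD0 : 0 ≤ D := (abs_nonneg _).trans (hD 1)
  have hs : ∀ g, φ g ≠ 0 → g ∈ Y ∧ x⁻¹ * g ∈ Y := by
    intro g hg
    have h1 := hφs g hg
    have h2 := hℓ.mul x⁻¹ g
    have h3 := hℓ.inv x
    rw [hY, hY]
    constructor <;> linarith
  rw [covOp_apply, covOp_apply,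
    sum_shift Y x (fun p => (φ p.1 * φ p.2 * inner ℝ (dvec π f p) (π x u)) • dvec π f p), map_sum,
    ← Finset.sum_sub_distrib]
  · have hterm : ∀ p ∈ Y ×ˢ Y, ‖(φ (x * p.1) * φ (x * p.2) *
        inner ℝ (dvec π f (x * p.1, x * p.2)) (π x u)) • dvec π f (x * p.1, x * p.2) -
        π x ((φ p.1 * φ p.2 * inner ℝ (dvec π f p) u) • dvec π f p)‖ ≤ 128 * W * D * ‖u‖ := by
      intro p hp
      rw [Finset.mem_product, hY, hY] at hp
      have hn := norm_dvec_le π f p hp.1 hp.2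
      rw [dvec_shift, LinearIsometryEquiv.inner_map_map, map_smul, ← sub_smul, ← sub_mul,
        norm_smul, norm_mul, LinearIsometryEquiv.norm_map]
      have h1 : ‖φ (x * p.1) * φ (x * p.2) - φ p.1 * φ p.2‖ ≤ 2 * W * D := by
        have : φ (x * p.1) * φ (x * p.2) - φ p.1 * φ p.2 =
          φ (x * p.1) * (φ (x * p.2) - φ p.2) + (φ (x * p.1) - φ p.1) * φ p.2 := by ring
        rw [this]
        refine (norm_add_le _ _).trans ?_
        rw [norm_mul, norm_mul, Real.norm_eq_abs, Real.norm_eq_abs, Real.norm_eq_abs,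
          Real.norm_eq_abs, abs_of_nonneg (hφ0 _), abs_of_nonneg (hφ0 _)]
        have h2 := mul_le_mul (hφW (x * p.1)) (hD p.2) (abs_nonneg _) hW0
        have h3 := mul_le_mul (hD p.1) (hφW p.2) (hφ0 _) hD0
        linarith
      have h2 : ‖inner ℝ (dvec π f p) u‖ ≤ 8 * ‖u‖ :=
        (abs_real_inner_le_norm _ _).trans (mul_le_mul_of_nonneg_right hn (norm_nonneg _))
      calc _ ≤ 2 * W * D * (8 * ‖u‖) * 8 := by gcongr
        _ = _ := by ring
    refine (norm_sum_le_of_le _ hterm).trans ?_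
    rw [Finset.sum_const, Finset.card_product, nsmul_eq_mul]
    push_cast
    rw [hYW]
    apply le_of_eq; ring
  · intro p hp
    have := (smul_ne_zero_iff.1 hp).1
    have := left_ne_zero_of_mul this
    exact ⟨(hs _ (left_ne_zero_of_mul this)).1, (hs _ (right_ne_zero_of_mul this)).1⟩
  · intro p hp
    have := (smul_ne_zero_iff.1 hp).1
    have := left_ne_zero_of_mul this
    exact ⟨(hs _ (left_ne_zero_of_mul this)).2, (hs _ (right_ne_zero_of_mul this)).2⟩

lemma kappa_bound (Y : Finset G) (hY : ∀ y, y ∈ Y ↔ ‖π y f - f‖ ≤ 4) (φ : G → ℝ) (W θ : ℝ)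
    (hφ0 : ∀ g, 0 ≤ φ g) (hφW : ∀ g, φ g ≤ W) (hYW : (Y.card : ℝ) = W)
    (x : G) (hx : ∀ y ∈ Y, ‖π (y⁻¹ * x * y) f - f‖ ≤ θ) (u : E) (hu : ‖u‖ = 1) :
    ‖π x (covOp (Y ×ˢ Y) (fun p => φ p.1 * φ p.2) (dvec π f) u) -
      covOp (Y ×ˢ Y) (fun p => φ p.1 * φ p.2) (dvec π f) u‖ ≤ 16 * W ^ 4 * θ := by
  have hW0 : 0 ≤ W := (hφ0 1).trans (hφW 1)
  have hm : ∀ y ∈ Y, ‖π x (π y f) - π y f‖ ≤ θ := by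
    intro y hy
    have : π x (π y f) - π y f = π y (π (y⁻¹ * x * y) f - f) := by
      rw [map_sub, ← rep_mul, ← rep_mul]; congr 3; group
    rw [this, LinearIsometryEquiv.norm_map]
    exact hx y hy
  rw [covOp_apply, map_sum, ← Finset.sum_sub_distrib]
  have hterm : ∀ p ∈ Y ×ˢ Y, ‖π x ((φ p.1 * φ p.2 * inner ℝ (dvec π f p) u) • dvec π f p) -
      (φ p.1 * φ p.2 * inner ℝ (dvec π f p) u) • dvec π f p‖ ≤ 16 * W ^ 2 * θ := by
    intro p hp
    rw [Finset.mem_product] at hp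
    have hn := norm_dvec_le π f p ((hY _).1 hp.1) ((hY _).1 hp.2)
    rw [map_smul, ← smul_sub, norm_smul, norm_mul, norm_mul]
    have h1 : ‖π x (dvec π f p) - dvec π f p‖ ≤ 2 * θ := by
      have : π x (dvec π f p) - dvec π f p = (π x (π p.1 f) - π p.1 f) -
        (π x (π p.2 f) - π p.2 f) := by simp only [dvec, map_sub]; abel
      rw [this]
      have h3 := hm _ hp.1
      have h4 := hm _ hp.2
      refine (norm_sub_le _ _).trans ?_
      linarith
    have h2 : ‖inner ℝ (dvec π f p) u‖ ≤ 8 := by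
      refine (abs_real_inner_le_norm _ _).trans ?_
      rw [hu, mul_one]; exact hn
    have h3 : ∀ g, ‖φ g‖ ≤ W := fun g => by
      rw [Real.norm_eq_abs, abs_of_nonneg (hφ0 g)]; exact hφW g
    calc _ ≤ W * W * 8 * (2 * θ) := by gcongr <;> apply h3
      _ = _ := by ring
  refine (norm_sum_le_of_le _ hterm).trans ?_
  rw [Finset.sum_const, Finset.card_product, nsmul_eq_mul]
  push_cast
  rw [hYW]
  apply le_of_eq; ring

lemma lower_bound (Y S : Finset G) (hY : ∀ y, y ∈ Y ↔ ‖π y f - f‖ ≤ 4)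
    (hS : ∀ y, y ∈ S ↔ ‖π y f - f‖ ≤ 1 / 32) (φ : G → ℝ) (hφ0 : ∀ g, 0 ≤ φ g)
    (hφs : ∀ g, φ g ≠ 0 → ‖π g f - f‖ ≤ 13 / 4) (z u : E) (zz : G) (hz : z = π zz f - f)
    (h1 : ∀ s ∈ S, (S.card : ℝ) / 4 ≤ φ (zz * s)) (h2 : ∀ s ∈ S, (S.card : ℝ) / 4 ≤ φ s)
    (hzu : inner ℝ z u = ‖u‖ ^ 2) (hu : 1 / 4 < ‖u‖) :
    (S.card : ℝ) ^ 4 * (9 / 4096) * ‖u‖ ^ 2 ≤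
      ∑ p ∈ Y ×ˢ Y, φ p.1 * φ p.2 * inner ℝ (dvec π f p) u ^ 2 := by
  classical
  rcases S.eq_empty_or_nonempty with rfl | hne
  · simp
    exact Finset.sum_nonneg fun p _ => mul_nonneg (mul_nonneg (hφ0 _) (hφ0 _)) (sq_nonneg _)
  have hc : (0 : ℝ) < S.card := by exact_mod_cast hne.card_pos
  have hsub : (S ×ˢ S).image (fun p => (zz * p.1, p.2)) ⊆ Y ×ˢ Y := by
    intro p hp
    obtain ⟨⟨a, b⟩, hab, rfl⟩ := Finset.mem_image.1 hp
    rw [Finset.mem_product] at hab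
    have h3 := h1 a hab.1
    have h4 := h2 b hab.2
    have h5 := hφs _ (by linarith : 0 < φ (zz * a)).ne'
    have h6 := hφs _ (by linarith : 0 < φ b).ne'
    rw [Finset.mem_product, hY, hY]
    constructor <;> simp only <;> linarith
  refine le_trans ?_ (Finset.sum_le_sum_of_subset_of_nonneg hsub
    fun p _ _ => mul_nonneg (mul_nonneg (hφ0 _) (hφ0 _)) (sq_nonneg _))
  rw [Finset.sum_image (by rintro ⟨a, b⟩ _ ⟨a', b'⟩ _ h; simpa using h)]
  have hterm : ∀ p ∈ S ×ˢ S, (S.card : ℝ) ^ 2 * (9 / 4096) * ‖u‖ ^ 2 ≤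
      φ (zz * p.1) * φ p.2 * inner ℝ (dvec π f (zz * p.1, p.2)) u ^ 2 := by
    rintro ⟨a, b⟩ hab
    rw [Finset.mem_product] at hab
    have h3 := h1 a hab.1
    have h4 := h2 b hab.2
    have h5 := (hS _).1 hab.1
    have h6 := (hS _).1 hab.2
    simp only at *
    have hd : dvec π f (zz * a, b) = z + π zz (π a f - f) - (π b f - f) := by
      simp only [dvec, hz, map_sub, rep_mul]; abel
    have hi : 3 / 16 * ‖u‖ ≤ inner ℝ (dvec π f (zz * a, b)) u := by
      rw [hd, inner_sub_left, inner_add_left, hzu]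
      have h7 := (abs_le.1 (abs_real_inner_le_norm (π zz (π a f - f)) u)).1
      have h8 := (abs_le.1 (abs_real_inner_le_norm (π b f - f) u)).2
      rw [LinearIsometryEquiv.norm_map] at h7
      have h9 := mul_le_mul_of_nonneg_right h5 (norm_nonneg u)
      have h10 := mul_le_mul_of_nonneg_right h6 (norm_nonneg u)
      nlinarith
    calc (S.card : ℝ) ^ 2 * (9 / 4096) * ‖u‖ ^ 2
        = (S.card / 4) * (S.card / 4) * (3 / 16 * ‖u‖) ^ 2 := by ring
      _ ≤ _ := by
        have := hφ0 (zz * a)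
        have := mul_nonneg this (hφ0 b)
        gcongr
  refine le_trans ?_ (Finset.sum_le_sum hterm)
  rw [Finset.sum_const, Finset.card_product, nsmul_eq_mul]
  push_cast
  apply le_of_eq; ring

lemma coreA (K η : ℝ) (q N : ℕ) (hq : 1 ≤ q) (hK : 1 ≤ K) (hN : 131072 * K ^ 4 ≤ N)
    (hη0 : 0 < η) (hη1 : η ≤ 1 / 8) (hη2 : N * (2 ^ 15 * q * K ^ 4 * η) ≤ 1 / 2)
    (hη3 : 6 * q * N * (2 ^ 21 * (N + 1) * q * K ^ 4 * η) ≤ 1 / 4)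
    (Y X S : Finset G) (hY : ∀ y, y ∈ Y ↔ ‖π y f - f‖ ≤ 4)
    (hX : ∀ y, y ∈ X ↔ ‖π y f - f‖ ≤ 1 / 8) (hS : ∀ y, y ∈ S ↔ ‖π y f - f‖ ≤ 1 / 32)
    (hYS : (Y.card : ℝ) ≤ K * S.card)
    (Q : Set G) (hQ1 : 1 ∈ Q) (hQi : ∀ x ∈ Q, x⁻¹ ∈ Q)
    (hQ : ∀ x ∈ Q, ∀ y, ‖π y f - f‖ ≤ 4 → ‖π (y⁻¹ * x * y) f - f‖ ≤ η)
    (hQq : ∀ x ∈ Q, x ^ q = 1) : ∀ j : ℕ, ∀ x ∈ Q ^ j, ‖π x f - f‖ ≤ 1 := by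
  classical
  have hℓ := len_rep π f
  have hQη : ∀ x ∈ Q, ‖π x f - f‖ ≤ η := by
    intro x hx
    have := hQ x hx 1 (by simp)
    simpa using this
  have hmono : ∀ i j, i ≤ j → Q ^ i ⊆ Q ^ j := fun i j hij => Set.pow_subset_pow_right hQ1 hij
  intro j
  induction j with
  | zero => intro x hx; rw [pow_zero, Set.mem_one] at hx; simp [hx]
  | succ n ih =>
  rcases Nat.eq_zero_or_pos n with h0 | hn
  · subst h0
    intro x hx
    rw [zero_add, pow_one] at hx
    have := hQη x hx
    linarith
  intro z hz
  obtain ⟨φ, hφ0, hφX, hφs, hφl, hφd⟩ := gleason hℓ Y X S hY hX hS Q hQ1 hQi η hη1 hQ q hq hQq n hn ih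
  set W : ℝ := (Y.card : ℝ) with hW
  set β : ℝ := (S.card : ℝ) with hβ
  have hn0 : (0 : ℝ) < n := by exact_mod_cast hn
  have hn1 : (1 : ℝ) ≤ n := by exact_mod_cast hn
  have hq1 : (1 : ℝ) ≤ q := by exact_mod_cast hq
  have hβ1 : 1 ≤ β := by
    have : 0 < S.card := Finset.card_pos.2 ⟨1, by rw [hS]; simp⟩
    rw [hβ]; exact_mod_cast this
  have hβ0 : 0 < β := by linarith
  have hW0 : 0 ≤ W := by positivity
  have hXY : (X.card : ℝ) ≤ W := by
    rw [hW]
    have : X ⊆ Y := by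
      intro y hy
      rw [hY]; rw [hX] at hy; linarith
    exact_mod_cast Finset.card_le_card this
  have hφW : ∀ g, φ g ≤ W := fun g => (hφX g).trans hXY
  have hW4 : W ^ 4 ≤ K ^ 4 * β ^ 4 := by
    rw [← mul_pow]; gcongr
  set c : G × G → ℝ := fun p => φ p.1 * φ p.2 with hc
  set T := covOp (Y ×ˢ Y) c (dvec π f) with hT
  obtain ⟨m, e, l, hmN, he, hTe, hl, hsmall, hgap⟩ := spectral_trunc (Y ×ˢ Y) c
    (fun p _ => mul_nonneg (hφ0 _) (hφ0 _)) (dvec π f) (64 * K ^ 4 * β ^ 4) (β ^ 4 / 1024) N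
    (by positivity) (by
      have : ∀ p ∈ Y ×ˢ Y, c p * ‖dvec π f p‖ ^ 2 ≤ W * W * 8 ^ 2 := by
        intro p hp
        rw [Finset.mem_product] at hp
        have hn := norm_dvec_le π f p ((hY _).1 hp.1) ((hY _).1 hp.2)
        have h1 := hφW p.1
        have h2 := hφW p.2
        have h3 := hφ0 p.1
        have h4 := hφ0 p.2
        simp only [hc]
        gcongr
      refine (Finset.sum_le_sum this).trans ?_
      rw [Finset.sum_const, Finset.card_product, nsmul_eq_mul]
      push_cast
      rw [← hW]
      nlinarith) (by
      have : 2 * (64 * K ^ 4 * β ^ 4) / (β ^ 4 / 1024) = 131072 * K ^ 4 := by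
        field_simp; ring
      rw [this]; exact hN)
  have hTe' : ∀ a, T (e a) = l a • e a := hTe
  set g : ℝ := β ^ 4 / 1024 / (2 * (N + 1)) with hg
  have hg0 : 0 < g := by positivity
  have hC : ∀ x ∈ Q, ∀ u, ‖T (π x u) - π x (T u)‖ ≤ 1024 * q * η * W ^ 4 / n * ‖u‖ := by
    intro x hx u
    have := comm_bound π f Y hY φ W (8 * q * η * W / n) hφ0 hφW rfl hφs x
      ((hQη x hx).trans hη1) (hφd x hx) u
    refine this.trans (le_of_eq ?_)
    field_simp; ring
  set δ : ℝ := 1024 * q * η * W ^ 4 / n / g with hδ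
  have hδ0 : 0 ≤ δ := by positivity
  have hδle : δ ≤ 2 ^ 21 * (N + 1) * q * K ^ 4 * η / n := by
    rw [hδ, hg]
    have h1 : 1024 * q * η * W ^ 4 / n / (β ^ 4 / 1024 / (2 * (N + 1))) =
      (2 ^ 21 * (N + 1) * q * η / n) * (W ^ 4 / β ^ 4) := by
      field_simp; ring
    have h2 : W ^ 4 / β ^ 4 ≤ K ^ 4 := by
      rw [div_le_iff₀ (by positivity)]; exact hW4
    rw [h1]
    calc _ ≤ (2 ^ 21 * (N + 1) * q * η / n) * K ^ 4 := by gcongr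
      _ = _ := by ring
  have hd1 : ∀ x ∈ Q, ∀ a, ∀ u, (∀ b, inner ℝ (e b) u = 0) → |inner ℝ (e a) (π x u)| ≤ δ * ‖u‖ := by
    intro x hx a u hu
    have h1 := spectral_comm he T (covOp_symm _ _ _) l hTe' g hg0
      (fun u hu a => by rw [hT, inner_covOp_self]; exact hgap u hu a)
      ((π x⁻¹).toLinearEquiv : E →ₗ[ℝ] E) (1024 * q * η * W ^ 4 / n) a (by
        have := hC x⁻¹ (hQi x hx) (e a)
        rw [he.1 a, mul_one] at this
        exact this) u hu
    have h2 : inner ℝ (e a) (π x u) = inner ℝ (π x⁻¹ (e a)) u := by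
      rw [← LinearIsometryEquiv.inner_map_map (π x) (π x⁻¹ (e a)) u, ← rep_mul]
      simp
    rw [h2]
    exact h1
  have hd2 : ∀ x ∈ Q, ∀ i, i ≤ q → ∀ a, ‖π (x ^ i) (e a) - e a‖ ≤ 2 ^ 15 * q * K ^ 4 * η := by
    intro x hx i hi a
    have h1 := kappa_bound π f Y hY φ W (q * η) hφ0 hφW rfl (x ^ i) (by
      intro y hy
      have h4 : y⁻¹ * x ^ i * y = (y⁻¹ * x * y) ^ i := by
        have := conj_pow (i := i) (a := y⁻¹) (b := x)
        rw [inv_inv] at this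
        exact this.symm
      rw [h4]
      refine (hℓ.pow _ _).trans ?_
      have h5 := hQ x hx y ((hY y).1 hy)
      have h6 : (i : ℝ) ≤ q := by exact_mod_cast hi
      exact mul_le_mul h6 h5 (norm_nonneg _) (by positivity)) (e a) (he.1 a)
    have h1' : ‖π (x ^ i) (T (e a)) - T (e a)‖ ≤ 16 * W ^ 4 * (q * η) := h1
    rw [hTe', map_smul, ← smul_sub, norm_smul] at h1'
    have hla := hl a
    have hl0 : 0 < l a := lt_of_lt_of_le (by positivity) hla
    rw [Real.norm_eq_abs, abs_of_pos hl0] at h1'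
    have h2 : β ^ 4 / 1024 / 2 * ‖π (x ^ i) (e a) - e a‖ ≤ 16 * (K ^ 4 * β ^ 4) * (q * η) := by
      calc _ ≤ l a * ‖π (x ^ i) (e a) - e a‖ := by gcongr
        _ ≤ 16 * W ^ 4 * (q * η) := h1'
        _ ≤ _ := by gcongr
    have h3 : β ^ 4 * ‖π (x ^ i) (e a) - e a‖ ≤ β ^ 4 * (2 ^ 15 * q * K ^ 4 * η) := by
      linarith
    exact le_of_mul_le_mul_left h3 (by positivity)
  have hdyn := dyn π f he N hmN Q q hq hQq δ _ hδ0 hη2 hd1 hd2 n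
    (fun j hj x hx => ih x (hmono j n hj hx)) hn (n + 1) le_rfl z hz
  have hP : ‖prj e (π z f - f)‖ ≤ 1 / 4 := by
    refine hdyn.trans ?_
    push_cast
    have h2 : ((n : ℝ) + 1) / n ≤ 2 := by
      rw [div_le_iff₀ hn0]; linarith
    calc ((n : ℝ) + 1) * (3 * q * (N * δ)) ≤
        (n + 1) * (3 * q * (N * (2 ^ 21 * (N + 1) * q * K ^ 4 * η / n))) := by gcongr
      _ = ((n + 1) / n) * (3 * q * N * (2 ^ 21 * (N + 1) * q * K ^ 4 * η)) := by ring
      _ ≤ 2 * (3 * q * N * (2 ^ 21 * (N + 1) * q * K ^ 4 * η)) := by gcongr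
      _ = 6 * q * N * (2 ^ 21 * (N + 1) * q * K ^ 4 * η) := by ring
      _ ≤ _ := hη3
  set b := π z f - f with hb
  have hR : ‖b - prj e b‖ ≤ 1 / 4 := by
    by_contra hcon
    push Not at hcon
    have h1Q : (1 : G) ∈ Q ^ (n + 1) := hmono 0 (n + 1) (by omega) (by simp)
    have hort : ∀ a, inner ℝ (e a) (b - prj e b) = 0 := fun a => inner_sub_prj he a b
    have h1 := lower_bound π f Y S hY hS φ hφ0 hφs b (b - prj e b) z hb
      (fun s hs => hφl z hz s ((hS s).1 hs))
      (fun s hs => by simpa using hφl 1 h1Q s ((hS s).1 hs)) (by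
        have h2 := inner_prj_left_zero (e := e) b _ hort
        have h3 : inner ℝ b (b - prj e b) = inner ℝ (b - prj e b) (b - prj e b) := by
          rw [inner_sub_left b, h2, sub_zero]
        rw [h3, real_inner_self_eq_norm_sq]) hcon
    have h2 := hsmall _ hort
    have h3 : 0 < β ^ 4 * ‖b - prj e b‖ ^ 2 := by
      have : 0 < ‖b - prj e b‖ := by linarith
      positivity
    simp only [hc] at h2
    linarith
  have : b = prj e b + (b - prj e b) := by abel
  rw [this]
  refine (norm_add_le _ _).trans ?_
  linarith

end coreA

lemma exists_net {G : Type*} [Group G] {ℓ : G → ℝ} (hℓ : IsLen ℓ) (B C R : Finset G) (r : ℝ)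
    (hr : 0 ≤ r) (hR : ∀ x ∈ R, ℓ x ≤ r / 2) (hC : ∀ x ∈ B, ∀ y ∈ R, x * y ∈ C) :
    ∃ F ⊆ B, (∀ y ∈ B, ∃ z ∈ F, ℓ (z⁻¹ * y) ≤ r) ∧ F.card * R.card ≤ C.card := by
  classical
  set P : Finset (Finset G) := B.powerset.filter
    (fun F => ∀ z ∈ F, ∀ z' ∈ F, z ≠ z' → r < ℓ (z⁻¹ * z')) with hP
  have hne : P.Nonempty := ⟨∅, by simp [hP]⟩
  obtain ⟨F, hF, hmax⟩ := Finset.exists_max_image P Finset.card hne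
  have hF' := hF
  simp only [hP, Finset.mem_filter, Finset.mem_powerset] at hF'
  obtain ⟨hFB, hsep⟩ := hF'
  refine ⟨F, hFB, ?_, ?_⟩
  · intro y hy
    by_contra hcon
    push Not at hcon
    have hyF : y ∉ F := by
      intro h
      have := hcon y h
      rw [inv_mul_cancel, hℓ.one] at this
      linarith
    have hin : insert y F ∈ P := by
      simp only [hP, Finset.mem_filter, Finset.mem_powerset]
      refine ⟨Finset.insert_subset hy hFB, ?_⟩
      intro z hz z' hz' hne
      rcases Finset.mem_insert.1 hz with rfl | hzF
      · rcases Finset.mem_insert.1 hz' with rfl | hz'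
        · exact absurd rfl hne
        · have := hcon z' hz'
          rw [← hℓ.inv, mul_inv_rev, inv_inv] at this
          exact this
      · rcases Finset.mem_insert.1 hz' with rfl | hz'
        · exact hcon z hzF
        · exact hsep z hzF z' hz' hne
    have := hmax _ hin
    rw [Finset.card_insert_of_notMem hyF] at this
    omega
  · rw [← Finset.card_product]
    refine Finset.card_le_card_of_injOn (fun p => p.1 * p.2) ?_ ?_
    · intro p hp
      rw [Finset.mem_coe, Finset.mem_product] at hp
      exact hC _ (hFB hp.1) _ hp.2
    · rintro ⟨a, b⟩ hab ⟨a', b'⟩ hab' h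
      rw [Finset.mem_coe, Finset.mem_product] at hab hab'
      simp only at *
      have haa : a = a' := by
        by_contra hne
        have h1 := hsep a hab.1 a' hab'.1 hne
        have h2 : a⁻¹ * a' = b * b'⁻¹ := by
          rw [eq_mul_inv_iff_mul_eq, mul_assoc, ← h]; simp
        rw [h2] at h1
        have h3 := hℓ.mul b b'⁻¹
        rw [hℓ.inv] at h3
        have := hR b hab.2
        have := hR b' hab'.2
        linarith
      subst haa
      simpa using h

lemma coreB {G : Type*} [Group G] {ℓ : G → ℝ} (hℓ : IsLen ℓ) (η : ℝ) (hη0 : 0 < η) (hη : η ≤ 1 / 8)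
    (B8 B1 R Qf : Finset G) (h8 : ∀ x, x ∈ B8 ↔ ℓ x ≤ 8) (h1 : ∀ x, x ∈ B1 ↔ ℓ x ≤ 1)
    (hR : ∀ x ∈ R, ℓ x ≤ η / 8) (M : ℕ) (hM : 1 ≤ M) (hR0 : 0 < R.card)
    (hRM : B8.card ≤ M * R.card)
    (hQ : ∀ x, (∀ y, ℓ y ≤ 4 → ℓ (y⁻¹ * x * y) ≤ η) → x ∈ Qf) :
    B1.card ≤ Qf.card * M ^ M := by
  classical
  set B4 := B8.filter (fun x => ℓ x ≤ 4) with hB4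
  set B5 := B8.filter (fun x => ℓ x ≤ 5) with hB5
  have h4 : ∀ x, x ∈ B4 ↔ ℓ x ≤ 4 := by
    intro x; simp only [hB4, Finset.mem_filter, h8]
    constructor
    · exact fun h => h.2
    · intro h; exact ⟨by linarith, h⟩
  have h5 : ∀ x, x ∈ B5 ↔ ℓ x ≤ 5 := by
    intro x; simp only [hB5, Finset.mem_filter, h8]
    constructor
    · exact fun h => h.2
    · intro h; exact ⟨by linarith, h⟩
  obtain ⟨F, hF4, hFn, hFc⟩ := exists_net hℓ B4 B8 R (η / 4) (by linarith)
    (fun x hx => (hR x hx).trans (by linarith)) (by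
      intro x hx y hy
      have h1 := (h4 x).1 hx
      have h2 := hR y hy
      have h3 := hℓ.mul x y
      rw [h8]; linarith)
  obtain ⟨F', hF5, hFn', hFc'⟩ := exists_net hℓ B5 B8 R (η / 4) (by linarith)
    (fun x hx => (hR x hx).trans (by linarith)) (by
      intro x hx y hy
      have h1 := (h5 x).1 hx
      have h2 := hR y hy
      have h3 := hℓ.mul x y
      rw [h8]; linarith)
  have hFM : F.card ≤ M := Nat.le_of_mul_le_mul_right (hFc.trans hRM) hR0
  have hFM' : F'.card ≤ M := Nat.le_of_mul_le_mul_right (hFc'.trans hRM) hR0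
  have hch : ∀ x : G, ∃ p : G, x ∈ B5 → p ∈ F' ∧ ℓ (p⁻¹ * x) ≤ η / 4 := by
    intro x
    by_cases hx : x ∈ B5
    · obtain ⟨p, hp⟩ := hFn' x hx
      exact ⟨p, fun _ => hp⟩
    · exact ⟨1, fun h => absurd h hx⟩
  choose near hnear using hch
  have hxz : ∀ x ∈ B1, ∀ z ∈ F, x * z ∈ B5 := by
    intro x hx z hz
    have h6 := (h1 x).1 hx
    have h7 := (h4 z).1 (hF4 hz)
    have h8 := hℓ.mul x z
    rw [h5]; linarith
  set cl : G → (F → G) := fun x z => near (x * z) with hcl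
  have himg : B1.image cl ⊆ Fintype.piFinset (fun _ : F => F') := by
    intro v hv
    obtain ⟨x, hx, rfl⟩ := Finset.mem_image.1 hv
    rw [Fintype.mem_piFinset]
    intro z
    exact (hnear _ (hxz x hx z z.2)).1
  have hic : (B1.image cl).card ≤ M ^ M := by
    refine (Finset.card_le_card himg).trans ?_
    rw [Fintype.card_piFinset, Finset.prod_const, Finset.card_univ, Fintype.card_coe]
    calc F'.card ^ F.card ≤ M ^ F.card := Nat.pow_le_pow_left hFM' _
      _ ≤ M ^ M := Nat.pow_le_pow_right hM hFM
  have hfib : ∀ v ∈ B1.image cl, (B1.filter (fun x => cl x = v)).card ≤ Qf.card := by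
    intro v hv
    obtain ⟨x, hx, rfl⟩ := Finset.mem_image.1 hv
    refine Finset.card_le_card_of_injOn (fun x' => x⁻¹ * x') ?_ ?_
    · intro x' hx'
      simp only [Finset.coe_filter, Set.mem_ofPred_eq] at hx'
      apply hQ
      intro y hy
      obtain ⟨z, hz, hzy⟩ := hFn y ((h4 y).2 hy)
      have h6 := (hnear _ (hxz x hx z hz)).2
      have h7 := (hnear _ (hxz x' hx'.1 z hz)).2
      have h9 : near (x' * z) = near (x * z) := congrFun hx'.2 ⟨z, hz⟩
      rw [h9] at h7
      set p := near (x * z) with hp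
      have h10 : y⁻¹ * (x⁻¹ * x') * y =
          ((z⁻¹ * y)⁻¹ * (p⁻¹ * (x * z))⁻¹) * ((p⁻¹ * (x' * z)) * (z⁻¹ * y)) := by group
      have h11 := hℓ.mul ((z⁻¹ * y)⁻¹ * (p⁻¹ * (x * z))⁻¹) ((p⁻¹ * (x' * z)) * (z⁻¹ * y))
      have h12 := hℓ.mul (z⁻¹ * y)⁻¹ (p⁻¹ * (x * z))⁻¹
      have h13 := hℓ.mul (p⁻¹ * (x' * z)) (z⁻¹ * y)
      rw [hℓ.inv, hℓ.inv] at h12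
      rw [h10]
      linarith
    · intro a _ b _ h
      simpa using h
  exact (Finset.card_le_mul_card_image B1 Qf.card hfib).trans (Nat.mul_le_mul_left _ hic)

set_option maxHeartbeats 1000000 in
/-- The core structural result. -/
theorem core (K : ℝ) (hK : 1 ≤ K) (q : ℕ) (hq : 1 ≤ q) : ∃ c : ℝ, 0 < c ∧
    ∀ (G : Type*) [Group G] (E : Type*) [NormedAddCommGroup E] [InnerProductSpace ℝ E]
      (π : G →* (E ≃ₗᵢ[ℝ] E)) (f : E),
      {x : G | ‖π x f - f‖ ≤ 8}.Finite → (∀ x : G, ‖π x f - f‖ ≤ 8 → x ^ q = 1) →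
      (∀ j : ℕ, ({x : G | ‖π x f - f‖ ≤ 8}.ncard : ℝ) ≤
        K ^ j * {x : G | ‖π x f - f‖ ≤ 8 / 2 ^ j}.ncard) →
      ∃ H : Subgroup G, (∀ x ∈ H, ‖π x f - f‖ ≤ 1) ∧
        c * ({x : G | ‖π x f - f‖ ≤ 8}.ncard : ℝ) ≤ ((H : Set G).ncard : ℝ) := by
  set L := K ^ 8 with hL
  have hL1 : 1 ≤ L := one_le_pow₀ hK
  obtain ⟨N, hN⟩ := exists_nat_ge (131072 * L ^ 4)
  have hN0 : (0 : ℝ) < N := lt_of_lt_of_le (by positivity) hN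
  have hq1 : (1 : ℝ) ≤ q := by exact_mod_cast hq
  set a2 : ℝ := N * (2 ^ 15 * q * L ^ 4) with ha2
  set a3 : ℝ := 6 * q * N * (2 ^ 21 * (N + 1) * q * L ^ 4) with ha3
  have ha2p : 0 < a2 := by positivity
  have ha3p : 0 < a3 := by positivity
  set η : ℝ := min (1 / 8) (min (1 / 2 / a2) (1 / 4 / a3)) with hη
  have hη0 : 0 < η := by
    refine lt_min (by norm_num) (lt_min ?_ ?_) <;> positivity
  have hη1 : η ≤ 1 / 8 := min_le_left _ _
  have hη2 : η ≤ 1 / 2 / a2 := (min_le_right _ _).trans (min_le_left _ _)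
  have hη3 : η ≤ 1 / 4 / a3 := (min_le_right _ _).trans (min_le_right _ _)
  rw [le_div_iff₀ ha2p] at hη2
  rw [le_div_iff₀ ha3p] at hη3
  obtain ⟨J, hJ⟩ := pow_unbounded_of_one_lt (64 / η) (one_lt_two (α := ℝ))
  have hJ' : (8 : ℝ) / 2 ^ J ≤ η / 8 := by
    rw [div_lt_iff₀ hη0] at hJ
    rw [div_le_div_iff₀ (by positivity) (by norm_num)]
    linarith
  obtain ⟨M, hM⟩ := exists_nat_ge (K ^ J)
  have hM1 : 1 ≤ M := by
    have : (1 : ℝ) ≤ M := (one_le_pow₀ hK).trans hM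
    exact_mod_cast this
  refine ⟨1 / (K ^ 3 * M ^ M), by positivity, ?_⟩
  intro G _ E _ _ π f hfin hexp hdbl
  classical
  have hℓ := len_rep π f
  have hfin' : ∀ t : ℝ, t ≤ 8 → {x : G | ‖π x f - f‖ ≤ t}.Finite :=
    fun t ht => hfin.subset fun x hx => le_trans hx ht
  set B : ℝ → Finset G := fun t => if h : t ≤ 8 then (hfin' t h).toFinset else ∅ with hB
  have hmem : ∀ t, t ≤ 8 → ∀ x, x ∈ B t ↔ ‖π x f - f‖ ≤ t := by
    intro t ht x
    simp [hB, ht]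
  have hcard : ∀ t, t ≤ 8 → {x : G | ‖π x f - f‖ ≤ t}.ncard = (B t).card := by
    intro t ht
    rw [← Set.ncard_coe_finset]
    congr 1
    ext x
    simp [hmem t ht]
  clear_value B
  have h1B : ∀ t, 0 ≤ t → t ≤ 8 → (1 : G) ∈ B t := by
    intro t ht ht8
    rw [hmem t ht8, map_one]
    simpa using ht
  have hdbl' : ∀ j : ℕ, ((B 8).card : ℝ) ≤ K ^ j * (B (8 / 2 ^ j)).card := by
    intro j
    have := hdbl j
    rwa [hcard 8 le_rfl, hcard _ (div_le_self (by norm_num) (one_le_pow₀ (by norm_num)))] at this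
  set Q : Set G := {x | ∀ y, ‖π y f - f‖ ≤ 4 → ‖π (y⁻¹ * x * y) f - f‖ ≤ η} with hQ
  have hQη : ∀ x ∈ Q, ‖π x f - f‖ ≤ η := by
    intro x hx
    have := hx 1 (by simp)
    simpa using this
  have hQ1 : (1 : G) ∈ Q := by
    intro y _
    simp [hη0.le]
  have hQi : ∀ x ∈ Q, x⁻¹ ∈ Q := by
    intro x hx y hy
    have h1 := hx y hy
    have h2 := hℓ.inv (y⁻¹ * x * y)
    rw [show (y⁻¹ * x * y)⁻¹ = y⁻¹ * x⁻¹ * y by group] at h2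
    rw [h2]; exact h1
  have hA := coreA π f L η q N hq hL1 hN hη0 hη1 (by rw [ha2] at hη2; linarith)
    (by rw [ha3] at hη3; linarith) (B 4) (B (1 / 8)) (B (1 / 32)) (hmem 4 (by norm_num))
    (hmem _ (by norm_num)) (hmem _ (by norm_num)) (by
      have h1 := hdbl' 8
      rw [show (8 : ℝ) / 2 ^ 8 = 1 / 32 by norm_num] at h1
      refine le_trans ?_ h1
      have : B 4 ⊆ B 8 := fun x hx => by
        rw [hmem _ le_rfl]; rw [hmem _ (by norm_num)] at hx; linarith
      exact_mod_cast Finset.card_le_card this) Q hQ1 hQi (fun x hx y hy => hx y hy)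
    (fun x hx => hexp x ((hQη x hx).trans (by linarith)))
  have hcl : ∀ x ∈ Subgroup.closure Q, ∃ j : ℕ, x ∈ Q ^ j := by
    intro x hx
    induction hx using Subgroup.closure_induction with
    | mem x hx => exact ⟨1, by simpa using hx⟩
    | one => exact ⟨0, by simp⟩
    | mul x y _ _ hx hy =>
      obtain ⟨i, hi⟩ := hx
      obtain ⟨j, hj⟩ := hy
      exact ⟨i + j, by rw [pow_add]; exact Set.mul_mem_mul hi hj⟩
    | inv x _ hx =>
      obtain ⟨i, hi⟩ := hx
      refine ⟨i, ?_⟩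
      have hQQ : Q⁻¹ = Q := by
        ext x
        rw [Set.mem_inv]
        exact ⟨fun h => by simpa using hQi _ h, fun h => hQi _ h⟩
      rw [← hQQ, inv_pow] at hi
      simpa using hi
  have hH1 : ∀ x ∈ Subgroup.closure Q, ‖π x f - f‖ ≤ 1 := by
    intro x hx
    obtain ⟨j, hj⟩ := hcl x hx
    exact hA j x hj
  refine ⟨Subgroup.closure Q, hH1, ?_⟩
  set Qf := (B 8).filter (fun x => x ∈ Q) with hQf
  have hQfc : (Qf.card : ℝ) ≤ ((Subgroup.closure Q : Set G).ncard : ℝ) := by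
    rw [← Set.ncard_coe_finset]
    have : (Subgroup.closure Q : Set G).Finite := hfin.subset fun x hx =>
      (hH1 x hx).trans (by norm_num)
    have h2 := Set.ncard_le_ncard (s := (Qf : Set G)) (t := (Subgroup.closure Q : Set G)) (by
      intro x hx
      simp only [hQf, Finset.coe_filter, Set.mem_ofPred_eq] at hx
      exact Subgroup.subset_closure hx.2) this
    exact_mod_cast h2
  have h88 : (8 : ℝ) / 2 ^ J ≤ 8 := div_le_self (by norm_num) (one_le_pow₀ (by norm_num))
  have hcB := coreB hℓ η hη0 hη1 (B 8) (B 1) (B (8 / 2 ^ J)) Qf (hmem 8 le_rfl)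
    (hmem 1 (by norm_num)) (fun x hx => ((hmem _ h88 x).1 hx).trans hJ') M hM1
    (Finset.card_pos.2 ⟨1, h1B _ (by positivity) h88⟩) (by
      have h1 := hdbl' J
      have h2 : ((B 8).card : ℝ) ≤ M * (B (8 / 2 ^ J)).card := h1.trans (by gcongr)
      exact_mod_cast h2) (by
      intro x hx
      have hx' : x ∈ Q := hx
      simp only [hQf, Finset.mem_filter, hmem 8 le_rfl]
      exact ⟨(hQη x hx').trans (by linarith), hx'⟩)
  have hcB' : ((B 1).card : ℝ) ≤ Qf.card * M ^ M := by exact_mod_cast hcB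
  have h3 := hdbl' 3
  rw [show (8 : ℝ) / 2 ^ 3 = 1 by norm_num] at h3
  rw [hcard 8 le_rfl, one_div, inv_mul_le_iff₀ (by positivity)]
  calc ((B 8).card : ℝ) ≤ K ^ 3 * (B 1).card := h3
    _ ≤ K ^ 3 * (Qf.card * M ^ M) := by gcongr
    _ = K ^ 3 * M ^ M * Qf.card := by ring
    _ ≤ _ := by gcongr

lemma pack1 {α ι : Type*} [DecidableEq α] (Ω : Finset α) (X : Finset ι) (S : ι → Finset α)
    (r m : ℕ) (hsep : ∀ x ∈ X, ∀ y ∈ X, x ≠ y → r ≤ (Ω ∩ (S x ∆ S y)).card)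
    (hm : X.card ^ 2 * (Ω.card - r) ^ m < Ω.card ^ m) :
    ∃ T : Finset α, T.card ≤ m ∧ Set.InjOn (fun x => S x ∩ T) X := by
  classical
  set P := Fintype.piFinset (fun _ : Fin m => Ω) with hP
  have hPc : P.card = Ω.card ^ m := by
    rw [hP, Fintype.card_piFinset, Finset.prod_const, Finset.card_univ, Fintype.card_fin]
  set Bad := X.offDiag.biUnion (fun p => Fintype.piFinset (fun _ : Fin m => Ω \ (S p.1 ∆ S p.2)))
    with hBad
  have hBc : Bad.card ≤ X.card ^ 2 * (Ω.card - r) ^ m := by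
    calc Bad.card ≤ X.offDiag.card * (Ω.card - r) ^ m := by
          refine Finset.card_biUnion_le_card_mul _ _ _ ?_
          rintro ⟨x, y⟩ hxy
          rw [Finset.mem_offDiag] at hxy
          rw [Fintype.card_piFinset, Finset.prod_const, Finset.card_univ, Fintype.card_fin]
          apply Nat.pow_le_pow_left
          have h1 := hsep x hxy.1 y hxy.2.1 hxy.2.2
          have h2 := Finset.card_sdiff_add_card_inter Ω (S x ∆ S y)
          simp only
          omega
      _ ≤ _ := by
          gcongr
          rw [Finset.offDiag_card, pow_two]
          exact Nat.sub_le _ _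
  obtain ⟨t, ht, htB⟩ := Finset.exists_mem_notMem_of_card_lt_card (s := Bad) (t := P)
    (by rw [hPc]; exact lt_of_le_of_lt hBc hm)
  refine ⟨Finset.univ.image t, ?_, ?_⟩
  · exact Finset.card_image_le.trans (by simp)
  · intro x hx y hy hxy
    by_contra hne
    apply htB
    rw [hBad, Finset.mem_biUnion]
    refine ⟨(x, y), Finset.mem_offDiag.2 ⟨hx, hy, hne⟩, ?_⟩
    rw [Fintype.mem_piFinset]
    intro i
    rw [Finset.mem_sdiff]
    refine ⟨Fintype.mem_piFinset.1 ht i, ?_⟩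
    have h1 : t i ∈ S x ∩ Finset.univ.image t ↔ t i ∈ S y ∩ Finset.univ.image t := by
      simp only at hxy
      rw [hxy]
    rw [Finset.mem_inter, Finset.mem_inter] at h1
    have h2 : t i ∈ Finset.univ.image t := Finset.mem_image_of_mem _ (Finset.mem_univ i)
    rw [Finset.mem_symmDiff]
    tauto

lemma pack2 {α ι : Type*} [DecidableEq α] (X : Finset ι) (S : ι → Finset α) (d m : ℕ)
    (hd : ∀ U : Finset α, (∀ V ⊆ U, ∃ x ∈ X, U ∩ S x = V) → U.card ≤ d)
    (T : Finset α) (hT : T.card ≤ m) (hinj : Set.InjOn (fun x => S x ∩ T) X) :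
    X.card ≤ (m + 1) ^ d := by
  classical
  set 𝒜 := X.image (fun x => S x ∩ T) with h𝒜
  have h1 : X.card = 𝒜.card := (Finset.card_image_of_injOn hinj).symm
  have h2 : 𝒜.shatterer ⊆ (Finset.range (d + 1)).biUnion (fun i => T.powersetCard i) := by
    intro U hU
    rw [Finset.mem_shatterer] at hU
    have hUT : U ⊆ T := by
      obtain ⟨u, hu, huU⟩ := hU (Finset.Subset.refl U)
      obtain ⟨x, _, rfl⟩ := Finset.mem_image.1 hu
      intro y hy
      rw [← huU] at hy
      simp at hy
      exact hy.2.2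
    have hUd : U.card ≤ d := by
      apply hd
      intro V hV
      obtain ⟨u, hu, huU⟩ := hU hV
      obtain ⟨x, hx, rfl⟩ := Finset.mem_image.1 hu
      refine ⟨x, hx, ?_⟩
      rw [← huU, Finset.inter_comm (S x) T, ← Finset.inter_assoc, Finset.inter_eq_left.2 hUT]
    rw [Finset.mem_biUnion]
    exact ⟨U.card, Finset.mem_range.2 (by omega), Finset.mem_powersetCard.2 ⟨hUT, rfl⟩⟩
  calc X.card = 𝒜.card := h1
    _ ≤ 𝒜.shatterer.card := Finset.card_le_card_shatterer 𝒜
    _ ≤ ∑ i ∈ Finset.range (d + 1), (T.powersetCard i).card :=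
        (Finset.card_le_card h2).trans Finset.card_biUnion_le
    _ ≤ ∑ i ∈ Finset.range (d + 1), m ^ i * 1 ^ (d - i) * d.choose i := by
        refine Finset.sum_le_sum fun i hi => ?_
        rw [Finset.card_powersetCard, one_pow, mul_one]
        have h3 : T.card.choose i ≤ m ^ i :=
          (Nat.choose_le_pow _ _).trans (Nat.pow_le_pow_left hT _)
        have h4 : 1 ≤ d.choose i := Nat.choose_pos (by rw [Finset.mem_range] at hi; omega)
        nlinarith [Nat.zero_le (m ^ i)]
    _ = (m + 1) ^ d := by rw [add_pow]; simp

lemma packing {α ι : Type*} [DecidableEq α] (Ω : Finset α) (X : Finset ι) (S : ι → Finset α)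
    (d : ℕ) (r : ℕ) (R : ℝ) (hR : 1 ≤ R) (hΩ0 : 0 < Ω.card) (hΩ : (Ω.card : ℝ) ≤ R * r)
    (hrΩ : r ≤ Ω.card)
    (hsep : ∀ x ∈ X, ∀ y ∈ X, x ≠ y → r ≤ (Ω ∩ (S x ∆ S y)).card)
    (hd : ∀ U : Finset α, (∀ V ⊆ U, ∃ x ∈ X, U ∩ S x = V) → U.card ≤ d) :
    (X.card : ℝ) ≤ ((4 * d + 6) * R) ^ (2 * d) := by
  rcases X.eq_empty_or_nonempty with rfl | hne
  · simp; positivity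
  set n : ℝ := (X.card : ℝ) with hn
  have hn1 : 1 ≤ n := by
    rw [hn]; exact_mod_cast hne.card_pos
  have hn0 : 0 < n := by linarith
  have hlog : 0 ≤ Real.log n := Real.log_nonneg hn1
  set m := ⌊R * (2 * Real.log n)⌋₊ + 1 with hm
  have hm1 : R * (2 * Real.log n) < m := by
    rw [hm]; push_cast; exact Nat.lt_floor_add_one _
  have hm2 : (m : ℝ) ≤ R * (2 * Real.log n) + 1 := by
    rw [hm]; push_cast
    have := Nat.floor_le (a := R * (2 * Real.log n)) (by positivity)
    linarith
  have hΩ0' : (0 : ℝ) < Ω.card := by exact_mod_cast hΩ0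
  have hcount : X.card ^ 2 * (Ω.card - r) ^ m < Ω.card ^ m := by
    have : (n : ℝ) ^ 2 * ((Ω.card : ℝ) - r) ^ m < (Ω.card : ℝ) ^ m := by
      have h1 : (Ω.card : ℝ) - r ≤ Ω.card * Real.exp (-(1 / R)) := by
        have h2 := Real.add_one_le_exp (-(1 / R))
        have h3 : (Ω.card : ℝ) * (1 / R) ≤ r := by
          rw [mul_one_div, div_le_iff₀ (by linarith)]; linarith
        nlinarith
      have h0 : (0 : ℝ) ≤ (Ω.card : ℝ) - r := by
        rw [sub_nonneg]; exact_mod_cast hrΩ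
      have h4 : ((Ω.card : ℝ) - r) ^ m ≤ (Ω.card : ℝ) ^ m * Real.exp (-(1 / R)) ^ m := by
        rw [← mul_pow]; gcongr
      have h5 : n ^ 2 * Real.exp (-(1 / R)) ^ m < 1 := by
        rw [← Real.exp_nat_mul, ← Real.exp_log hn0, ← Real.exp_nat_mul, ← Real.exp_add,
          Real.exp_lt_one_iff]
        have : 2 * Real.log n < m * (1 / R) := by
          rw [mul_one_div, lt_div_iff₀ (by linarith)]; linarith
        push_cast
        linarith
      calc _ ≤ n ^ 2 * ((Ω.card : ℝ) ^ m * Real.exp (-(1 / R)) ^ m) := by gcongr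
        _ = (Ω.card : ℝ) ^ m * (n ^ 2 * Real.exp (-(1 / R)) ^ m) := by ring
        _ < (Ω.card : ℝ) ^ m * 1 := by gcongr
        _ = _ := mul_one _
    rw [← Nat.cast_sub hrΩ, hn] at this
    exact_mod_cast this
  obtain ⟨T, hT, hinj⟩ := pack1 Ω X S r m hsep hcount
  have hX := pack2 X S d m hd T hT hinj
  have hX' : n ≤ ((m : ℝ) + 1) ^ d := by rw [hn]; exact_mod_cast hX
  set s : ℝ := 1 / (2 * d + 2) with hs
  have hs0 : 0 < s := by positivity
  set y : ℝ := n ^ s with hy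
  have hy1 : 1 ≤ y := Real.one_le_rpow hn1 hs0.le
  have hyn : y ^ (2 * d + 2) = n := by
    rw [hy, ← Real.rpow_natCast, ← Real.rpow_mul hn0.le, hs]
    push_cast
    rw [one_div, inv_mul_cancel₀ (by positivity), Real.rpow_one]
  have hlogy : Real.log n ≤ y * (2 * d + 2) := by
    have := Real.log_le_rpow_div hn0.le hs0
    rw [← hy, hs, div_div_eq_mul_div, div_one] at this
    exact this
  have hd0 : (0 : ℝ) ≤ d := by positivity
  have hm3 : (m : ℝ) + 1 ≤ (4 * d + 6) * R * y := by
    have h1 : R * (2 * Real.log n) ≤ R * (2 * (y * (2 * d + 2))) := by gcongr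
    have h2 : 1 ≤ R * y := one_le_mul_of_one_le_of_one_le hR hy1
    nlinarith
  have h1 : n ≤ ((4 * d + 6) * R * y) ^ d := hX'.trans (by gcongr)
  have h2 : n ^ 2 ≤ ((4 * d + 6) * R) ^ (2 * d) * n := by
    calc n ^ 2 ≤ (((4 * d + 6) * R * y) ^ d) ^ 2 := by gcongr
      _ = ((4 * d + 6) * R) ^ (2 * d) * y ^ (2 * d) := by
          rw [mul_pow _ y, mul_pow _ (y ^ d), ← pow_mul, ← pow_mul]
          ring_nf
      _ ≤ ((4 * d + 6) * R) ^ (2 * d) * y ^ (2 * d + 2) := by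
          gcongr
          omega
      _ = _ := by rw [hyn]
  rw [pow_two] at h2
  exact le_of_mul_le_mul_right h2 hn0

section rep
variable {G : Type*} [Group G]

lemma two_toReal_pos : 0 < (2 : ENNReal).toReal := by norm_num

/-- Right translation of square summable functions. -/
noncomputable def rtFun (x : G) (f : lp (fun _ : G => ℝ) 2) : lp (fun _ : G => ℝ) 2 :=
  ⟨fun g => f (g * x), by
    apply memℓp_gen
    have h := (memℓp_gen_iff two_toReal_pos).1 (lp.memℓp f)
    exact (Equiv.mulRight x).summable_iff.2 h⟩

lemma rtFun_apply (x : G) (f : lp (fun _ : G => ℝ) 2) (g : G) : rtFun x f g = f (g * x) := rfl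

/-- Right translation as a linear isometric equivalence. -/
noncomputable def rtIso (x : G) : lp (fun _ : G => ℝ) 2 ≃ₗᵢ[ℝ] lp (fun _ : G => ℝ) 2 where
  toFun := rtFun x
  invFun := rtFun x⁻¹
  map_add' f h := by ext g; rfl
  map_smul' c f := by ext g; rfl
  left_inv f := by ext g; simp [rtFun_apply]
  right_inv f := by ext g; simp [rtFun_apply]
  norm_map' f := by
    have h1 := lp.norm_rpow_eq_tsum two_toReal_pos (rtFun x f)
    have h2 := lp.norm_rpow_eq_tsum two_toReal_pos f
    have h3 := (Equiv.mulRight x).tsum_eq (fun g => ‖f g‖ ^ (2 : ENNReal).toReal)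
    have h4 : ‖rtFun x f‖ ^ (2 : ENNReal).toReal = ‖f‖ ^ (2 : ENNReal).toReal := by
      rw [h1, h2, ← h3]; rfl
    exact (Real.rpow_left_inj (norm_nonneg _) (norm_nonneg _) two_toReal_pos.ne').1 h4

/-- The right regular representation. -/
noncomputable def rtRep : G →* (lp (fun _ : G => ℝ) 2 ≃ₗᵢ[ℝ] lp (fun _ : G => ℝ) 2) where
  toFun := rtIso
  map_one' := by
    ext f g
    change f (g * 1) = f g
    rw [mul_one]
  map_mul' x y := by
    ext f g
    change f (g * (x * y)) = f (g * x * y)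
    rw [mul_assoc]

/-- Scaled indicator function of a finite set. -/
noncomputable def indL (A : Set G) (hA : A.Finite) (c : ℝ) : lp (fun _ : G => ℝ) 2 :=
  ⟨A.indicator (fun _ => c), by
    apply memℓp_gen
    refine summable_of_hasFiniteSupport (hA.subset ?_)
    intro g hg
    by_contra hgA
    apply hg
    simp [hgA]⟩

lemma symmDiff_inv (A : Set G) (x : G) :
    ((A * {x⁻¹}) ∆ A).ncard = ((A * {x}) ∆ A).ncard := by
  have : (A * {x}) ∆ A = (fun g => g * x) '' ((A * {x⁻¹}) ∆ A) := by
    rw [Set.image_symmDiff (mul_left_injective x), symmDiff_comm]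
    congr 1
    · ext g; simp
    · ext g; simp
  rw [this, Set.ncard_image_of_injective _ (mul_left_injective x)]

lemma norm_rtRep (A : Set G) (hA : A.Finite) (c : ℝ) (x : G) :
    ‖rtRep x (indL A hA c) - indL A hA c‖ ^ 2 = c ^ 2 * ((A * {x}) ∆ A).ncard := by
  classical
  have h1 := lp.norm_rpow_eq_tsum two_toReal_pos (rtRep x (indL A hA c) - indL A hA c)
  have hfin : ((A * {x⁻¹}) ∆ A).Finite := (hA.mul (Set.finite_singleton _)).symmDiff hA
  have h2 : ∀ g, ‖(rtRep x (indL A hA c) - indL A hA c : lp (fun _ : G => ℝ) 2) g‖ ^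
      (2 : ENNReal).toReal = ((A * {x⁻¹}) ∆ A).indicator (fun _ => c ^ 2) g := by
    intro g
    have h3 : (rtRep x (indL A hA c) - indL A hA c : lp (fun _ : G => ℝ) 2) g =
      A.indicator (fun _ => c) (g * x) - A.indicator (fun _ => c) g := rfl
    have h4 : g ∈ A * {x⁻¹} ↔ g * x ∈ A := by simp
    rw [h3]
    by_cases ha : g * x ∈ A <;> by_cases hb : g ∈ A <;>
      simp [Set.indicator, Set.mem_symmDiff, ha, hb]
  simp_rw [h2] at h1
  have h5 : ∑' g, ((A * {x⁻¹}) ∆ A).indicator (fun _ => c ^ 2) g =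
      ((A * {x⁻¹}) ∆ A).ncard * c ^ 2 := by
    rw [tsum_eq_sum (s := hfin.toFinset)]
    · rw [Finset.sum_congr rfl (g := fun _ => c ^ 2)]
      · rw [Finset.sum_const, nsmul_eq_mul, Set.ncard_eq_toFinset_card _ hfin]
      · intro g hg
        rw [Set.Finite.mem_toFinset] at hg
        exact Set.indicator_of_mem hg _
    · intro g hg
      rw [Set.Finite.mem_toFinset] at hg
      exact Set.indicator_of_notMem hg _
  rw [h5, symmDiff_inv] at h1
  have h6 : (2 : ENNReal).toReal = ((2 : ℕ) : ℝ) := by norm_num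
  rw [h6, Real.rpow_natCast] at h1
  rw [h1]; ring
end rep

lemma exists_max_sep {α : Type*} (B : Finset α) (rel : α → α → Prop)
    (hrefl : ∀ x, rel x x) (hsymm : ∀ x y, rel x y → rel y x) :
    ∃ F ⊆ B, (∀ y ∈ B, ∃ z ∈ F, rel z y) ∧ (∀ z ∈ F, ∀ z' ∈ F, z ≠ z' → ¬ rel z z') := by
  classical
  set P : Finset (Finset α) := B.powerset.filter
    (fun F => ∀ z ∈ F, ∀ z' ∈ F, z ≠ z' → ¬ rel z z') with hP
  have hne : P.Nonempty := ⟨∅, by simp [hP]⟩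
  obtain ⟨F, hF, hmax⟩ := Finset.exists_max_image P Finset.card hne
  have hF' := hF
  simp only [hP, Finset.mem_filter, Finset.mem_powerset] at hF'
  obtain ⟨hFB, hsep⟩ := hF'
  refine ⟨F, hFB, ?_, hsep⟩
  intro y hy
  by_contra hcon
  push Not at hcon
  have hyF : y ∉ F := fun h => hcon y h (hrefl y)
  have hin : insert y F ∈ P := by
    simp only [hP, Finset.mem_filter, Finset.mem_powerset]
    refine ⟨Finset.insert_subset hy hFB, ?_⟩
    intro z hz z' hz' hne
    rcases Finset.mem_insert.1 hz with rfl | hzF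
    · rcases Finset.mem_insert.1 hz' with rfl | hz'
      · exact absurd rfl hne
      · exact fun h => hcon z' hz' (hsymm _ _ h)
    · rcases Finset.mem_insert.1 hz' with rfl | hz'
      · exact hcon z hzF
      · exact hsep z hzF z' hz' hne
  have := hmax _ hin
  rw [Finset.card_insert_of_notMem hyF] at this
  omega

section grp
variable {G : Type*} [Group G]

lemma ncard_mul_singleton (A : Set G) (x : G) : (A * {x}).ncard = A.ncard := by
  rw [Set.mul_singleton, Set.ncard_image_of_injective _ (mul_left_injective x)]

lemma stR_subset (A : Set G) (hA : A.Finite) (hne : A.Nonempty) (δ : ℝ) (hδ : δ < 2) :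
    stR A δ ⊆ A⁻¹ * A := by
  intro x hx
  by_contra hcon
  have hdis : Disjoint (A * {x}) A := by
    rw [Set.disjoint_left]
    rintro _ ⟨a, ha, y, hy, rfl⟩ hb
    rw [Set.mem_singleton_iff] at hy
    subst hy
    apply hcon
    exact ⟨a⁻¹, by simpa using ha, a * y, hb, by simp⟩
  have h1 : ((A * {x}) ∆ A).ncard = 2 * A.ncard := by
    rw [hdis.symmDiff_eq_sup]
    change (A * {x} ∪ A).ncard = _
    rw [Set.ncard_union_eq hdis (hA.mul (Set.finite_singleton _)) hA, ncard_mul_singleton]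
    ring
  have h2 : (((A * {x}) ∆ A).ncard : ℝ) ≤ δ * A.ncard := hx
  rw [h1] at h2
  push_cast at h2
  have h3 : (0 : ℝ) < A.ncard := by
    exact_mod_cast (Set.ncard_pos hA).2 hne
  nlinarith

lemma stR_finite (A : Set G) (hA : A.Finite) (hne : A.Nonempty) (δ : ℝ) (hδ : δ < 2) :
    (stR A δ).Finite := (hA.inv.mul hA).subset (stR_subset A hA hne δ hδ)

lemma triple_bound (A : Set G) (hA : A.Finite) (k : ℝ)
    (hk : ((A ^ 3).ncard : ℝ) ≤ k * A.ncard) :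
    ((A * A⁻¹ * A).ncard : ℝ) ≤ k ^ 3 * A.ncard := by
  classical
  obtain ⟨S, rfl⟩ := hA.exists_finset_coe
  have h := Finset.small_alternating_pow_of_small_tripling (A := S) (K := k) (m := 3) le_rfl (by
    rw [← Finset.coe_pow, Set.ncard_coe_finset, Set.ncard_coe_finset] at hk
    exact hk) ![1, -1, 1] (by intro i; fin_cases i <;> simp)
  have h2 : ((List.finRange 3).map fun i => S ^ ((![1, -1, 1] : Fin 3 → ℤ) i)).prod
      = S * S⁻¹ * S := by
    simp [List.finRange_succ, mul_assoc]
  rw [h2] at h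
  rw [← Finset.coe_inv, ← Finset.coe_mul, ← Finset.coe_mul, Set.ncard_coe_finset,
    Set.ncard_coe_finset]
  simpa using h

lemma symmDiff_translate (A : Set G) (y z : G) :
    ((A * {y * z⁻¹}) ∆ A).ncard = ((A * {y}) ∆ (A * {z})).ncard := by
  have : (A * {y}) ∆ (A * {z}) = (fun g => g * z) '' ((A * {y * z⁻¹}) ∆ A) := by
    rw [Set.image_symmDiff (mul_left_injective z)]
    congr 1
    · ext g; simp [mul_assoc]
    · ext g; simp
  rw [this, Set.ncard_image_of_injective _ (mul_left_injective z)]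

lemma stR_lower (A : Set G) (hA : A.Finite) (hne : A.Nonempty) (d : ℕ)
    (hd : vcDim (rightFam A A) = (d : ℕ∞)) (k : ℝ) (hk : ((A * A).ncard : ℝ) ≤ k * A.ncard)
    (hk1 : 1 ≤ k) (δ : ℝ) (hδ0 : 0 < δ) (hδ1 : δ < 1) :
    (A.ncard : ℝ) ≤ ((4 * d + 6) * (k / δ)) ^ (2 * d) * (stR A δ).ncard := by
  classical
  obtain ⟨S, rfl⟩ := hA.exists_finset_coe
  rw [Finset.coe_nonempty] at hne
  have hAc : ∀ x : G, ((S : Set G) * {x}) = ((S * {x} : Finset G) : Set G) := by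
    intro x; push_cast; rfl
  have hsd : ∀ x y : G, (((S : Set G) * {x}) ∆ ((S : Set G) * {y})).ncard =
      ((S * {x}) ∆ (S * {y})).card := by
    intro x y
    rw [hAc, hAc, ← Finset.coe_symmDiff, Set.ncard_coe_finset]
  have hstf := stR_finite (S : Set G) hA (by simpa using hne) δ (by linarith)
  rw [← Finset.coe_mul, Set.ncard_coe_finset, Set.ncard_coe_finset] at hk
  rw [Set.ncard_coe_finset, Set.ncard_eq_toFinset_card _ hstf]
  have hS0 : 0 < S.card := hne.card_pos
  have hS0' : (0 : ℝ) < S.card := by exact_mod_cast hS0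
  obtain ⟨X, hXS, hcov, hsep⟩ := exists_max_sep S
    (fun z y => (((S * {z}) ∆ (S * {y})).card : ℝ) ≤ δ * S.card)
    (by intro x; simp; positivity) (by intro x y h; rwa [symmDiff_comm])
  have hcard : S.card ≤ X.card * hstf.toFinset.card := by
    have hsub : S ⊆ X.biUnion (fun z => hstf.toFinset.image (fun g => g * z)) := by
      intro y hy
      obtain ⟨z, hz, hzy⟩ := hcov y hy
      rw [Finset.mem_biUnion]
      refine ⟨z, hz, Finset.mem_image.2 ⟨y * z⁻¹, ?_, by simp⟩⟩
      rw [Set.Finite.mem_toFinset]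
      change ((((S : Set G) * {y * z⁻¹}) ∆ (S : Set G)).ncard : ℝ) ≤ δ * (S : Set G).ncard
      rw [symmDiff_translate, symmDiff_comm, hsd, Set.ncard_coe_finset]
      exact hzy
    exact (Finset.card_le_card hsub).trans
      (Finset.card_biUnion_le_card_mul _ _ _ fun z _ => Finset.card_image_le)
  have hX := packing (S * S) X (fun x => S * {x}) d ⌈δ * S.card⌉₊ (k / δ)
    (by rw [le_div_iff₀ hδ0]; linarith) (Finset.card_pos.2 (hne.mul hne)) (by
      refine hk.trans ?_
      rw [div_mul_eq_mul_div, le_div_iff₀ hδ0, mul_assoc]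
      gcongr
      rw [mul_comm]
      exact Nat.le_ceil _) (by
      rw [Nat.ceil_le]
      have h1 : S.card ≤ (S * S).card := Finset.card_le_card_mul_left hne
      have h2 : (S.card : ℝ) ≤ (S * S).card := by exact_mod_cast h1
      nlinarith) (by
      intro x hx y hy hxy
      have h1 := hsep x hx y hy hxy
      push Not at h1
      have h2 : (S * S) ∩ ((S * {x}) ∆ (S * {y})) = (S * {x}) ∆ (S * {y}) := by
        rw [Finset.inter_eq_right]
        refine (Finset.symmDiff_subset_union).trans (Finset.union_subset ?_ ?_)
        · exact Finset.mul_subset_mul_left (by simpa using hXS hx)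
        · exact Finset.mul_subset_mul_left (by simpa using hXS hy)
      rw [h2, Nat.ceil_le]
      exact h1.le) (by
      intro U hU
      have h1 : Shatters (rightFam (S : Set G) S) (U : Set G) := by
        intro T hT
        obtain ⟨V, rfl⟩ := (U.finite_toSet.subset hT).exists_finset_coe
        obtain ⟨x, hx, hxV⟩ := hU V (by exact_mod_cast hT)
        refine ⟨(S : Set G) * {x}, ⟨x, hXS hx, rfl⟩, ?_⟩
        rw [hAc, ← Finset.coe_inter, hxV]
      have h2 : (U.card : ℕ∞) ≤ vcDim (rightFam (S : Set G) S) :=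
        le_iSup₂ (f := fun (U : Finset G) (_ : Shatters (rightFam (S : Set G) S) ↑U) =>
          (U.card : ℕ∞)) U h1
      rw [hd] at h2
      exact_mod_cast h2)
  have h3 : (S.card : ℝ) ≤ X.card * hstf.toFinset.card := by exact_mod_cast hcard
  exact h3.trans (by gcongr)

lemma one_mem_stR (A : Set G) (δ : ℝ) (hδ : 0 ≤ δ) : (1 : G) ∈ stR A δ := by
  change (((A * {1}) ∆ A).ncard : ℝ) ≤ _
  rw [Set.singleton_one, mul_one, symmDiff_self]
  simp; positivity
end grp

lemma ball_iff {G : Type*} [Group G] (A : Set G) (hA : A.Finite) (hne : A.Nonempty) (δ : ℝ)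
    (hδ : 0 < δ) (j : ℕ) (x : G) :
    ‖rtRep x (indL A hA (8 / Real.sqrt (δ * A.ncard))) -
      indL A hA (8 / Real.sqrt (δ * A.ncard))‖ ≤ 8 / 2 ^ j ↔ x ∈ stR A (δ / 4 ^ j) := by
  have h3 : (0 : ℝ) < A.ncard := by
    exact_mod_cast (Set.ncard_pos hA).2 hne
  have h1 := norm_rtRep A hA (8 / Real.sqrt (δ * A.ncard)) x
  rw [← sq_le_sq₀ (norm_nonneg _) (by positivity), h1, div_pow, div_pow,
    Real.sq_sqrt (by positivity)]
  have h4 : ((2 : ℝ) ^ j) ^ 2 = 4 ^ j := by rw [← pow_mul, mul_comm, pow_mul]; norm_num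
  rw [h4]
  change _ ↔ (((A * {x}) ∆ A).ncard : ℝ) ≤ δ / 4 ^ j * A.ncard
  have h5 : (0 : ℝ) < 4 ^ j := by positivity
  rw [div_mul_eq_mul_div, div_mul_eq_mul_div, div_le_div_iff₀ (by positivity) h5,
    le_div_iff₀ h5]
  constructor <;> intro h <;> nlinarith

lemma stR_mono {G : Type*} [Group G] (A : Set G) {δ ε : ℝ} (h : δ ≤ ε) : stR A δ ⊆ stR A ε := by
  intro x hx
  change (((A * {x}) ∆ A).ncard : ℝ) ≤ ε * A.ncard
  have h1 : (((A * {x}) ∆ A).ncard : ℝ) ≤ δ * A.ncard := hx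
  exact h1.trans (by gcongr)

theorem exists_H (d q : ℕ) (hq : 1 ≤ q) : ∃ c0 : ℝ, 0 < c0 ∧
    ∀ (G : Type*) [Group G] (A : Set G), A.Finite → A.Nonempty →
      (∀ x ∈ A⁻¹ * A, x ^ q = 1) →
      vcDim (rightFam A A) = (d : ℕ∞) →
      ∀ k : ℝ, 1 ≤ k → ((A * A).ncard : ℝ) ≤ k * A.ncard →
        ((A⁻¹ * A).ncard : ℝ) ≤ k ^ 3 * A.ncard →
      ∀ ε : ℝ, 0 < ε → ε < 1 →
      ∃ H : Subgroup G, (H : Set G) ⊆ stR A ε ∧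
        (A.ncard : ℝ) ≤ c0 * (k / ε) ^ ((2 * d + 4) * (2 * d)) * (H : Set G).ncard := by
  have hK1 : (1 : ℝ) ≤ 4 ^ (2 * d + 1) := one_le_pow₀ (by norm_num)
  obtain ⟨c, hc, hcore⟩ := core (4 ^ (2 * d + 1)) hK1 q hq
  refine ⟨c⁻¹ * (4 * d + 6) ^ ((2 * d + 1) * (2 * d)), by positivity, ?_⟩
  intro G _ A hA hne hexp hd k hk1 hk2 hk3 ε hε0 hε1
  have hA0 : (0 : ℝ) < A.ncard := by exact_mod_cast (Set.ncard_pos hA).2 hne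
  set b : ℕ → ℕ := fun i => (stR A (ε / 4 ^ i)).ncard with hb
  set g : ℕ → ℕ := fun i => b i * (4 ^ (2 * d + 1)) ^ i with hg
  obtain ⟨i, hi⟩ : ∃ i, ∀ j, g i ≤ g j :=
    ⟨Function.argmin g, fun j => Function.argmin_le g j⟩
  set δ := ε / 4 ^ i with hδ
  have h4i : (1 : ℝ) ≤ 4 ^ i := one_le_pow₀ (by norm_num)
  have hδ0 : 0 < δ := by positivity
  have hδε : δ ≤ ε := div_le_self hε0.le h4i
  set R := k / ε with hR
  have hkR : k ≤ R := by rw [hR, le_div_iff₀ hε0]; nlinarith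
  have hR1 : 1 ≤ R := hk1.trans hkR
  have hball : ∀ j x, ‖rtRep x (indL A hA (8 / Real.sqrt (δ * A.ncard))) -
      indL A hA (8 / Real.sqrt (δ * A.ncard))‖ ≤ 8 / 2 ^ j ↔ x ∈ stR A (δ / 4 ^ j) :=
    fun j x => ball_iff A hA hne δ hδ0 j x
  have hball0 : ∀ x, ‖rtRep x (indL A hA (8 / Real.sqrt (δ * A.ncard))) -
      indL A hA (8 / Real.sqrt (δ * A.ncard))‖ ≤ 8 ↔ x ∈ stR A δ := by
    intro x; have := hball 0 x; simpa using this
  have hset0 : {x : G | ‖rtRep x (indL A hA (8 / Real.sqrt (δ * A.ncard))) -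
      indL A hA (8 / Real.sqrt (δ * A.ncard))‖ ≤ 8} = stR A δ := Set.ext hball0
  have hset : ∀ j : ℕ, {x : G | ‖rtRep x (indL A hA (8 / Real.sqrt (δ * A.ncard))) -
      indL A hA (8 / Real.sqrt (δ * A.ncard))‖ ≤ 8 / 2 ^ j} = stR A (δ / 4 ^ j) :=
    fun j => Set.ext (hball j)
  obtain ⟨H, hH1, hH2⟩ := hcore G (lp (fun _ : G => ℝ) 2) rtRep
    (indL A hA (8 / Real.sqrt (δ * A.ncard)))
    (by rw [hset0]; exact stR_finite A hA hne δ (by linarith))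
    (by
      intro x hx
      rw [hball0] at hx
      exact hexp x (stR_subset A hA hne δ (by linarith) hx))
    (by
      intro j
      rw [hset0, hset j]
      have h1 := hi (i + j)
      simp only [hg, pow_add _ i j] at h1
      have h2 : b i ≤ (4 ^ (2 * d + 1)) ^ j * b (i + j) := by
        have h0 : 0 < (4 ^ (2 * d + 1)) ^ i := by positivity
        refine Nat.le_of_mul_le_mul_right ?_ h0
        calc _ ≤ _ := h1
          _ = _ := by ring
      have h3 : δ / 4 ^ j = ε / 4 ^ (i + j) := by rw [hδ, div_div, pow_add]
      rw [h3]
      have h5 : ((b i : ℕ) : ℝ) ≤ (4 ^ (2 * d + 1)) ^ j * (b (i + j) : ℕ) := by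
        exact_mod_cast h2
      exact h5)
  rw [hset0] at hH2
  refine ⟨H, ?_, ?_⟩
  · intro x hx
    exact stR_mono A hδε ((hball0 x).1 ((hH1 x hx).trans (by norm_num)))
  have hlow := stR_lower A hA hne d hd k hk2 hk1 δ hδ0 (by linarith)
  have hkδ : k / δ = R * 4 ^ i := by
    rw [hδ, hR]; field_simp
  rw [hkδ] at hlow
  have hg0 : g i ≤ g 0 := hi 0
  have hg0' : (g 0 : ℝ) ≤ k ^ 3 * A.ncard := by
    refine le_trans ?_ hk3
    have : g 0 = (stR A ε).ncard := by simp [hg, hb]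
    rw [this]
    exact_mod_cast Set.ncard_le_ncard (stR_subset A hA hne ε (by linarith)) (hA.inv.mul hA)
  have hgi : (g i : ℝ) ≤ k ^ 3 * A.ncard := le_trans (by exact_mod_cast hg0) hg0'
  have hgi2 : (g i : ℝ) = (stR A δ).ncard * ((4 ^ i) ^ (2 * d) * 4 ^ i) := by
    simp only [hg, hb, hδ]
    push_cast
    rw [← pow_succ, ← pow_mul, ← pow_mul, mul_comm i]
  set P := (4 * d + 6) * R with hP
  have hP0 : 0 < P := by positivity
  have h4b : (4 : ℝ) ^ i ≤ R ^ 3 * P ^ (2 * d) := by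
    have h1 : (A.ncard : ℝ) * ((4 ^ i) ^ (2 * d) * 4 ^ i) ≤
        P ^ (2 * d) * (4 ^ i) ^ (2 * d) * (k ^ 3 * A.ncard) := by
      calc (A.ncard : ℝ) * ((4 ^ i) ^ (2 * d) * 4 ^ i)
          ≤ (((4 * d + 6) * (R * 4 ^ i)) ^ (2 * d) * (stR A δ).ncard) *
            ((4 ^ i) ^ (2 * d) * 4 ^ i) := by gcongr
        _ = P ^ (2 * d) * (4 ^ i) ^ (2 * d) * g i := by
          rw [hgi2, ← mul_assoc (4 * (d : ℝ) + 6), mul_pow]; ring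
        _ ≤ _ := by gcongr
    have h2 : (4 : ℝ) ^ i ≤ k ^ 3 * P ^ (2 * d) := by
      have h0 : (0 : ℝ) < A.ncard * (4 ^ i) ^ (2 * d) := by positivity
      refine le_of_mul_le_mul_left ?_ h0
      calc _ = (A.ncard : ℝ) * ((4 ^ i) ^ (2 * d) * 4 ^ i) := by ring
        _ ≤ _ := h1
        _ = _ := by ring
    exact h2.trans (by gcongr)
  have hst : ((stR A δ).ncard : ℝ) ≤ c⁻¹ * (H : Set G).ncard := by
    rw [inv_mul_eq_div, le_div_iff₀ hc]; linarith
  calc (A.ncard : ℝ) ≤ ((4 * d + 6) * (R * 4 ^ i)) ^ (2 * d) * (stR A δ).ncard := hlow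
    _ ≤ ((4 * d + 6) * (R * (R ^ 3 * P ^ (2 * d)))) ^ (2 * d) * (c⁻¹ * (H : Set G).ncard) := by
      gcongr
    _ = _ := by
      have : (4 * (d : ℝ) + 6) * (R * (R ^ 3 * P ^ (2 * d))) =
          (4 * d + 6) ^ (2 * d + 1) * R ^ (2 * d + 4) := by
        rw [hP, mul_pow]; ring
      rw [this, mul_pow, ← pow_mul, ← pow_mul]; ring

section fin
variable {G : Type*} [Group G] [DecidableEq G]

lemma pair_swap (H : Subgroup G) (T : Finset G) (hT : ∀ x, x ∈ T ↔ x ∈ H) (X Y : Finset G) :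
    ∑ x ∈ X, (T.filter (fun h => x * h ∈ Y)).card =
      ∑ y ∈ Y, (T.filter (fun h => y * h ∈ X)).card := by
  have key : ∀ X Y : Finset G, ∑ x ∈ X, (T.filter (fun h => x * h ∈ Y)).card =
      ((X ×ˢ T).filter (fun p => p.1 * p.2 ∈ Y)).card := by
    intro X Y
    simp_rw [Finset.card_filter]
    rw [Finset.sum_product]
  rw [key, key]
  refine Finset.card_bij' (fun p _ => (p.1 * p.2, p.2⁻¹)) (fun p _ => (p.1 * p.2, p.2⁻¹))
    ?_ ?_ ?_ ?_
  · rintro ⟨x, h⟩ hp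
    simp only [Finset.mem_filter, Finset.mem_product, hT] at hp ⊢
    refine ⟨⟨hp.2, H.inv_mem hp.1.2⟩, by simpa using hp.1.1⟩
  · rintro ⟨x, h⟩ hp
    simp only [Finset.mem_filter, Finset.mem_product, hT] at hp ⊢
    refine ⟨⟨hp.2, H.inv_mem hp.1.2⟩, by simpa using hp.1.1⟩
  · rintro ⟨x, h⟩ hp
    simp
  · rintro ⟨x, h⟩ hp
    simp

lemma pair_total (S T : Finset G) (e : ℝ)
    (hst : ∀ h ∈ T, ((S.filter (fun x => x * h ∉ S)).card : ℝ) ≤ e) :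
    ((∑ x ∈ S, (T.filter (fun h => x * h ∉ S)).card : ℕ) : ℝ) ≤ T.card * e := by
  have : ∑ x ∈ S, (T.filter (fun h => x * h ∉ S)).card =
      ∑ h ∈ T, (S.filter (fun x => x * h ∉ S)).card := by
    simp_rw [Finset.card_filter]
    exact Finset.sum_comm
  rw [this]
  push_cast
  refine (Finset.sum_le_card_nsmul _ _ _ hst).trans ?_
  rw [nsmul_eq_mul]

lemma p_inv (H : Subgroup G) (T : Finset G) (hT : ∀ x, x ∈ T ↔ x ∈ H) (S : Finset G) (x h : G)
    (hh : h ∈ H) :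
    (T.filter (fun t => x * h * t ∈ S)).card = (T.filter (fun t => x * t ∈ S)).card := by
  refine Finset.card_bij' (fun t _ => h * t) (fun t _ => h⁻¹ * t) ?_ ?_ ?_ ?_
  · intro t ht
    simp only [Finset.mem_filter, hT] at ht ⊢
    exact ⟨H.mul_mem hh ht.1, by simpa [mul_assoc] using ht.2⟩
  · intro t ht
    simp only [Finset.mem_filter, hT] at ht ⊢
    exact ⟨H.mul_mem (H.inv_mem hh) ht.1, by simpa [mul_assoc] using ht.2⟩
  · intro t ht; simp
  · intro t ht; simp

lemma transv (H : Subgroup G) (T : Finset G) (hT : ∀ x, x ∈ T ↔ x ∈ H) (B : Finset G) :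
    ∃ F ⊆ B, B ⊆ F * T ∧ F.card * T.card = (F * T).card := by
  obtain ⟨F, hFB, hcov, hsep⟩ := exists_max_sep B (fun x y => x⁻¹ * y ∈ H)
    (by intro x; simp) (by
      intro x y h
      have := H.inv_mem h
      simpa using this)
  refine ⟨F, hFB, ?_, ?_⟩
  · intro y hy
    obtain ⟨z, hz, hzy⟩ := hcov y hy
    exact Finset.mem_mul.2 ⟨z, hz, z⁻¹ * y, (hT _).2 hzy, by simp⟩
  · symm
    rw [Finset.card_mul_iff]
    rintro ⟨x, s⟩ hx ⟨y, t⟩ hy hxy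
    simp only [Set.mem_prod, Finset.mem_coe, hT] at hx hy hxy
    have h1 : x⁻¹ * y = s * t⁻¹ := by
      have : y = x * s * t⁻¹ := by rw [hxy]; simp
      rw [this]; group
    have h2 : x = y := by
      by_contra hne
      exact hsep x hx.1 y hy.1 hne (by rw [h1]; exact H.mul_mem hx.2 (H.inv_mem hy.2))
    subst h2
    simpa using hxy

/-- The bound for the approximation of `S` by a union of cosets. -/
lemma union_bound (H : Subgroup G) (T : Finset G) (hT : ∀ x, x ∈ T ↔ x ∈ H) (S : Finset G)
    (e : ℝ) (hst : ∀ h ∈ T, ((S.filter (fun x => x * h ∉ S)).card : ℝ) ≤ e) (F : Finset G)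
    (hF : F ⊆ S.filter (fun x => T.card ≤ 2 * (T.filter (fun t => x * t ∈ S)).card))
    (hF2 : S.filter (fun x => T.card ≤ 2 * (T.filter (fun t => x * t ∈ S)).card) ⊆ F * T) :
    ((S ∆ (F * T)).card : ℝ) ≤ 2 * e := by
  set p : G → ℕ := fun x => (T.filter (fun t => x * t ∈ S)).card with hp
  set B := S.filter (fun x => T.card ≤ 2 * p x) with hB
  have hT0 : 0 < T.card := Finset.card_pos.2 ⟨1, (hT 1).2 H.one_mem⟩
  have hpD : ∀ x ∈ F * T, T.card ≤ 2 * p x := by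
    intro x hx
    obtain ⟨f, hf, t, ht, rfl⟩ := Finset.mem_mul.1 hx
    have h1 := (Finset.mem_filter.1 (hF hf)).2
    have h2 : p (f * t) = p f := p_inv H T hT S f t ((hT t).1 ht)
    rw [h2]; exact h1
  have hcompl : ∀ x, p x + (T.filter (fun t => x * t ∉ S)).card = T.card := by
    intro x; exact Finset.card_filter_add_card_filter_not _
  have htot := pair_total S T e hst
  -- the part of `S` outside of the union
  have h1 : (S \ (F * T)).card * T.card ≤
      2 * ∑ x ∈ S \ B, (T.filter (fun h => x * h ∉ S)).card := by
    have hsub : S \ (F * T) ⊆ S \ B := Finset.sdiff_subset_sdiff subset_rfl hF2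
    refine (Nat.mul_le_mul_right _ (Finset.card_le_card hsub)).trans ?_
    rw [Finset.mul_sum, ← smul_eq_mul]
    refine Finset.card_nsmul_le_sum _ _ _ ?_
    intro x hx
    have h2 := hcompl x
    have h3 : ¬ T.card ≤ 2 * p x := by
      intro h
      rw [Finset.mem_sdiff] at hx
      exact hx.2 (Finset.mem_filter.2 ⟨hx.1, h⟩)
    omega
  have h2 : ((F * T) \ S).card * T.card ≤
      2 * ∑ x ∈ B, (T.filter (fun h => x * h ∉ S)).card := by
    have h3 : ∑ x ∈ B, (T.filter (fun h => x * h ∈ (F * T) \ S)).card ≤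
        ∑ x ∈ B, (T.filter (fun h => x * h ∉ S)).card := by
      refine Finset.sum_le_sum fun x _ => Finset.card_le_card ?_
      intro t ht
      rw [Finset.mem_filter, Finset.mem_sdiff] at ht
      exact Finset.mem_filter.2 ⟨ht.1, ht.2.2⟩
    rw [pair_swap H T hT] at h3
    refine le_trans ?_ (Nat.mul_le_mul_left 2 h3)
    rw [Finset.mul_sum, ← smul_eq_mul]
    refine Finset.card_nsmul_le_sum _ _ _ ?_
    intro x hx
    rw [Finset.mem_sdiff] at hx
    have h4 := hpD x hx.1
    have h5 : p x ≤ (T.filter (fun h => x * h ∈ B)).card := by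
      refine Finset.card_le_card ?_
      intro t ht
      rw [Finset.mem_filter] at ht ⊢
      refine ⟨ht.1, Finset.mem_filter.2 ⟨ht.2, ?_⟩⟩
      have h6 : p (x * t) = p x := p_inv H T hT S x t ((hT t).1 ht.1)
      rw [h6]; exact h4
    omega
  have h3 : ∑ x ∈ S \ B, (T.filter (fun h => x * h ∉ S)).card +
      ∑ x ∈ B, (T.filter (fun h => x * h ∉ S)).card =
      ∑ x ∈ S, (T.filter (fun h => x * h ∉ S)).card :=
    Finset.sum_sdiff (Finset.filter_subset _ _)
  have h4 : (S ∆ (F * T)).card ≤ (S \ (F * T)).card + ((F * T) \ S).card := by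
    exact Finset.card_union_le _ _
  have h5 : (S ∆ (F * T)).card * T.card ≤
      2 * ∑ x ∈ S, (T.filter (fun h => x * h ∉ S)).card := by
    nlinarith
  have h6 : ((S ∆ (F * T)).card : ℝ) * T.card ≤ 2 * (T.card * e) := by
    have : ((S ∆ (F * T)).card : ℝ) * T.card ≤
      2 * ((∑ x ∈ S, (T.filter (fun h => x * h ∉ S)).card : ℕ) : ℝ) := by exact_mod_cast h5
    linarith
  have h7 : (0 : ℝ) < T.card := by exact_mod_cast hT0
  refine le_of_mul_le_mul_right ?_ h7
  linarith

lemma Z_bound (H : Subgroup G) (T : Finset G) (hT : ∀ x, x ∈ T ↔ x ∈ H) (S : Finset G)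
    (e s : ℝ) (hst : ∀ h ∈ T, ((S.filter (fun x => x * h ∉ S)).card : ℝ) ≤ e)
    (Z : Finset G)
    (hZ1 : ∀ z ∈ Z, s * T.card ≤ ((T.filter (fun t => z * t ∈ S)).card : ℝ))
    (hZ2 : ∀ z ∈ Z, s * T.card ≤ ((T.filter (fun t => z * t ∉ S)).card : ℝ)) :
    (Z.card : ℝ) * s ≤ 2 * e := by
  have hT0 : (0 : ℝ) < T.card := by
    exact_mod_cast Finset.card_pos.2 ⟨1, (hT 1).2 H.one_mem⟩
  have htot := pair_total S T e hst
  have h1 : ((Z ∩ S).card : ℝ) * (s * T.card) ≤ T.card * e := by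
    refine le_trans ?_ htot
    rw [← nsmul_eq_mul]
    refine (Finset.card_nsmul_le_sum (Z ∩ S)
      (fun x => ((T.filter (fun h => x * h ∉ S)).card : ℝ)) _ ?_).trans ?_
    · intro x hx; exact hZ2 x (Finset.mem_inter.1 hx).1
    · push_cast
      exact Finset.sum_le_sum_of_subset_of_nonneg Finset.inter_subset_right
        (fun _ _ _ => by positivity)
  have h2 : ((Z \ S).card : ℝ) * (s * T.card) ≤ T.card * e := by
    refine le_trans ?_ htot
    have h3 : ∑ x ∈ S, (T.filter (fun h => x * h ∈ Z \ S)).card ≤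
        ∑ x ∈ S, (T.filter (fun h => x * h ∉ S)).card := by
      refine Finset.sum_le_sum fun x _ => Finset.card_le_card ?_
      intro t ht
      rw [Finset.mem_filter, Finset.mem_sdiff] at ht
      exact Finset.mem_filter.2 ⟨ht.1, ht.2.2⟩
    rw [pair_swap H T hT] at h3
    refine le_trans ?_ (Nat.cast_le.2 h3)
    rw [← nsmul_eq_mul]
    refine (Finset.card_nsmul_le_sum (Z \ S)
      (fun x => ((T.filter (fun h => x * h ∈ S)).card : ℝ)) _ ?_).trans ?_
    · intro x hx; exact hZ1 x (Finset.mem_sdiff.1 hx).1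
    · push_cast; exact le_rfl
  have h3 : (Z.card : ℝ) = (Z ∩ S).card + (Z \ S).card := by
    exact_mod_cast (Finset.card_inter_add_card_sdiff Z S).symm
  rw [h3]
  refine le_of_mul_le_mul_right ?_ hT0
  linarith

lemma half_symmDiff (S : Finset G) (x : G) :
    2 * (S.filter (fun a => a * x ∉ S)).card = (((S : Set G) * {x}) ∆ (S : Set G)).ncard := by
  have h1 : ((S : Set G) * {x}) ∆ (S : Set G) = (((S * {x}) ∆ S : Finset G) : Set G) := by
    push_cast; rfl
  rw [h1, Set.ncard_coe_finset]
  have h2 : ((S * {x}) ∆ S).card = ((S * {x}) \ S).card + (S \ (S * {x})).card :=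
    Finset.card_union_of_disjoint disjoint_sdiff_sdiff
  have h3 : (S * {x}).card = S.card := by
    exact Finset.card_mul_singleton _ _
  have h4 := Finset.card_sdiff_add_card_inter (S * {x}) S
  have h5 := Finset.card_sdiff_add_card_inter S (S * {x})
  rw [Finset.inter_comm] at h5
  have h6 : ((S * {x}) \ S) = (S.filter (fun a => a * x ∉ S)).image (fun a => a * x) := by
    ext g
    simp only [Finset.mem_sdiff, Finset.mem_mul, Finset.mem_singleton, Finset.mem_image,
      Finset.mem_filter]
    constructor
    · rintro ⟨⟨a, ha, y, rfl, rfl⟩, h⟩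
      exact ⟨a, ⟨ha, h⟩, rfl⟩
    · rintro ⟨a, ⟨ha, h⟩, rfl⟩
      exact ⟨⟨a, ha, x, rfl, rfl⟩, h⟩
  have h7 : ((S * {x}) \ S).card = (S.filter (fun a => a * x ∉ S)).card := by
    rw [h6, Finset.card_image_of_injective _ (mul_left_injective x)]
  omega

lemma coset_card (T S : Finset G) (g : G) :
    ((g • (T : Set G)) ∩ (S : Set G)).ncard = (T.filter (fun t => g * t ∈ S)).card := by
  have : (g • (T : Set G)) ∩ (S : Set G) =
      (((T.filter (fun t => g * t ∈ S)).image (fun t => g * t) : Finset G) : Set G) := by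
    ext y
    simp only [Set.mem_inter_iff, Set.mem_smul_set, Finset.coe_image, Set.mem_image,
      Finset.mem_coe, Finset.mem_filter, smul_eq_mul]
    constructor
    · rintro ⟨⟨t, ht, rfl⟩, h⟩; exact ⟨t, ⟨ht, h⟩, rfl⟩
    · rintro ⟨t, ⟨ht, h⟩, rfl⟩; exact ⟨⟨t, ht, rfl⟩, h⟩
  rw [this, Set.ncard_coe_finset, Finset.card_image_of_injective _ (mul_right_injective g)]

lemma coset_card_diff (T S : Finset G) (g : G) :
    ((g • (T : Set G)) \ (S : Set G)).ncard = (T.filter (fun t => g * t ∉ S)).card := by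
  have : (g • (T : Set G)) \ (S : Set G) =
      (((T.filter (fun t => g * t ∉ S)).image (fun t => g * t) : Finset G) : Set G) := by
    ext y
    simp only [Set.mem_sdiff, Set.mem_smul_set, Finset.coe_image, Set.mem_image,
      Finset.mem_coe, Finset.mem_filter, smul_eq_mul]
    constructor
    · rintro ⟨⟨t, ht, rfl⟩, h⟩; exact ⟨t, ⟨ht, h⟩, rfl⟩
    · rintro ⟨t, ⟨ht, h⟩, rfl⟩; exact ⟨⟨t, ht, rfl⟩, h⟩
  rw [this, Set.ncard_coe_finset, Finset.card_image_of_injective _ (mul_right_injective g)]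
end fin

/-- Theorem 6.4 of the paper, case (1): for `d ≥ 0` and `q ≥ 1` there is `C`
such that for every group `G` and nonempty finite `A ⊆ G` with `A⁻¹A` of exponent `q` and
`VC^r_A(A) = d`, setting `k = |A³|/|A|`, for every `ε ∈ (0,1)` there is a subgroup
`H ⊆ St^r_ε(A)` with `cov(A:H) ≤ C(k/ε)^{2d+C}`, an `F ⊆ A` with `|F| ≤ C(k/ε)^{2d+C}` and
`|A △ FH| ≤ ε|A|`, and `|Z^ℓ_{√ε}(A,H)| ≤ 2√ε|A|`. -/
theorem nip_tripling_bounded_exponent (d q : ℕ) (hq : 1 ≤ q) :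
    ∃ C : ℝ, ∀ (G : Type*) [Group G] (A : Set G), A.Finite → A.Nonempty →
      (∀ x ∈ A⁻¹ * A, x ^ q = 1) →
      vcDim (rightFam A A) = (d : ℕ∞) →
      ∀ ε : ℝ, 0 < ε → ε < 1 →
      ∃ H : Subgroup G,
        (H : Set G) ⊆ stR A ε ∧
        (∃ F ⊆ A, F.Finite ∧
          (F.ncard : ℝ) ≤ C * ((((A ^ 3).ncard : ℝ) / A.ncard) / ε) ^ (2 * (d : ℝ) + C) ∧
          A ⊆ F * (H : Set G)) ∧
        (∃ F ⊆ A, F.Finite ∧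
          (F.ncard : ℝ) ≤ C * ((((A ^ 3).ncard : ℝ) / A.ncard) / ε) ^ (2 * (d : ℝ) + C) ∧
          ((A ∆ (F * (H : Set G))).ncard : ℝ) ≤ ε * A.ncard) ∧
        ((Zl A (H : Set G) (Real.sqrt ε)).ncard : ℝ) ≤ 2 * Real.sqrt ε * A.ncard := by
  classical
  obtain ⟨c0, hc0, hmain⟩ := exists_H d q hq
  set m : ℕ := (2 * d + 4) * (2 * d) + 3 with hm
  refine ⟨max c0 m, ?_⟩
  intro G _ A hA hne hexp hd ε hε0 hε1
  have hA0 : (0 : ℝ) < A.ncard := by exact_mod_cast (Set.ncard_pos hA).2 hne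
  set k : ℝ := ((A ^ 3).ncard : ℝ) / A.ncard with hk
  have hk3 : ((A ^ 3).ncard : ℝ) = k * A.ncard := by rw [hk]; field_simp
  obtain ⟨a0, ha0⟩ := hne
  have hfin2 : (A * A).Finite := hA.mul hA
  have hfin3 : (A ^ 3).Finite := by
    rw [pow_succ, pow_two]; exact hfin2.mul hA
  have hm1 : A.ncard ≤ (A * A).ncard := by
    rw [← ncard_mul_singleton A a0]
    exact Set.ncard_le_ncard (Set.mul_subset_mul_left (by simpa using ha0)) hfin2
  have hm2 : (A * A).ncard ≤ (A ^ 3).ncard := by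
    rw [← ncard_mul_singleton (A * A) a0]
    refine Set.ncard_le_ncard ?_ hfin3
    rw [pow_succ, pow_two]
    exact Set.mul_subset_mul_left (by simpa using ha0)
  have hk1 : 1 ≤ k := by
    rw [hk, one_le_div₀ hA0]
    exact_mod_cast hm1.trans hm2
  have hk2 : ((A * A).ncard : ℝ) ≤ k * A.ncard := by
    rw [← hk3]; exact_mod_cast hm2
  have htri := triple_bound A hA k hk3.le
  have hfin4 : (A * A⁻¹ * A).Finite := (hA.mul hA.inv).mul hA
  have hm4 : (A⁻¹ * A).ncard ≤ (A * A⁻¹ * A).ncard := by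
    rw [← Set.ncard_image_of_injective (A⁻¹ * A) (mul_right_injective a0)]
    refine Set.ncard_le_ncard ?_ hfin4
    rintro _ ⟨y, hy, rfl⟩
    rw [mul_assoc]
    exact Set.mul_mem_mul ha0 hy
  have hk4 : ((A⁻¹ * A).ncard : ℝ) ≤ k ^ 3 * A.ncard :=
    le_trans (by exact_mod_cast hm4) htri
  obtain ⟨H, hH1, hH2⟩ := hmain G A hA ⟨a0, ha0⟩ hexp hd k hk1 hk2 hk4 ε hε0 hε1
  have hHsub : (H : Set G) ⊆ A⁻¹ * A := hH1.trans (stR_subset A hA ⟨a0, ha0⟩ ε (by linarith))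
  have hHfin : (H : Set G).Finite := (hA.inv.mul hA).subset hHsub
  refine ⟨H, hH1, ?_⟩
  obtain ⟨S, rfl⟩ := hA.exists_finset_coe
  obtain ⟨T, hTH⟩ := hHfin.exists_finset_coe
  have hT : ∀ x, x ∈ T ↔ x ∈ H := by
    intro x; rw [← Finset.mem_coe, hTH]; rfl
  rw [← hTH] at hH1 hH2 hHsub ⊢
  simp only [Set.ncard_coe_finset] at hH2 htri hA0 ⊢
  set R := k / ε with hR
  have hkR : k ≤ R := by rw [hR, le_div_iff₀ hε0]; nlinarith
  have hR1 : 1 ≤ R := hk1.trans hkR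
  have hT0 : (0 : ℝ) < T.card := by
    exact_mod_cast Finset.card_pos.2 ⟨1, (hT 1).2 H.one_mem⟩
  have hst : ∀ h ∈ T, ((S.filter (fun x => x * h ∉ S)).card : ℝ) ≤ ε / 2 * S.card := by
    intro h hh
    have h1 : ((((S : Set G) * {h}) ∆ (S : Set G)).ncard : ℝ) ≤ ε * (S : Set G).ncard :=
      hH1 (Finset.mem_coe.2 hh)
    rw [← half_symmDiff, Set.ncard_coe_finset] at h1
    push_cast at h1
    linarith
  have hbound : ∀ F : Finset G, F ⊆ S → F.card * T.card = (F * T).card →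
      (F.card : ℝ) ≤ max c0 m * R ^ (2 * (d : ℝ) + max c0 m) := by
    intro F hFS hcard
    have h1 : (F * T).card ≤ ((S : Set G) * (S : Set G)⁻¹ * S).ncard := by
      rw [← Set.ncard_coe_finset, Finset.coe_mul, mul_assoc]
      exact Set.ncard_le_ncard (Set.mul_subset_mul (by exact_mod_cast hFS) hHsub)
        (by rw [← mul_assoc]; exact hfin4)
    rw [← hcard] at h1
    have h2 : (F.card : ℝ) * T.card ≤ k ^ 3 * S.card :=
      le_trans (by exact_mod_cast h1) htri
    have h3 : (F.card : ℝ) ≤ c0 * R ^ m := by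
      refine le_of_mul_le_mul_right ?_ hT0
      calc (F.card : ℝ) * T.card ≤ k ^ 3 * S.card := h2
        _ ≤ R ^ 3 * (c0 * R ^ ((2 * d + 4) * (2 * d)) * T.card) :=
          mul_le_mul (pow_le_pow_left₀ (by linarith) hkR 3) hH2 (Nat.cast_nonneg _)
            (pow_nonneg (by linarith) _)
        _ = c0 * R ^ m * T.card := by rw [hm, pow_add]; ring
    refine h3.trans ?_
    rw [← Real.rpow_natCast]
    have h4 : (m : ℝ) ≤ 2 * (d : ℝ) + max c0 m := by
      have := le_max_right c0 (m : ℝ)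
      have h0 : (0 : ℝ) ≤ d := by positivity
      linarith
    have h5 := Real.rpow_le_rpow_of_exponent_le hR1 h4
    have h6 := le_max_left c0 (m : ℝ)
    have h7 : 0 ≤ R ^ (m : ℝ) := by positivity
    exact mul_le_mul h6 h5 h7 (hc0.le.trans h6)
  refine ⟨?_, ?_, ?_⟩
  · obtain ⟨F, hFS, hcov, hcard⟩ := transv H T hT S
    refine ⟨F, by exact_mod_cast hFS, F.finite_toSet, ?_, ?_⟩
    · rw [Set.ncard_coe_finset]; exact hbound F hFS hcard
    · rw [← Finset.coe_mul]; exact_mod_cast hcov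
  · obtain ⟨F, hFB, hcov, hcard⟩ := transv H T hT
      (S.filter (fun x => T.card ≤ 2 * (T.filter (fun t => x * t ∈ S)).card))
    have hFS : F ⊆ S := hFB.trans (Finset.filter_subset _ _)
    refine ⟨F, by exact_mod_cast hFS, F.finite_toSet, ?_, ?_⟩
    · rw [Set.ncard_coe_finset]; exact hbound F hFS hcard
    · rw [← Finset.coe_mul, ← Finset.coe_symmDiff, Set.ncard_coe_finset]
      have := union_bound H T hT S _ hst F hFB hcov
      linarith
  · have hs0 : 0 < Real.sqrt ε := Real.sqrt_pos.2 hε0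
    have hZ : ∀ z, z ∈ Zl (S : Set G) (T : Set G) (Real.sqrt ε) →
        Real.sqrt ε * T.card ≤ ((T.filter (fun t => z * t ∈ S)).card : ℝ) ∧
        Real.sqrt ε * T.card ≤ ((T.filter (fun t => z * t ∉ S)).card : ℝ) := by
      intro z hz
      have h1 : Real.sqrt ε * (T : Set G).ncard ≤ min (((z • (T : Set G)) ∩ S).ncard : ℝ)
        (((z • (T : Set G)) \ S).ncard : ℝ) := hz
      rw [coset_card, coset_card_diff, Set.ncard_coe_finset, le_min_iff] at h1
      exact h1
    have hZfin : (Zl (S : Set G) (T : Set G) (Real.sqrt ε)).Finite := by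
      refine (S * T).finite_toSet.subset ?_
      intro z hz
      have h1 := (hZ z hz).1
      have h2 : (0 : ℝ) < ((T.filter (fun t => z * t ∈ S)).card : ℝ) :=
        lt_of_lt_of_le (mul_pos hs0 hT0) h1
      obtain ⟨t, ht⟩ := Finset.card_pos.1 (Nat.cast_pos.1 h2)
      rw [Finset.mem_filter] at ht
      rw [Finset.mem_coe]
      exact Finset.mem_mul.2 ⟨z * t, ht.2, t⁻¹, (hT _).2 (H.inv_mem ((hT _).1 ht.1)), by simp⟩
    have h1 := Z_bound H T hT S _ (Real.sqrt ε) hst hZfin.toFinset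
      (fun z hz => (hZ z (hZfin.mem_toFinset.1 hz)).1)
      (fun z hz => (hZ z (hZfin.mem_toFinset.1 hz)).2)
    rw [Set.ncard_eq_toFinset_card _ hZfin]
    have h2 : Real.sqrt ε * Real.sqrt ε = ε := Real.mul_self_sqrt hε0.le
    refine le_of_mul_le_mul_right ?_ hs0
    nlinarith
end

section
/- For every integer q ≥ 1 there is a constant C = C(q) such that the following holds. Let G be an abelian group of exponent q and A ⊆ G a nonempty finite set; let d = VC_A(A) and k = |A+A|/|A|. Then for any ε ∈ (0,1) there is a subgroup H ≤ G and an integer N ≤ exp(C·d⁸)·(k/ε)^{d+C} satisfying: (i) H ⊆ St_ε(A) and cov(A:H) ≤ N; (ii) |A △ (F+H)| ≤ ε|A| for some F ⊆ A with |F| ≤ N; and (iii) |Z_{√ε}(A,H)| ≤ 2√ε·|A|. -/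
open scoped Pointwise symmDiff

/-- `Stab_N(A) = {x : |(x + A) △ A| ≤ N}` in an abelian group (written additively). -/
def stabAdd {G : Type*} [AddCommGroup G] (A : Set G) (N : ℝ) : Set G :=
  {x : G | (((x +ᵥ A) ∆ A).ncard : ℝ) ≤ N}

/-- `St_ε(A) = Stab_{ε|A|}(A)`. -/
def stAdd {G : Type*} [AddCommGroup G] (A : Set G) (ε : ℝ) : Set G := stabAdd A (ε * A.ncard)

/-- `Z_ε(A,X) = {g : min(|(g+X) ∩ A|, |(g+X) \ A|) ≥ ε|X|}`. -/
def ZAdd {G : Type*} [AddCommGroup G] (A X : Set G) (ε : ℝ) : Set G :=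
  {g : G | ε * X.ncard ≤ min (((g +ᵥ X) ∩ A).ncard : ℝ) (((g +ᵥ X) \ A).ncard : ℝ)}

/-- The family of translates `{x + A : x ∈ B}`. -/
def transFam {G : Type*} [AddCommGroup G] (A B : Set G) : Set (Set G) :=
  (fun x => x +ᵥ A) '' B


namespace NipAux

open Finset Classical

/-- Chang-type covering argument with subgroups, for a translation pseudo-norm `f`. -/
theorem exists_subgroup {G : Type*} [AddCommGroup G] (q : ℕ) (hq : 1 ≤ q)
    (hG : ∀ x : G, q • x = 0) (f : G → ℝ) (h0 : f 0 = 0) (hneg : ∀ x, f (-x) = f x)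
    (hadd : ∀ x y, f (x + y) ≤ f x + f y) (r : ℝ) (hr : 0 ≤ r) (t : ℕ) (M : ℝ)
    (hM : 3 * q * t + 2 ≤ M) (hfin : {x | f x ≤ M * r}.Finite)
    (hcard : {x | f x ≤ M * r}.ncard < 2 ^ t * {x | f x ≤ r}.ncard) :
    ∃ H : AddSubgroup G, (∀ x, f x ≤ r → x ∈ H) ∧ ∀ x ∈ H, f x ≤ M * r := by
  by_contra hno
  have hq' : (1 : ℝ) ≤ q := by exact_mod_cast hq
  have hnsmul : ∀ (x : G) (j : ℕ), f (j • x) ≤ j * f x := by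
    intro x j
    induction j with
    | zero => simp [h0]
    | succ j ih =>
      rw [succ_nsmul]
      have := hadd (j • x) x
      push_cast
      linarith
  have key : ∀ i : ℕ, i ≤ t → ∃ W : AddSubgroup G, (∀ w ∈ W, f w ≤ 3 * q * i * r) ∧
      2 ^ i * {x | f x ≤ r}.ncard ≤ ((W : Set G) + {x | f x ≤ r}).ncard := by
    intro i
    induction i with
    | zero =>
      intro _
      refine ⟨⊥, ?_, ?_⟩
      · intro w hw
        rw [AddSubgroup.mem_bot] at hw
        simp [hw, h0]
      · simp
    | succ i ih =>
      intro hi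
      obtain ⟨W, hW, hWc⟩ := ih (by omega)
      have hit : (i : ℝ) + 1 ≤ t := by exact_mod_cast hi
      have hqi : 3 * (q : ℝ) * i + 3 * q ≤ 3 * q * t := by nlinarith
      by_cases hc : ∀ x, f x ≤ 3 * r → ∃ w ∈ W, f (x - w) ≤ 2 * r
      · exfalso
        apply hno
        refine ⟨AddSubgroup.closure {x | f x ≤ r}, fun x hx => AddSubgroup.subset_closure hx, ?_⟩
        have hcl : ∀ x ∈ AddSubgroup.closure {x | f x ≤ r}, ∃ w ∈ W, f (x - w) ≤ 2 * r := by
          intro x hx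
          have step : ∀ x y, f y ≤ r → (∃ w ∈ W, f (x - w) ≤ 2 * r) →
              ∃ w ∈ W, f (x + y - w) ≤ 2 * r := by
            rintro x y hy ⟨w, hw, hxw⟩
            obtain ⟨w', hw', h'⟩ := hc (x - w + y) (by linarith [hadd (x - w) y])
            refine ⟨w + w', W.add_mem hw hw', ?_⟩
            convert h' using 2
            abel
          induction hx using AddSubgroup.closure_induction_right with
          | zero => exact ⟨0, W.zero_mem, by simp [h0, hr]⟩
          | add_right x hx y hy ih => exact step x y hy ih
          | add_neg_cancel x hx y hy ih => exact step x (-y) (by rw [hneg]; exact hy) ih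
        intro x hx
        obtain ⟨w, hw, hxw⟩ := hcl x hx
        have h1 := hadd (x - w) w
        rw [sub_add_cancel] at h1
        have h2 := hW w hw
        nlinarith
      · push Not at hc
        obtain ⟨x, hx, hxW⟩ := hc
        refine ⟨W ⊔ AddSubgroup.zmultiples x, ?_, ?_⟩
        · intro w hw
          rw [AddSubgroup.mem_sup] at hw
          obtain ⟨w, hw, z, hz, rfl⟩ := hw
          rw [AddSubgroup.mem_zmultiples_iff] at hz
          obtain ⟨n, rfl⟩ := hz
          have hqz : (0 : ℤ) < q := by exact_mod_cast hq
          obtain ⟨j, hj⟩ := Int.eq_ofNat_of_zero_le (Int.emod_nonneg n hqz.ne')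
          have hjq : j < q := by
            have := Int.emod_lt_of_pos n hqz
            omega
          have hnx : n • x = j • x := by
            have h1 : n = q * (n / q) + j := by rw [← hj]; exact (Int.mul_ediv_add_emod n q).symm
            rw [h1, add_zsmul, mul_comm, mul_zsmul]
            simp [hG]
          rw [hnx]
          have h1 := hadd w (j • x)
          have h2 := hW w hw
          have h3 := hnsmul x j
          have hjq' : (j : ℝ) ≤ q := by exact_mod_cast hjq.le
          have h4 : (j : ℝ) * f x ≤ q * (3 * r) := by
            calc (j : ℝ) * f x ≤ j * (3 * r) := by gcongr
              _ ≤ q * (3 * r) := by gcongr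
          push_cast
          nlinarith
        · set S := (W : Set G) + {x | f x ≤ r} with hS
          have hSsub : S ⊆ {x | f x ≤ M * r} := by
            rintro _ ⟨w, hw, b, hb, rfl⟩
            have h1 := hadd w b
            have h2 := hW w hw
            simp only [Set.mem_ofPred_eq] at hb ⊢
            nlinarith
          have hSf : S.Finite := hfin.subset hSsub
          have hdisj : Disjoint S (x +ᵥ S) := by
            rw [Set.disjoint_left]
            rintro _ ⟨w, hw, b, hb, rfl⟩ ⟨_, ⟨w', hw', b', hb', rfl⟩, h⟩
            simp only [vadd_eq_add, Set.mem_ofPred_eq] at h hb hb'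
            have h1 := hxW (w - w') (W.sub_mem hw hw')
            have h2 : x - (w - w') = b + -b' := by
              rw [← sub_eq_zero] at h ⊢
              rw [← h]; abel
            rw [h2] at h1
            have := hadd b (-b')
            rw [hneg] at this
            linarith
          have hSx : (x +ᵥ S).Finite := hSf.vadd_set
          have hcardx : (x +ᵥ S).ncard = S.ncard := by
            rw [← Set.image_vadd]
            exact Set.ncard_image_of_injective _ (AddAction.injective x)
          have hun : S ∪ (x +ᵥ S) ⊆ ((W ⊔ AddSubgroup.zmultiples x : AddSubgroup G) : Set G)
              + {x | f x ≤ r} := by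
            apply Set.union_subset
            · exact Set.add_subset_add_right (by exact_mod_cast le_sup_left)
            · rintro _ ⟨_, ⟨w, hw, b, hb, rfl⟩, rfl⟩
              refine ⟨x + w, ?_, b, hb, ?_⟩
              · apply AddSubgroup.add_mem
                · exact AddSubgroup.mem_sup_right (AddSubgroup.mem_zmultiples x)
                · exact AddSubgroup.mem_sup_left hw
              · simp [add_assoc]
          have hfin' : (((W ⊔ AddSubgroup.zmultiples x : AddSubgroup G) : Set G)
              + {x | f x ≤ r}).Finite := by
            have : ((W ⊔ AddSubgroup.zmultiples x : AddSubgroup G) : Set G)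
              + {x | f x ≤ r} ⊆ {x | f x ≤ M * r} := by
              rintro _ ⟨v, hv, b, hb, rfl⟩
              have hv' : f v ≤ 3 * q * (i + 1) * r := by
                have hv := hv
                rw [SetLike.mem_coe, AddSubgroup.mem_sup] at hv
                obtain ⟨w, hw, z, hz, rfl⟩ := hv
                rw [AddSubgroup.mem_zmultiples_iff] at hz
                obtain ⟨n, rfl⟩ := hz
                have hqz : (0 : ℤ) < q := by exact_mod_cast hq
                obtain ⟨j, hj⟩ := Int.eq_ofNat_of_zero_le (Int.emod_nonneg n hqz.ne')
                have hjq : j < q := by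
                  have := Int.emod_lt_of_pos n hqz
                  omega
                have hnx : n • x = j • x := by
                  have h1 : n = q * (n / q) + j := by
                    rw [← hj]; exact (Int.mul_ediv_add_emod n q).symm
                  rw [h1, add_zsmul, mul_comm, mul_zsmul]
                  simp [hG]
                rw [hnx]
                have h1 := hadd w (j • x)
                have h2 := hW w hw
                have h3 := hnsmul x j
                have hjq' : (j : ℝ) ≤ q := by exact_mod_cast hjq.le
                have h4 : (j : ℝ) * f x ≤ q * (3 * r) := by
                  calc (j : ℝ) * f x ≤ j * (3 * r) := by gcongr
                    _ ≤ q * (3 * r) := by gcongr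
                nlinarith
              have h1 := hadd v b
              simp only [Set.mem_ofPred_eq] at hb ⊢
              nlinarith
            exact hfin.subset this
          have h1 := Set.ncard_le_ncard hun hfin'
          rw [Set.ncard_union_eq hdisj hSf hSx, hcardx] at h1
          rw [pow_succ]
          linarith
  obtain ⟨W, hW, hWc⟩ := key t le_rfl
  have hsub : (W : Set G) + {x | f x ≤ r} ⊆ {x | f x ≤ M * r} := by
    rintro _ ⟨w, hw, b, hb, rfl⟩
    have h1 := hadd w b
    have h2 := hW w hw
    simp only [Set.mem_ofPred_eq] at hb ⊢
    nlinarith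
  have := Set.ncard_le_ncard hsub hfin
  omega

/-- the translation pseudo-norm `|(x+A) △ A|` -/
noncomputable def sd {G : Type*} [AddCommGroup G] (A : Finset G) (x : G) : ℝ :=
  (((x +ᵥ A) ∆ A).card : ℝ)

theorem sd_nonneg {G : Type*} [AddCommGroup G] (A : Finset G) (x : G) : 0 ≤ sd A x := by
  unfold sd; positivity

theorem sd_zero {G : Type*} [AddCommGroup G] (A : Finset G) : sd A 0 = 0 := by
  simp [sd]

theorem sd_trans {G : Type*} [AddCommGroup G] (A : Finset G) (x y : G) :
    (((x +ᵥ A) ∆ (y +ᵥ A)).card : ℝ) = sd A (x - y) := by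
  unfold sd
  have : (x +ᵥ A) ∆ (y +ᵥ A) = y +ᵥ (((x - y) +ᵥ A) ∆ A) := by
    rw [Finset.vadd_finset_symmDiff, vadd_vadd]
    simp
  rw [this, Finset.card_vadd_finset]

theorem sd_neg {G : Type*} [AddCommGroup G] (A : Finset G) (x : G) : sd A (-x) = sd A x := by
  have h := sd_trans A 0 x
  rw [zero_sub] at h
  rw [← h, symmDiff_comm]
  simp [sd]

theorem sd_add {G : Type*} [AddCommGroup G] (A : Finset G) (x y : G) :
    sd A (x + y) ≤ sd A x + sd A y := by
  have h1 := sd_trans A (x + y) y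
  rw [add_sub_cancel_right] at h1
  rw [← h1]
  unfold sd
  have : (((x + y) +ᵥ A) ∆ A) ⊆ (((x + y) +ᵥ A) ∆ (y +ᵥ A)) ∪ ((y +ᵥ A) ∆ A) := by
    intro z
    simp only [Finset.mem_union, Finset.mem_symmDiff]
    tauto
  exact_mod_cast (Finset.card_le_card this).trans (Finset.card_union_le _ _)

theorem card_sdiff_le {G : Type*} [AddCommGroup G] (A : Finset G) (x : G) :
    (((x +ᵥ A) \ A).card : ℝ) ≤ sd A x := by
  unfold sd
  exact_mod_cast Finset.card_le_card (by
    intro z; simp only [Finset.mem_sdiff, Finset.mem_symmDiff]; tauto)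

/-- small balls are finite, with at most `2|A|` elements -/
theorem ball_le {G : Type*} [AddCommGroup G] (A : Finset G) (hA : A.Nonempty) (r : ℝ)
    (hr : r ≤ A.card / 2) :
    {x | sd A x ≤ r}.Finite ∧ ({x | sd A x ≤ r}.ncard : ℝ) ≤ 2 * A.card := by
  have hpos : (0 : ℝ) < A.card := by exact_mod_cast hA.card_pos
  have hinter : ∀ x, sd A x ≤ r → (A.card : ℝ) / 2 ≤ ((x +ᵥ A) ∩ A).card := by
    intro x hx
    have h1 := card_sdiff_le A x
    have h2 : (((x +ᵥ A) ∩ A).card : ℝ) + ((x +ᵥ A) \ A).card = A.card := by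
      have := Finset.card_inter_add_card_sdiff (x +ᵥ A) A
      rw [Finset.card_vadd_finset] at this
      exact_mod_cast this
    linarith
  have hsub : {x | sd A x ≤ r} ⊆ ((A - A : Finset G) : Set G) := by
    intro x hx
    have h1 := hinter x hx
    have h2 : 0 < ((x +ᵥ A) ∩ A).card := by
      have : (0 : ℝ) < ((x +ᵥ A) ∩ A).card := by linarith
      exact_mod_cast this
    obtain ⟨z, hz⟩ := Finset.card_pos.1 h2
    rw [Finset.mem_inter, Finset.mem_vadd_finset] at hz
    obtain ⟨⟨a, ha, rfl⟩, hz⟩ := hz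
    rw [Finset.mem_coe, Finset.mem_sub]
    exact ⟨_, hz, a, ha, by simp⟩
  have hfin : {x | sd A x ≤ r}.Finite := (Finset.finite_toSet _).subset hsub
  refine ⟨hfin, ?_⟩
  set B := hfin.toFinset with hB
  have hBc : {x | sd A x ≤ r}.ncard = B.card := Set.ncard_eq_toFinset_card _ hfin
  rw [hBc]
  have hsum : ∑ x ∈ B, ((x +ᵥ A) ∩ A).card ≤ A.card * A.card := by
    have h1 : ∀ x, ((x +ᵥ A) ∩ A).card = ∑ a ∈ A, if a - x ∈ A then 1 else 0 := by
      intro x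
      rw [← Finset.card_filter]
      congr 1
      ext z
      simp only [Finset.mem_inter, Finset.mem_filter, Finset.mem_vadd_finset, vadd_eq_add]
      constructor
      · rintro ⟨⟨a, ha, rfl⟩, hz⟩
        exact ⟨hz, by simpa using ha⟩
      · rintro ⟨hz, ha⟩
        exact ⟨⟨_, ha, by simp⟩, hz⟩
    simp_rw [h1]
    rw [Finset.sum_comm]
    refine (Finset.sum_le_card_nsmul _ _ A.card ?_).trans (by simp)
    intro a ha
    rw [← Finset.card_filter]
    apply Finset.card_le_card_of_injOn (fun x => a - x)
    · intro x hx
      simpa using (Finset.mem_filter.1 hx).2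
    · intro x _ y _ h
      simpa using h
  have hsum' : (B.card : ℝ) * (A.card / 2) ≤ A.card * A.card := by
    calc (B.card : ℝ) * (A.card / 2) = ∑ x ∈ B, (A.card / 2 : ℝ) := by simp
      _ ≤ ∑ x ∈ B, (((x +ᵥ A) ∩ A).card : ℝ) :=
        Finset.sum_le_sum (fun x hx => hinter x (by simpa [hB] using hx))
      _ ≤ A.card * A.card := by exact_mod_cast hsum
  nlinarith


theorem sum_choose_le (m d : ℕ) : ∑ i ∈ Finset.range (d + 1), m.choose i ≤ (m + 1) ^ d := by
  rw [add_pow]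
  apply Finset.sum_le_sum
  intro i hi
  have h1 : m.choose i ≤ m ^ i := Nat.choose_le_pow m i
  have h2 : 0 < d.choose i := Nat.choose_pos (by simpa [Nat.lt_succ_iff] using hi)
  simp only [one_pow, mul_one]
  nlinarith [Nat.zero_le (m ^ i)]

/-- Sauer-Shelah bound for separated translates. -/
theorem sauer_bound {G : Type*} [AddCommGroup G] (A : Finset G) (d : ℕ)
    (hd : vcDim (transFam (A : Set G) A) = (d : ℕ∞)) (P W : Finset G) (hP : P ⊆ A)
    (hsep : ∀ a ∈ P, ∀ b ∈ P, a ≠ b → W ∩ (a +ᵥ A) ≠ W ∩ (b +ᵥ A)) :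
    P.card ≤ (W.card + 1) ^ d := by
  set 𝒜 : Finset (Finset G) := P.image (fun a => W ∩ (a +ᵥ A)) with h𝒜
  have hc : 𝒜.card = P.card := by
    apply Finset.card_image_of_injOn
    intro a ha b hb hab
    by_contra hne
    exact hsep a ha b hb hne hab
  rw [← hc]
  refine (Finset.card_le_card_shatterer 𝒜).trans ?_
  have hsub : 𝒜.shatterer ⊆ (Finset.range (d + 1)).biUnion (fun i => W.powersetCard i) := by
    intro S hS
    rw [Finset.mem_shatterer] at hS
    have hSW : S ⊆ W := by
      obtain ⟨u, hu, hSu⟩ := hS (Finset.Subset.refl S)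
      rw [h𝒜, Finset.mem_image] at hu
      obtain ⟨a, -, rfl⟩ := hu
      rw [Finset.inter_eq_left] at hSu
      exact hSu.trans Finset.inter_subset_left
    have hsh : Shatters (transFam (A : Set G) A) (S : Set G) := by
      intro T hT
      have hTf : T.Finite := S.finite_toSet.subset hT
      obtain ⟨u, hu, hSu⟩ := hS (t := hTf.toFinset) (by
        intro z hz; exact hT (by simpa using hz))
      rw [h𝒜, Finset.mem_image] at hu
      obtain ⟨a, ha, rfl⟩ := hu
      refine ⟨a +ᵥ (A : Set G), ⟨a, hP ha, rfl⟩, ?_⟩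
      ext z
      have := Finset.ext_iff.1 hSu z
      simp only [Finset.mem_inter, Set.Finite.mem_toFinset] at this
      rw [← this, Set.mem_inter_iff, Finset.mem_coe, ← Finset.coe_vadd_finset, Finset.mem_coe]
      constructor
      · rintro ⟨h1, h2⟩; exact ⟨h1, hSW h1, h2⟩
      · rintro ⟨h1, _, h2⟩; exact ⟨h1, h2⟩
    have hcard : (S.card : ℕ∞) ≤ d := by
      rw [← hd]
      unfold _root_.vcDim
      exact le_iSup₂_of_le S hsh le_rfl
    have hcard' : S.card ≤ d := by exact_mod_cast hcard
    rw [Finset.mem_biUnion]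
    exact ⟨S.card, by simpa [Nat.lt_succ_iff] using hcard', by
      rw [Finset.mem_powersetCard]; exact ⟨hSW, rfl⟩⟩
  refine (Finset.card_le_card hsub).trans ?_
  refine Finset.card_biUnion_le.trans ?_
  simp only [Finset.card_powersetCard]
  exact sum_choose_le _ _

/-- Random sampling. -/
theorem sample {α β : Type*} (U : Finset α) (hU : U.Nonempty) (Q : Finset β)
    (D : β → Finset α) (hD : ∀ b ∈ Q, D b ⊆ U) (r : ℝ) (hr : ∀ b ∈ Q, r ≤ (D b).card)
    (m : ℕ) (hm : (Q.card : ℝ) * Real.exp (-(m * (r / U.card))) < 1) :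
    ∃ W : Finset α, W.card ≤ m ∧ ∀ b ∈ Q, ∃ z ∈ W, z ∈ D b := by
  by_contra hno
  push Not at hno
  have hpos : (0 : ℝ) < U.card := by exact_mod_cast hU.card_pos
  have hcov : Fintype.piFinset (fun _ : Fin m => U) ⊆
      Q.biUnion (fun b => Fintype.piFinset (fun _ : Fin m => U \ D b)) := by
    intro f hf
    rw [Fintype.mem_piFinset] at hf
    obtain ⟨b, hb, hbz⟩ := hno (Finset.univ.image f) (Finset.card_image_le.trans (by simp))
    rw [Finset.mem_biUnion]
    refine ⟨b, hb, ?_⟩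
    rw [Fintype.mem_piFinset]
    intro i
    rw [Finset.mem_sdiff]
    exact ⟨hf i, hbz _ (Finset.mem_image_of_mem _ (Finset.mem_univ i))⟩
  have h1 := (Finset.card_le_card hcov).trans Finset.card_biUnion_le
  simp only [Fintype.card_piFinset, Finset.prod_const, Finset.card_univ, Fintype.card_fin] at h1
  have h2 : ((U.card : ℝ)) ^ m ≤ ∑ b ∈ Q, ((U \ D b).card : ℝ) ^ m := by exact_mod_cast h1
  have h3 : ∀ b ∈ Q, ((U \ D b).card : ℝ) ^ m
      ≤ (U.card : ℝ) ^ m * Real.exp (-(m * (r / U.card))) := by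
    intro b hb
    have h4 : ((U \ D b).card : ℝ) = U.card - (D b).card := by
      have := Finset.card_sdiff_add_card_eq_card (hD b hb)
      rw [← this]; push_cast; ring
    have h5 : ((U \ D b).card : ℝ) ≤ U.card * Real.exp (-(r / U.card)) := by
      have h6 := Real.add_one_le_exp (-(r / (U.card : ℝ)))
      have h7 := hr b hb
      calc ((U \ D b).card : ℝ) ≤ U.card - r := by linarith
        _ = U.card * (-(r / U.card) + 1) := by field_simp; ring
        _ ≤ _ := by gcongr
    calc ((U \ D b).card : ℝ) ^ m ≤ (U.card * Real.exp (-(r / U.card))) ^ m := by gcongr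
      _ = _ := by
        rw [mul_pow, ← Real.exp_nat_mul]
        congr 2
        ring
  have h4 := h2.trans (Finset.sum_le_sum h3)
  rw [Finset.sum_const, nsmul_eq_mul] at h4
  have h5 : (0 : ℝ) < (U.card : ℝ) ^ m := by positivity
  nlinarith

theorem solve_log (d p : ℕ) (hd : 1 ≤ d) (hp : 1 ≤ p) (x : ℝ) (hx : 1 ≤ x)
    (h : (p : ℝ) ≤ (2 * x * Real.log p + 2) ^ d) : (p : ℝ) ≤ (4 * d ^ 2 * x) ^ (d + 1) := by
  have hp' : (1 : ℝ) ≤ p := by exact_mod_cast hp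
  have hd' : (1 : ℝ) ≤ d := by exact_mod_cast hd
  set z : ℝ := (p : ℝ) ^ (1 / (2 * d ^ 2 : ℝ)) with hz
  have hz1 : 1 ≤ z := Real.one_le_rpow hp' (by positivity)
  have hz0 : 0 < z := by linarith
  have hzp : z ^ (2 * d ^ 2) = p := by
    rw [hz, ← Real.rpow_natCast, ← Real.rpow_mul (by linarith)]
    push_cast
    rw [one_div, inv_mul_cancel₀ (by positivity), Real.rpow_one]
  have hlog : Real.log p ≤ 2 * d ^ 2 * (z - 1) := by
    rw [← hzp, Real.log_pow]
    push_cast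
    gcongr
    exact Real.log_le_sub_one_of_pos hz0
  have hlog0 : 0 ≤ Real.log p := Real.log_nonneg hp'
  have hd2 : (1 : ℝ) ≤ d ^ 2 := by nlinarith
  have hdx : 1 ≤ d ^ 2 * x := by nlinarith
  have h1 : 2 * x * Real.log p + 2 ≤ 4 * d ^ 2 * x * z := by nlinarith
  have h2 : z ^ (2 * d ^ 2) ≤ (4 * d ^ 2 * x * z) ^ d := by
    rw [hzp]
    refine h.trans ?_
    gcongr
  obtain ⟨e, rfl⟩ : ∃ e, d = e + 1 := ⟨d - 1, by omega⟩
  have h3 : z ^ (2 * e + 1) ≤ 4 * ((e + 1 : ℕ) : ℝ) ^ 2 * x := by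
    have h4 : (z ^ (2 * e + 1) * z) ^ (e + 1) ≤ (4 * ((e + 1 : ℕ) : ℝ) ^ 2 * x * z) ^ (e + 1) := by
      convert h2 using 1
      rw [← pow_succ, ← pow_mul]
      congr 1; ring
    have h5 := le_of_pow_le_pow_left₀ (by omega) (by positivity) h4
    exact le_of_mul_le_mul_right h5 hz0
  rw [← hzp]
  calc z ^ (2 * (e + 1) ^ 2) ≤ z ^ ((2 * e + 1) * (e + 1 + 1)) := by
        apply pow_le_pow_right₀ hz1
        nlinarith
    _ = (z ^ (2 * e + 1)) ^ (e + 1 + 1) := by rw [pow_mul]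
    _ ≤ _ := by gcongr

/-- separated sets -/
def Sep {G : Type*} [AddCommGroup G] (A : Finset G) (r : ℝ) (P : Finset G) : Prop :=
  ∀ a ∈ P, ∀ b ∈ P, a ≠ b → r < sd A (a - b)

/-- maximal separated set -/
theorem exists_packing {G : Type*} [AddCommGroup G] (A : Finset G) (r : ℝ) (hr : 0 ≤ r) :
    ∃ P ⊆ A, (∀ a ∈ P, ∀ b ∈ P, a ≠ b → r < sd A (a - b)) ∧
      ∀ a ∈ A, ∃ b ∈ P, sd A (a - b) ≤ r := by
  have hne : (A.powerset.filter (Sep A r)).Nonempty :=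
    ⟨∅, by simp [Sep]⟩
  obtain ⟨P, hP, hmax⟩ := Finset.exists_max_image _ Finset.card hne
  rw [Finset.mem_filter, Finset.mem_powerset] at hP
  refine ⟨P, hP.1, hP.2, ?_⟩
  intro a ha
  by_contra hno
  push Not at hno
  have haP : a ∉ P := by
    intro h
    have := hno a h
    rw [sub_self, sd_zero] at this
    linarith
  have := hmax (insert a P) (by
    rw [Finset.mem_filter, Finset.mem_powerset]
    refine ⟨Finset.insert_subset ha hP.1, ?_⟩
    intro b hb c hc hbc
    rw [Finset.mem_insert] at hb hc
    rcases hb with rfl | hb <;> rcases hc with rfl | hc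
    · exact absurd rfl hbc
    · exact hno c hc
    · rw [← sd_neg, neg_sub]; exact hno b hb
    · exact hP.2 b hb c hc hbc)
  rw [Finset.card_insert_of_notMem haP] at this
  omega

theorem packing_card {G : Type*} [AddCommGroup G] (A : Finset G) (hA : A.Nonempty) (d : ℕ)
    (hd : vcDim (transFam (A : Set G) A) = (d : ℕ∞)) (r : ℝ) (P : Finset G)
    (hP : P ⊆ A) (hsep : ∀ a ∈ P, ∀ b ∈ P, a ≠ b → r < sd A (a - b)) (m : ℕ)
    (hm : (P.card : ℝ) ^ 2 * Real.exp (-(m * (r / (A + A).card))) < 1) :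
    P.card ≤ (m + 1) ^ d := by
  obtain ⟨W, hWm, hW⟩ := sample (A + A) (hA.add hA) P.offDiag
    (fun b => (b.1 +ᵥ A) ∆ (b.2 +ᵥ A)) (by
      rintro ⟨a, b⟩ hab z hz
      rw [Finset.mem_offDiag] at hab
      simp only [Finset.mem_symmDiff, Finset.mem_vadd_finset, vadd_eq_add] at hz
      rw [Finset.mem_add]
      rcases hz with ⟨⟨y, hy, rfl⟩, -⟩ | ⟨⟨y, hy, rfl⟩, -⟩
      · exact ⟨a, hP hab.1, y, hy, rfl⟩
      · exact ⟨b, hP hab.2.1, y, hy, rfl⟩) r (by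
      rintro ⟨a, b⟩ hab
      rw [Finset.mem_offDiag] at hab
      rw [sd_trans]
      exact (hsep a hab.1 b hab.2.1 hab.2.2).le) m (by
      refine lt_of_le_of_lt ?_ hm
      gcongr
      rw [Finset.offDiag_card, sq]
      exact_mod_cast Nat.sub_le _ _)
  refine (sauer_bound A d hd P W hP ?_).trans (by gcongr)
  intro a ha b hb hab heq
  obtain ⟨z, hz, hz'⟩ := hW (a, b) (by rw [Finset.mem_offDiag]; exact ⟨ha, hb, hab⟩)
  have := Finset.ext_iff.1 heq z
  simp only [Finset.mem_inter, hz, true_and] at this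
  rw [Finset.mem_symmDiff] at hz'
  simp only at hz'
  tauto

theorem packing_zero {G : Type*} [AddCommGroup G] (A : Finset G) (hA : A.Nonempty)
    (hd : vcDim (transFam (A : Set G) A) = ((0 : ℕ) : ℕ∞)) (r : ℝ) (hr : 0 < r) (P : Finset G)
    (hP : P ⊆ A) (hsep : ∀ a ∈ P, ∀ b ∈ P, a ≠ b → r < sd A (a - b)) :
    P.card ≤ 1 := by
  have hU : (0 : ℝ) < (A + A).card := by exact_mod_cast (hA.add hA).card_pos
  by_contra hlt
  have hp1 : (1 : ℝ) ≤ P.card := by exact_mod_cast (by omega : 1 ≤ P.card)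
  set x : ℝ := r / (A + A).card with hx
  have hx0 : 0 < x := by positivity
  obtain ⟨m, hm⟩ := exists_nat_gt (2 * Real.log P.card / x)
  have hm' : 2 * Real.log P.card < m * x := by rwa [div_lt_iff₀ hx0] at hm
  have := packing_card A hA 0 hd r P hP hsep m (by
    have h1 : (P.card : ℝ) ^ 2 = Real.exp (2 * Real.log P.card) := by
      rw [mul_comm, Real.exp_mul, Real.exp_log (by linarith)]
      norm_cast
    rw [h1, ← Real.exp_add, Real.exp_lt_one_iff]
    linarith)
  simp at this
  omega

theorem packing_pos {G : Type*} [AddCommGroup G] (A : Finset G) (hA : A.Nonempty) (d : ℕ)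
    (hd1 : 1 ≤ d)
    (hd : vcDim (transFam (A : Set G) A) = (d : ℕ∞)) (r : ℝ) (hr : 0 < r)
    (hr' : r ≤ (A + A).card) (P : Finset G)
    (hP : P ⊆ A) (hsep : ∀ a ∈ P, ∀ b ∈ P, a ≠ b → r < sd A (a - b)) :
    (P.card : ℝ) ≤ (4 * d ^ 2 * ((A + A).card / r)) ^ (d + 1) := by
  have hU : (0 : ℝ) < (A + A).card := by exact_mod_cast (hA.add hA).card_pos
  rcases Nat.eq_zero_or_pos P.card with h0 | hpos
  · rw [h0]; simp only [Nat.cast_zero]; positivity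
  have hp1 : (1 : ℝ) ≤ P.card := by exact_mod_cast hpos
  set x : ℝ := (A + A).card / r with hx
  have hx1 : 1 ≤ x := by rw [hx, one_le_div hr]; exact hr'
  have hxr : r / (A + A).card = x⁻¹ := by rw [hx, inv_div]
  have hlog : 0 ≤ Real.log P.card := Real.log_nonneg hp1
  set m := ⌊2 * x * Real.log P.card⌋₊ + 1 with hm
  have hm1 : 2 * x * Real.log P.card < m := by
    rw [hm]; push_cast; exact Nat.lt_floor_add_one _
  have hm2 : (m : ℝ) ≤ 2 * x * Real.log P.card + 1 := by
    rw [hm]; push_cast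
    have := Nat.floor_le (show 0 ≤ 2 * x * Real.log P.card by positivity)
    linarith
  have := packing_card A hA d hd r P hP hsep m (by
    have h1 : (P.card : ℝ) ^ 2 = Real.exp (2 * Real.log P.card) := by
      rw [mul_comm, Real.exp_mul, Real.exp_log (by linarith)]
      norm_cast
    rw [h1, ← Real.exp_add, Real.exp_lt_one_iff, hxr]
    have : 2 * Real.log P.card < m * x⁻¹ := by
      rw [← div_eq_mul_inv, lt_div_iff₀ (by linarith)]
      linarith
    linarith)
  apply solve_log d P.card hd1 hpos x hx1
  have h2 : (P.card : ℝ) ≤ ((m : ℝ) + 1) ^ d := by exact_mod_cast this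
  exact h2.trans (pow_le_pow_left₀ (by positivity) (by linarith) d)

theorem final_count {G : Type*} [AddCommGroup G] (A : Finset G) (hA : A.Nonempty) (ε : ℝ)
    (hε : 0 < ε) (hε1 : ε < 1) (H : AddSubgroup G) (hH : ∀ h ∈ H, sd A h ≤ ε / 4 * A.card)
    (P : Finset G) (hP : P ⊆ A) (hcov : ∀ a ∈ A, ∃ b ∈ P, a - b ∈ H) :
    (H : Set G) ⊆ stAdd (A : Set G) ε ∧
    (∃ F ⊆ (A : Set G), F.Finite ∧ F.ncard ≤ P.card ∧ (A : Set G) ⊆ F + (H : Set G)) ∧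
    (∃ F ⊆ (A : Set G), F.Finite ∧ F.ncard ≤ P.card ∧
      (((A : Set G) ∆ (F + (H : Set G))).ncard : ℝ) ≤ ε * (A : Set G).ncard) ∧
    ((ZAdd (A : Set G) (H : Set G) (Real.sqrt ε)).ncard : ℝ)
      ≤ 2 * Real.sqrt ε * (A : Set G).ncard := by
  have hpos : (0 : ℝ) < A.card := by exact_mod_cast hA.card_pos
  have hfin : (H : Set G).Finite :=
    (ball_le A hA (ε / 4 * A.card) (by nlinarith)).1.subset hH
  set Hf := hfin.toFinset with hHf
  have hmem : ∀ h, h ∈ Hf ↔ h ∈ H := by intro h; simp [hHf]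
  have hHc : (Hf : Set G) = H := by simp [hHf]
  have hn : (0 : ℝ) < Hf.card := by
    exact_mod_cast Finset.card_pos.2 ⟨0, (hmem 0).2 H.zero_mem⟩
  set a : G → ℕ := fun g => (Hf.filter (fun h => g + h ∈ A)).card with ha
  set b : G → ℕ := fun g => (Hf.filter (fun h => g + h ∉ A)).card with hb
  have hab : ∀ g, a g + b g = Hf.card := fun g =>
    Finset.card_filter_add_card_filter_not (s := Hf) (fun h => g + h ∈ A)
  have hainv : ∀ g, ∀ h ∈ H, a (g + h) = a g := by
    intro g h hh
    apply Finset.card_bij' (fun x _ => h + x) (fun x _ => -h + x)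
    · intro x hx
      simp only [Finset.mem_filter, hmem] at hx ⊢
      exact ⟨H.add_mem hh hx.1, by rw [← add_assoc]; exact hx.2⟩
    · intro x hx
      simp only [Finset.mem_filter, hmem] at hx ⊢
      exact ⟨H.add_mem (H.neg_mem hh) hx.1, by simpa [add_assoc] using hx.2⟩
    · intro x hx; simp
    · intro x hx; simp
  -- Markov bounds
  have markA : ∀ (X : Finset G) (c : ℝ), X ⊆ A → (∀ g ∈ X, c * Hf.card ≤ b g) →
      X.card * c ≤ ε / 4 * A.card := by
    intro X c hX hc
    have h1 : ∑ g ∈ X, b g = ∑ h ∈ Hf, (X.filter (fun g => g + h ∉ A)).card := by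
      simp only [hb, Finset.card_filter]
      exact Finset.sum_comm
    have h2 : ∀ h ∈ Hf, ((X.filter (fun g => g + h ∉ A)).card : ℝ) ≤ ε / 4 * A.card := by
      intro h hh
      refine le_trans ?_ (hH h ((hmem h).1 hh))
      refine le_trans ?_ (card_sdiff_le A h)
      have : (X.filter (fun g => g + h ∉ A)).card ≤ ((h +ᵥ A) \ A).card := by
        apply Finset.card_le_card_of_injOn (fun g => g + h)
        · intro g hg
          simp only [Finset.coe_filter, Set.mem_ofPred_eq] at hg
          simp only [Finset.mem_coe, Finset.mem_sdiff, Finset.mem_vadd_finset, vadd_eq_add]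
          exact ⟨⟨g, hX hg.1, add_comm _ _⟩, hg.2⟩
        · intro x _ y _ hxy
          simpa using hxy
      exact_mod_cast this
    have h3 : (X.card : ℝ) * (c * Hf.card) ≤ Hf.card * (ε / 4 * A.card) := by
      calc (X.card : ℝ) * (c * Hf.card) = ∑ g ∈ X, c * (Hf.card : ℝ) := by simp
        _ ≤ ∑ g ∈ X, (b g : ℝ) := Finset.sum_le_sum hc
        _ = ∑ h ∈ Hf, ((X.filter (fun g => g + h ∉ A)).card : ℝ) := by exact_mod_cast h1
        _ ≤ ∑ h ∈ Hf, ε / 4 * (A.card : ℝ) := Finset.sum_le_sum h2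
        _ = _ := by simp
    have h4 : (X.card * c) * (Hf.card : ℝ) ≤ (ε / 4 * A.card) * Hf.card := by linarith
    exact le_of_mul_le_mul_right h4 hn
  have markB : ∀ (X : Finset G) (c : ℝ), Disjoint X A → (∀ g ∈ X, c * Hf.card ≤ a g) →
      X.card * c ≤ ε / 4 * A.card := by
    intro X c hX hc
    have h1 : ∑ g ∈ X, a g = ∑ h ∈ Hf, (X.filter (fun g => g + h ∈ A)).card := by
      simp only [ha, Finset.card_filter]
      exact Finset.sum_comm
    have h2 : ∀ h ∈ Hf, ((X.filter (fun g => g + h ∈ A)).card : ℝ) ≤ ε / 4 * A.card := by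
      intro h hh
      refine le_trans ?_ (hH (-h) (H.neg_mem ((hmem h).1 hh)))
      refine le_trans ?_ (card_sdiff_le A (-h))
      have : (X.filter (fun g => g + h ∈ A)) ⊆ ((-h +ᵥ A) \ A) := by
        intro g hg
        rw [Finset.mem_filter] at hg
        simp only [Finset.mem_sdiff, Finset.mem_vadd_finset, vadd_eq_add]
        exact ⟨⟨g + h, hg.2, by abel⟩, Finset.disjoint_left.1 hX hg.1⟩
      exact_mod_cast Finset.card_le_card this
    have h3 : (X.card : ℝ) * (c * Hf.card) ≤ Hf.card * (ε / 4 * A.card) := by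
      calc (X.card : ℝ) * (c * Hf.card) = ∑ g ∈ X, c * (Hf.card : ℝ) := by simp
        _ ≤ ∑ g ∈ X, (a g : ℝ) := Finset.sum_le_sum hc
        _ = ∑ h ∈ Hf, ((X.filter (fun g => g + h ∈ A)).card : ℝ) := by exact_mod_cast h1
        _ ≤ ∑ h ∈ Hf, ε / 4 * (A.card : ℝ) := Finset.sum_le_sum h2
        _ = _ := by simp
    have h4 : (X.card * c) * (Hf.card : ℝ) ≤ (ε / 4 * A.card) * Hf.card := by linarith
    exact le_of_mul_le_mul_right h4 hn
  refine ⟨?_, ?_, ?_, ?_⟩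
  · intro h hh
    have h1 := hH h hh
    unfold sd at h1
    show ((((h +ᵥ (A : Set G)) ∆ (A : Set G)).ncard : ℝ)) ≤ ε * (A : Set G).ncard
    rw [← Finset.coe_vadd_finset, ← Finset.coe_symmDiff, Set.ncard_coe_finset,
      Set.ncard_coe_finset]
    nlinarith
  · refine ⟨P, by exact_mod_cast hP, P.finite_toSet, by rw [Set.ncard_coe_finset], ?_⟩
    intro x hx
    obtain ⟨p, hp, hxp⟩ := hcov x hx
    exact ⟨p, hp, x - p, hxp, by simp⟩
  · set F := P.filter (fun p => Hf.card ≤ 2 * a p) with hF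
    refine ⟨F, by exact_mod_cast (Finset.filter_subset _ _).trans hP, F.finite_toSet, ?_, ?_⟩
    · rw [Set.ncard_coe_finset]; exact Finset.card_filter_le _ _
    rw [← hHc, ← Finset.coe_add, ← Finset.coe_symmDiff, Set.ncard_coe_finset,
      Set.ncard_coe_finset]
    have h1 : ((A \ (F + Hf)).card : ℝ) * (1 / 2) ≤ ε / 4 * A.card := by
      apply markA _ _ Finset.sdiff_subset
      intro g hg
      rw [Finset.mem_sdiff] at hg
      obtain ⟨p, hp, hgp⟩ := hcov g hg.1
      have hpF : p ∉ F := by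
        intro hpF
        exact hg.2 (Finset.mem_add.2 ⟨p, hpF, g - p, (hmem _).2 hgp, by simp⟩)
      have h2 : 2 * a p < Hf.card := by
        by_contra hge
        exact hpF (Finset.mem_filter.2 ⟨hp, by omega⟩)
      have h3 : a g = a p := by
        have := hainv p (g - p) hgp
        rwa [add_sub_cancel] at this
      have h4 := hab g
      have h5 : Hf.card ≤ 2 * b g := by omega
      have h6 : (Hf.card : ℝ) ≤ 2 * b g := by exact_mod_cast h5
      linarith
    have h2 : (((F + Hf) \ A).card : ℝ) * (1 / 2) ≤ ε / 4 * A.card := by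
      apply markB _ _ Finset.sdiff_disjoint
      intro g hg
      rw [Finset.mem_sdiff, Finset.mem_add] at hg
      obtain ⟨⟨p, hp, h, hh, rfl⟩, -⟩ := hg
      rw [hainv p h ((hmem h).1 hh)]
      have h6 : (Hf.card : ℝ) ≤ 2 * a p := by exact_mod_cast (Finset.mem_filter.1 hp).2
      linarith
    have h3 : ((A ∆ (F + Hf)).card : ℝ) ≤ (A \ (F + Hf)).card + ((F + Hf) \ A).card := by
      have : (A ∆ (F + Hf)).card ≤ (A \ (F + Hf)).card + ((F + Hf) \ A).card :=
        Finset.card_union_le _ _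
      exact_mod_cast this
    linarith
  · have hs : 0 < Real.sqrt ε := Real.sqrt_pos.2 hε
    have hss : Real.sqrt ε * Real.sqrt ε = ε := Real.mul_self_sqrt hε.le
    have hvadd : ∀ g : G, g +ᵥ (H : Set G) = (((g +ᵥ Hf : Finset G)) : Set G) := by
      intro g; rw [Finset.coe_vadd_finset, hHc]
    have hA1 : ∀ g : G, ((g +ᵥ (H : Set G)) ∩ (A : Set G)).ncard = a g := by
      intro g
      rw [hvadd, ← Finset.coe_inter, Set.ncard_coe_finset]
      symm
      apply Finset.card_bij (fun h _ => g + h)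
      · intro h hh
        rw [Finset.mem_filter] at hh
        exact Finset.mem_inter.2 ⟨Finset.mem_vadd_finset.2 ⟨h, hh.1, rfl⟩, hh.2⟩
      · intro x _ y _ h; simpa using h
      · intro z hz
        rw [Finset.mem_inter, Finset.mem_vadd_finset] at hz
        obtain ⟨⟨h, hh, rfl⟩, hz⟩ := hz
        exact ⟨h, Finset.mem_filter.2 ⟨hh, hz⟩, rfl⟩
    have hB1 : ∀ g : G, ((g +ᵥ (H : Set G)) \ (A : Set G)).ncard = b g := by
      intro g
      rw [hvadd, ← Finset.coe_sdiff, Set.ncard_coe_finset]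
      symm
      apply Finset.card_bij (fun h _ => g + h)
      · intro h hh
        rw [Finset.mem_filter] at hh
        exact Finset.mem_sdiff.2 ⟨Finset.mem_vadd_finset.2 ⟨h, hh.1, rfl⟩, hh.2⟩
      · intro x _ y _ h; simpa using h
      · intro z hz
        rw [Finset.mem_sdiff, Finset.mem_vadd_finset] at hz
        obtain ⟨⟨h, hh, rfl⟩, hz⟩ := hz
        exact ⟨h, Finset.mem_filter.2 ⟨hh, hz⟩, rfl⟩
    have hHn : (H : Set G).ncard = Hf.card := by rw [← hHc, Set.ncard_coe_finset]
    have hZ : ∀ g ∈ ZAdd (A : Set G) (H : Set G) (Real.sqrt ε),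
        Real.sqrt ε * Hf.card ≤ a g ∧ Real.sqrt ε * Hf.card ≤ b g := by
      intro g hg
      have hg' : Real.sqrt ε * (H : Set G).ncard ≤ min
        (((g +ᵥ (H : Set G)) ∩ (A : Set G)).ncard : ℝ)
        (((g +ᵥ (H : Set G)) \ (A : Set G)).ncard : ℝ) := hg
      rw [hA1, hB1, hHn, le_min_iff] at hg'
      exact hg'
    have hZf : (ZAdd (A : Set G) (H : Set G) (Real.sqrt ε)).Finite := by
      apply (A - Hf).finite_toSet.subset
      intro g hg
      have h1 := (hZ g hg).1
      have h2 : (0 : ℝ) < a g := lt_of_lt_of_le (by positivity) h1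
      have h3 : 0 < a g := by exact_mod_cast h2
      obtain ⟨h, hh⟩ := Finset.card_pos.1 h3
      rw [Finset.mem_filter] at hh
      rw [Finset.mem_coe, Finset.mem_sub]
      exact ⟨g + h, hh.2, h, hh.1, by simp⟩
    set Z := hZf.toFinset with hZdef
    have hZm : ∀ g ∈ Z, g ∈ ZAdd (A : Set G) (H : Set G) (Real.sqrt ε) := by
      intro g hg; simpa [hZdef] using hg
    have hZc : (ZAdd (A : Set G) (H : Set G) (Real.sqrt ε)).ncard = Z.card :=
      Set.ncard_eq_toFinset_card _ hZf
    rw [hZc, Set.ncard_coe_finset]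
    have h1 := markA (Z ∩ A) (Real.sqrt ε) Finset.inter_subset_right
      (fun g hg => (hZ g (hZm g (Finset.mem_inter.1 hg).1)).2)
    have h2 := markB (Z \ A) (Real.sqrt ε) Finset.sdiff_disjoint
      (fun g hg => (hZ g (hZm g (Finset.mem_sdiff.1 hg).1)).1)
    have h3 : (Z.card : ℝ) = (Z ∩ A).card + (Z \ A).card := by
      exact_mod_cast (Finset.card_inter_add_card_sdiff Z A).symm
    have h4 : (Z.card : ℝ) * Real.sqrt ε ≤ (2 * Real.sqrt ε * A.card) * Real.sqrt ε := by
      rw [h3]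
      have : (2 * Real.sqrt ε * A.card) * Real.sqrt ε = 2 * ε * A.card := by
        rw [mul_right_comm, mul_assoc 2, hss]
      rw [this]
      nlinarith
    exact le_of_mul_le_mul_right h4 hs

set_option maxHeartbeats 2000000 in
/-- pigeonhole over scales -/
theorem main_pos {G : Type*} [AddCommGroup G] (q : ℕ) (hq : 1 ≤ q)
    (hG : ∀ x : G, q • x = 0) (A : Finset G) (hA : A.Nonempty) (d : ℕ) (hd1 : 1 ≤ d)
    (hd : vcDim (transFam (A : Set G) A) = (d : ℕ∞)) (ε : ℝ) (hε : 0 < ε) (hε1 : ε < 1) :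
    ∃ (H : AddSubgroup G) (P : Finset G), P ⊆ A ∧ (∀ h ∈ H, sd A h ≤ ε / 4 * A.card) ∧
      (∀ a ∈ A, ∃ b ∈ P, a - b ∈ H) ∧
      (P.card : ℝ) ≤ (16 * d ^ 2 * (((A + A).card / A.card : ℝ) / ε)) ^ (d + 2) *
        2 ^ (1 + 6 * q * (d + 1) ^ 3) := by
  have hpos : (0 : ℝ) < A.card := by exact_mod_cast hA.card_pos
  have hAA : (A.card : ℝ) ≤ (A + A).card := by
    exact_mod_cast Finset.card_le_card_add_right hA
  have hd' : (1 : ℝ) ≤ d := by exact_mod_cast hd1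
  set D := d + 1 with hD
  set u := 6 * q * D ^ 2 with hu
  set t := 2 * u * D ^ 2 with ht
  set M : ℝ := 2 ^ u with hM
  have hM0 : 0 < M := by positivity
  have hM1 : 1 ≤ M := one_le_pow₀ (by norm_num)
  have hu24 : 24 ≤ u := by
    rw [hu]
    have : 4 ≤ D ^ 2 := by rw [hD]; nlinarith
    nlinarith
  have hMt : 3 * (q : ℝ) * t + 2 ≤ M := by
    have h1 : 3 * q * t + 2 = u ^ 2 + 2 := by rw [ht, hu]; ring
    have h2 : ∀ v : ℕ, 24 ≤ v → v ^ 2 + 2 ≤ 2 ^ v := by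
      intro v hv
      induction v, hv using Nat.le_induction with
      | base => norm_num
      | succ v hv ih => rw [pow_succ 2 v]; nlinarith
    have h3 := h2 u hu24
    rw [← h1] at h3
    rw [hM]
    exact_mod_cast h3
  set y : ℝ := 16 * d ^ 2 * (((A + A).card / A.card : ℝ) / ε) with hy
  have hk : 1 ≤ ((A + A).card / A.card : ℝ) / ε := by
    rw [one_le_div hε]
    have : 1 ≤ ((A + A).card / A.card : ℝ) := by rw [one_le_div hpos]; exact hAA
    linarith
  have hy1 : 1 ≤ y := by
    have : (1 : ℝ) ≤ d ^ 2 := by nlinarith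
    rw [hy]; nlinarith
  -- scales
  set r : ℕ → ℝ := fun i => ε / 4 * A.card / M ^ i with hr
  have hr0 : ∀ i, 0 < r i := fun i => by positivity
  have hrle : ∀ i, r i ≤ ε / 4 * A.card := fun i =>
    div_le_self (by positivity) (one_le_pow₀ hM1)
  have hrsucc : ∀ i, M * r (i + 1) = r i := by
    intro i
    simp only [hr, pow_succ]
    field_simp
  have hhalf : ∀ i, r i ≤ A.card / 2 := fun i => (hrle i).trans (by nlinarith)
  have hpack : ∀ i, ∃ P ⊆ A, (∀ a ∈ A, ∃ b ∈ P, sd A (a - b) ≤ r i) ∧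
      (P.card : ℝ) ≤ (y * M ^ i) ^ D := by
    intro i
    obtain ⟨P, hP, hsep, hc⟩ := exists_packing A (r i) (hr0 i).le
    refine ⟨P, hP, hc, ?_⟩
    refine (packing_pos A hA d hd1 hd (r i) (hr0 i) (by linarith [hhalf i]) P hP hsep).trans ?_
    apply le_of_eq
    congr 1
    simp only [hr, hy]
    field_simp
    ring
  obtain ⟨n', hn1, hn2⟩ := exists_nat_pow_near (x := 2 * y) (y := (2 : ℝ) ^ (u * D))
    (by linarith) (one_lt_pow₀ (by norm_num) (by
      have : 0 < u * D := Nat.mul_pos (by omega) (by omega)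
      omega))
  set n := n' + 1 with hn
  -- good scale
  have hgood : ∃ i < n, {x | sd A x ≤ r i}.ncard < 2 ^ t * {x | sd A x ≤ r (i + 1)}.ncard := by
    by_contra hno
    push Not at hno
    have hiter : ∀ i ≤ n, (2 ^ t) ^ i * {x | sd A x ≤ r i}.ncard
        ≤ {x | sd A x ≤ r 0}.ncard := by
      intro i
      induction i with
      | zero => intro _; simp
      | succ i ih =>
        intro hi
        refine le_trans ?_ (ih (by omega))
        rw [pow_succ, mul_assoc]
        exact Nat.mul_le_mul_left _ (hno i (by omega))
    have h1 := hiter n le_rfl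
    have h1' : ((2 : ℝ) ^ t) ^ n * {x | sd A x ≤ r n}.ncard ≤ {x | sd A x ≤ r 0}.ncard := by
      exact_mod_cast h1
    have h2 := (ball_le A hA (r 0) (hhalf 0)).2
    obtain ⟨P, hP, hc, hPc⟩ := hpack n
    have hballfin := (ball_le A hA (r n) (hhalf n)).1
    have h3 : A.card ≤ P.card * {x | sd A x ≤ r n}.ncard := by
      rw [Set.ncard_eq_toFinset_card _ hballfin]
      refine le_trans (Finset.card_le_card ?_) (Finset.card_add_le (s := P))
      intro a ha
      obtain ⟨p, hp, hap⟩ := hc a ha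
      exact Finset.mem_add.2 ⟨p, hp, a - p, by simpa using hap, by simp⟩
    have h3' : (A.card : ℝ) ≤ P.card * {x | sd A x ≤ r n}.ncard := by exact_mod_cast h3
    set β : ℝ := ({x | sd A x ≤ r n}.ncard : ℝ) with hβ
    have hβ0 : 0 < β := by
      by_contra hle
      have : β = 0 := le_antisymm (not_lt.1 hle) (by positivity)
      rw [this] at h3'
      linarith
    have h4 : ((2 : ℝ) ^ t) ^ n ≤ 2 * (y * M ^ n) ^ D := by
      have : ((2 : ℝ) ^ t) ^ n * β ≤ (2 * (y * M ^ n) ^ D) * β := by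
        calc ((2 : ℝ) ^ t) ^ n * β ≤ 2 * A.card := h1'.trans h2
          _ ≤ 2 * (P.card * β) := by linarith
          _ ≤ 2 * ((y * M ^ n) ^ D * β) := by gcongr
          _ = _ := by ring
      exact le_of_mul_le_mul_right this hβ0
    have h5 : (2 : ℝ) * (y * M ^ n) ^ D < ((2 : ℝ) ^ t) ^ n := by
      have hD1 : D ≠ 0 := by omega
      calc (2 : ℝ) * (y * M ^ n) ^ D ≤ 2 ^ D * (y * M ^ n) ^ D := by
            gcongr
            exact le_self_pow₀ (by norm_num) hD1
        _ = (2 * y * M ^ n) ^ D := by rw [← mul_pow]; ring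
        _ < ((2 ^ (u * D)) ^ n * M ^ n) ^ D := by
            gcongr
        _ = 2 ^ ((u * D * n + u * n) * D) := by
            rw [hM, ← pow_mul, ← pow_mul, ← pow_add, ← pow_mul]
        _ ≤ 2 ^ (t * n) := by
            apply pow_le_pow_right₀ (by norm_num)
            rw [ht]
            have : u * n * D ≤ u * n * (D * D) := by
              apply Nat.mul_le_mul_left; nlinarith
            nlinarith
        _ = _ := by rw [pow_mul]
    linarith
  obtain ⟨i, hi, hlt⟩ := hgood
  obtain ⟨H, hH1, hH2⟩ := exists_subgroup q hq hG (sd A) (sd_zero A) (sd_neg A) (sd_add A)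
    (r (i + 1)) (hr0 _).le t M hMt (by
      rw [hrsucc]; exact (ball_le A hA (r i) (hhalf i)).1) (by rw [hrsucc]; exact hlt)
  obtain ⟨P, hP, hc, hPc⟩ := hpack (i + 1)
  refine ⟨H, P, hP, ?_, ?_, ?_⟩
  · intro h hh
    have := hH2 h hh
    rw [hrsucc] at this
    exact this.trans (hrle i)
  · intro a ha
    obtain ⟨b, hb, hab⟩ := hc a ha
    exact ⟨b, hb, hH1 _ hab⟩
  · refine hPc.trans ?_
    calc (y * M ^ (i + 1)) ^ D ≤ (y * M ^ n) ^ D := by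
          gcongr
          omega
      _ = y ^ D * ((2 ^ (u * D)) ^ n' * 2 ^ (u * D)) := by
          rw [mul_pow, hM, hn]
          congr 1
          rw [← pow_mul, ← pow_mul, ← pow_mul, ← pow_add]
          congr 1; ring
      _ ≤ y ^ D * ((2 * y) * 2 ^ (u * D)) := by gcongr
      _ = y ^ (d + 2) * 2 ^ (1 + 6 * q * D ^ 3) := by
          have : 1 + 6 * q * D ^ 3 = 1 + u * D := by rw [hu]; ring
          rw [this, pow_add 2 1, hD]; ring

theorem numeric (q d : ℕ) (hq : 1 ≤ q) (hd : 1 ≤ d) (κ : ℝ) (hκ : 1 ≤ κ) :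
    (16 * (d : ℝ) ^ 2 * κ) ^ (d + 2) * 2 ^ (1 + 6 * q * (d + 1) ^ 3) ≤
      (2 : ℝ) ^ ((100 * q : ℝ) * (d : ℝ) ^ 8) * κ ^ ((d : ℝ) + 100 * q) := by
  have hd' : (1 : ℝ) ≤ d := by exact_mod_cast hd
  have hq' : (1 : ℝ) ≤ q := by exact_mod_cast hq
  have h1 : (16 * (d : ℝ) ^ 2) ≤ 2 ^ (4 + 2 * d) := by
    have : d ≤ 2 ^ d := Nat.lt_two_pow_self.le
    have : (d : ℝ) ≤ 2 ^ d := by exact_mod_cast this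
    rw [pow_add, mul_comm 2 d, pow_mul]
    have : (d : ℝ) ^ 2 ≤ (2 ^ d) ^ 2 := by gcongr
    linarith
  have h2 : κ ^ (d + 2) ≤ κ ^ ((d : ℝ) + 100 * q) := by
    rw [← Real.rpow_natCast]
    apply Real.rpow_le_rpow_of_exponent_le hκ
    push_cast
    linarith
  have h3 : (4 + 2 * d) * (d + 2) + (1 + 6 * q * (d + 1) ^ 3) ≤ 100 * q * d ^ 8 := by
    have e1 : d ^ 2 ≤ d ^ 8 := Nat.pow_le_pow_right hd (by norm_num)
    have e2 : d ^ 3 ≤ d ^ 8 := Nat.pow_le_pow_right hd (by norm_num)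
    have e3 : (4 + 2 * d) * (d + 2) ≤ 18 * d ^ 2 := by nlinarith
    have e4 : (d + 1) ^ 3 ≤ 8 * d ^ 3 := by
      calc (d + 1) ^ 3 ≤ (2 * d) ^ 3 := by gcongr; omega
        _ = _ := by ring
    have e5 : 1 ≤ d ^ 8 := Nat.one_le_pow _ _ hd
    have e6 : 6 * q * (d + 1) ^ 3 ≤ 6 * q * (8 * d ^ 8) := by
      gcongr; omega
    have e7 : d ^ 8 ≤ q * d ^ 8 := Nat.le_mul_of_pos_left _ hq
    nlinarith
  calc (16 * (d : ℝ) ^ 2 * κ) ^ (d + 2) * 2 ^ (1 + 6 * q * (d + 1) ^ 3)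
      = ((16 * (d : ℝ) ^ 2) ^ (d + 2) * 2 ^ (1 + 6 * q * (d + 1) ^ 3)) * κ ^ (d + 2) := by
        rw [mul_pow]; ring
    _ ≤ ((2 ^ (4 + 2 * d)) ^ (d + 2) * 2 ^ (1 + 6 * q * (d + 1) ^ 3)) * κ ^ (d + 2) := by
        gcongr
    _ = 2 ^ ((4 + 2 * d) * (d + 2) + (1 + 6 * q * (d + 1) ^ 3)) * κ ^ (d + 2) := by
        rw [← pow_mul, ← pow_add]
    _ ≤ 2 ^ (100 * q * d ^ 8) * κ ^ ((d : ℝ) + 100 * q) := by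
        gcongr
        norm_num
    _ = _ := by
        congr 1
        rw [← Real.rpow_natCast]
        push_cast
        rfl

end NipAux

/-- Theorem 6.6 of the paper: for every `q ≥ 1` there is `C = C(q)` such that
for every abelian group `G` of exponent `q` and nonempty finite `A ⊆ G`, with `d = VC_A(A)`
and `k = |A+A|/|A|`, for every `ε ∈ (0,1)` there are a subgroup `H` and an integer
`N ≤ exp(C·d⁸)(k/ε)^{d+C}` with `H ⊆ St_ε(A)`, `cov(A:H) ≤ N`, `|A △ (F+H)| ≤ ε|A|` for some
`F ⊆ A` with `|F| ≤ N`, and `|Z_{√ε}(A,H)| ≤ 2√ε|A|`. -/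
theorem nip_doubling_bounded_exponent_abelian (q : ℕ) (hq : 1 ≤ q) :
    ∃ C : ℝ, ∀ (G : Type*) [AddCommGroup G], (∀ x : G, q • x = 0) →
      ∀ (A : Set G), A.Finite → A.Nonempty →
      ∀ d : ℕ, vcDim (transFam A A) = (d : ℕ∞) →
      ∀ ε : ℝ, 0 < ε → ε < 1 →
      ∃ (H : AddSubgroup G) (N : ℕ),
        (N : ℝ) ≤ (2 : ℝ) ^ (C * (d : ℝ) ^ 8) *
          ((((A + A).ncard : ℝ) / A.ncard) / ε) ^ ((d : ℝ) + C) ∧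
        (H : Set G) ⊆ stAdd A ε ∧
        (∃ F ⊆ A, F.Finite ∧ F.ncard ≤ N ∧ A ⊆ F + (H : Set G)) ∧
        (∃ F ⊆ A, F.Finite ∧ F.ncard ≤ N ∧
          ((A ∆ (F + (H : Set G))).ncard : ℝ) ≤ ε * A.ncard) ∧
        ((ZAdd A (H : Set G) (Real.sqrt ε)).ncard : ℝ) ≤ 2 * Real.sqrt ε * A.ncard := by

  classical
  refine ⟨100 * q, ?_⟩
  intro G _ hG A hAf hAne d hd ε hε hε1
  obtain ⟨A, rfl⟩ := hAf.exists_finset_coe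
  have hA : A.Nonempty := by exact_mod_cast hAne
  have hpos : (0 : ℝ) < A.card := by exact_mod_cast hA.card_pos
  have hAA : (A.card : ℝ) ≤ (A + A).card := by
    exact_mod_cast Finset.card_le_card_add_right hA
  have hc1 : ((A : Set G) + (A : Set G)).ncard = (A + A).card := by
    rw [← Finset.coe_add, Set.ncard_coe_finset]
  have hk : 1 ≤ ((A + A).card / A.card : ℝ) / ε := by
    rw [one_le_div hε]
    have : 1 ≤ ((A + A).card / A.card : ℝ) := by rw [one_le_div hpos]; exact hAA
    linarith
  rcases Nat.eq_zero_or_pos d with rfl | hd1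
  · obtain ⟨P, hP, hsep, hc⟩ := NipAux.exists_packing A (1 / 2) (by norm_num)
    have hP1 := NipAux.packing_zero A hA hd (1 / 2) (by norm_num) P hP
      (by convert hsep)
    let H : AddSubgroup G :=
      { carrier := {x | NipAux.sd A x ≤ 0}
        zero_mem' := (NipAux.sd_zero A).le
        add_mem' := fun {x y} hx hy => by
          have h1 := NipAux.sd_add A x y
          have hx' : NipAux.sd A x ≤ 0 := hx
          have hy' : NipAux.sd A y ≤ 0 := hy
          show NipAux.sd A (x + y) ≤ 0
          linarith
        neg_mem' := fun {x} hx => by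
          show NipAux.sd A (-x) ≤ 0
          rw [NipAux.sd_neg]; exact hx }
    refine ⟨H, P.card, ?_, NipAux.final_count A hA ε hε hε1 H ?_ P hP ?_⟩
    · rw [hc1, Set.ncard_coe_finset]
      have h1 : (P.card : ℝ) ≤ 1 := by exact_mod_cast hP1
      refine h1.trans ?_
      have h2 := Real.one_le_rpow hk (show (0 : ℝ) ≤ ((0 : ℕ) : ℝ) + 100 * q by positivity)
      simpa using h2
    · intro h hh
      have hh' : NipAux.sd A h ≤ 0 := hh
      exact hh'.trans (by positivity)
    · intro a ha
      obtain ⟨b, hb, hab⟩ := hc a ha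
      refine ⟨b, hb, ?_⟩
      show NipAux.sd A (a - b) ≤ 0
      unfold NipAux.sd at hab ⊢
      by_contra hne
      push Not at hne
      have h1 := Nat.cast_pos.1 hne
      have h2 : (1 : ℝ) ≤ _ := Nat.one_le_cast.2 h1
      linarith
  · obtain ⟨H, P, hP, hH, hcov, hPc⟩ := NipAux.main_pos q hq hG A hA d hd1 hd ε hε hε1
    refine ⟨H, P.card, ?_, NipAux.final_count A hA ε hε hε1 H hH P hP hcov⟩
    rw [hc1, Set.ncard_coe_finset]
    refine le_trans ?_ (NipAux.numeric q d hq hd1 _ hk)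
    convert hPc
end
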